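/- Let d ≥ 2, n = d + 2, and let S_{j₁},…,S_{j_k} be pairwise non-adjacent Stokes sectors with k ≤ n/2. Let Σ = {(α, λ) ∈ ℂ^{d−1} × ℂ : there exists a nonzero solution of the Schrödinger equation with parameters (α, λ) subdominant in each of S_{j₁},…,S_{j_k}}. Then Σ is a smooth complex analytic submanifold of ℂ^{d−1} × ℂ ≅ ℂ^d of codimension k − 1: for every point p ∈ Σ there exist an open neighborhood U of p in ℂ^d and a holomorphic map F : U → ℂ^{k−1} whose (complex) derivative at every point of U is surjective, such that Σ ∩ U = F⁻¹(0). -/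

import Mathlib

open Complex Filter Topology

/-- The polynomial potential `P_α(z) = z^d + α_{d-1} z^{d-1} + ⋯ + α₁ z`. -/
noncomputable def Pol (d : ℕ) (α : Fin (d - 1) → ℂ) (z : ℂ) : ℂ :=
  z ^ d + ∑ i : Fin (d - 1), α i * z ^ ((i : ℕ) + 1)

/-- `y` is an (entire) solution of the Schrödinger equation `y'' = (P_α - λ) y`. -/
def IsSol (d : ℕ) (α : Fin (d - 1) → ℂ) (lam : ℂ) (y : ℂ → ℂ) : Prop :=
  Differentiable ℂ y ∧ ∀ z : ℂ, deriv (deriv y) z = (Pol d α z - lam) * y z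

/-- `θ` is a ray direction of the Stokes sector `S_j`. -/
def DirIn (n j : ℕ) (θ : ℝ) : Prop :=
  |θ - 2 * Real.pi * j / n| < Real.pi / n

/-- `y` is subdominant in the Stokes sector `S_j`: it tends to `0` along every ray in `S_j`. -/
def Subdominant (n j : ℕ) (y : ℂ → ℂ) : Prop :=
  ∀ θ : ℝ, DirIn n j θ →
    Tendsto (fun r : ℝ => y ((r : ℂ) * Complex.exp (θ * Complex.I))) atTop (𝓝 0)

/-- Taylor coefficients of the solution of `y'' = q y` with `y 0 = a` and `y' 0 = b`, where
`q i` are the Taylor coefficients of the potential. -/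
noncomputable def odeCoeff (q : ℕ → ℂ) (a b : ℂ) : ℕ → ℂ
  | 0 => a
  | 1 => b
  | m + 2 => (∑ i : Fin (m + 1), q i * odeCoeff q a b (m - i)) / ((m + 2) * (m + 1))
  decreasing_by omega

lemma summable_norm_shift_mul_pow {c : ℕ → ℂ} (hc : ∀ A : ℝ, 0 < A → Summable fun m => ‖c m‖ * A ^ m) :
    ∀ A : ℝ, 0 < A → Summable fun m : ℕ => ‖((m + 1 : ℕ) : ℂ) * c (m + 1)‖ * A ^ m := by
  intro A hA
  have h := (summable_nat_add_iff 1).2 (hc (2 * A) (by positivity))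
  refine Summable.of_nonneg_of_le (fun m => by positivity) (fun m => ?_) (h.mul_left (1 / A))
  have h2 : ((m + 1 : ℕ) : ℝ) ≤ 2 ^ (m + 1) := by exact_mod_cast (Nat.lt_two_pow_self).le
  rw [norm_mul, Complex.norm_natCast]
  calc ((m + 1 : ℕ) : ℝ) * ‖c (m + 1)‖ * A ^ m ≤ 2 ^ (m + 1) * ‖c (m + 1)‖ * A ^ m := by gcongr
    _ = 1 / A * (‖c (m + 1)‖ * (2 * A) ^ (m + 1)) := by field_simp; ring

lemma hasDerivAt_tsum_mul_pow {c : ℕ → ℂ} (hc : ∀ A : ℝ, 0 < A → Summable fun m => ‖c m‖ * A ^ m)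
    (z : ℂ) : HasDerivAt (fun z => ∑' m, c m * z ^ m)
      (∑' m : ℕ, (((m + 1 : ℕ) : ℂ) * c (m + 1)) * z ^ m) z := by
  set A : ℝ := ‖z‖ + 1
  have hA : 1 ≤ A := by simp [A]
  have key := hasDerivAt_tsum_of_isPreconnected (𝕜 := ℂ) (t := Metric.ball (0 : ℂ) A)
    (u := fun m => ‖c m‖ * (2 * A) ^ m) (g := fun m z => c m * z ^ m)
    (g' := fun m z => c m * (m * z ^ (m - 1))) (y₀ := 0) (y := z)
    (hc _ (by positivity)) Metric.isOpen_ball (convex_ball _ _).isPreconnected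
    (fun m y _ => (hasDerivAt_pow m y).const_mul (c m)) ?_ ?_ ?_ ?_
  · refine key.congr_deriv ?_
    have hs : Summable fun m : ℕ => c m * (m * z ^ (m - 1)) := by
      refine (summable_nat_add_iff 1).1 ?_
      refine Summable.of_norm_bounded (summable_norm_shift_mul_pow hc A (by positivity)) fun m => ?_
      simp only [norm_mul, norm_pow, Nat.add_sub_cancel]
      have : ‖z‖ ^ m ≤ A ^ m := by gcongr; simp [A]
      nlinarith [mul_le_mul_of_nonneg_left this (mul_nonneg (norm_nonneg (c (m + 1))) (norm_nonneg (((m + 1 : ℕ) : ℂ))))]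
    rw [hs.tsum_eq_zero_add]
    simp only [Nat.cast_zero, zero_mul, mul_zero, zero_add, Nat.add_sub_cancel]
    exact tsum_congr fun m => by ring
  · intro m y hy
    have hy : ‖y‖ ≤ A := by simpa using (mem_ball_zero_iff.1 hy).le
    rw [norm_mul, norm_mul, norm_pow, Complex.norm_natCast]
    have h2 : (m : ℝ) ≤ 2 ^ m := by exact_mod_cast (Nat.lt_two_pow_self).le
    have h3 : ‖y‖ ^ (m - 1) ≤ A ^ m :=
      (pow_le_pow_left₀ (norm_nonneg _) hy _).trans (pow_le_pow_right₀ hA (Nat.sub_le _ _))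
    rw [mul_pow]
    gcongr
  · simp; positivity
  · refine summable_of_ne_finset_zero (s := {0}) fun m hm => ?_
    simp at hm
    simp [hm]
  · simp [A]

lemma summable_odeCoeff {q : ℕ → ℂ} (hq : ∀ A : ℝ, 0 < A → Summable fun m => ‖q m‖ * A ^ m)
    (a b : ℂ) (A : ℝ) (hA : 0 < A) : Summable fun m => ‖odeCoeff q a b m‖ * A ^ m := by
  have bdd : ∀ A : ℝ, 0 < A → ∃ C, ∀ m, ‖odeCoeff q a b m‖ * A ^ m ≤ C := by
    intro A hA
    set S := ∑' i, ‖q i‖ * A ^ i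
    obtain ⟨M, hM⟩ := exists_nat_ge (S * A ^ 2)
    set c := odeCoeff q a b with hcdef
    have hnn : ∀ l, 0 ≤ ‖c l‖ * A ^ l := fun l => by positivity
    refine ⟨∑ l ∈ Finset.range (M + 2), ‖c l‖ * A ^ l, fun m => ?_⟩
    set C := ∑ l ∈ Finset.range (M + 2), ‖c l‖ * A ^ l
    have hC : 0 ≤ C := Finset.sum_nonneg fun l _ => hnn l
    induction m using Nat.strong_induction_on with
    | _ m ih =>
      by_cases hm : m < M + 2
      · exact Finset.single_le_sum (f := fun l => ‖c l‖ * A ^ l) (fun l _ => hnn l)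
          (Finset.mem_range.2 hm)
      · obtain ⟨k, rfl⟩ : ∃ k, m = k + 2 := ⟨m - 2, by omega⟩
        have hk : (M : ℝ) ≤ k := by exact_mod_cast (by omega : M ≤ k)
        have hS : ∑ i ∈ Finset.range (k + 1), ‖q i‖ * A ^ i ≤ S :=
          (hq A hA).sum_le_tsum _ fun i _ => by positivity
        have h1 : ‖∑ i : Fin (k + 1), q i * c (k - i)‖ * A ^ (k + 2) ≤ S * A ^ 2 * C := by
          rw [Fin.sum_univ_eq_sum_range (fun i => q i * c (k - i))]
          calc ‖∑ i ∈ Finset.range (k + 1), q i * c (k - i)‖ * A ^ (k + 2)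
              ≤ (∑ i ∈ Finset.range (k + 1), ‖q i * c (k - i)‖) * A ^ (k + 2) := by
                gcongr; exact norm_sum_le _ _
            _ = ∑ i ∈ Finset.range (k + 1), (‖q i‖ * A ^ i) * A ^ 2 * (‖c (k - i)‖ * A ^ (k - i)) := by
                rw [Finset.sum_mul]
                refine Finset.sum_congr rfl fun i hi => ?_
                have : k + 2 = i + 2 + (k - i) := by have := Finset.mem_range.1 hi; omega
                rw [norm_mul, this, pow_add, pow_add]
                have : i + 2 + (k - i) - 2 - i = k - i := by omega
                ring
            _ ≤ ∑ i ∈ Finset.range (k + 1), (‖q i‖ * A ^ i) * A ^ 2 * C := by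
                gcongr with i hi
                exact ih _ (by omega)
            _ = (∑ i ∈ Finset.range (k + 1), (‖q i‖ * A ^ i)) * A ^ 2 * C := by
                rw [Finset.sum_mul, Finset.sum_mul]
            _ ≤ S * A ^ 2 * C := by gcongr
        have h2 : c (k + 2) = (∑ i : Fin (k + 1), q i * c (k - i)) / ((k + 2) * (k + 1)) := by
          rw [hcdef, odeCoeff]
        have h3 : ‖((k : ℂ) + 2) * (k + 1)‖ = ((k : ℝ) + 2) * (k + 1) := by
          have : ((k : ℂ) + 2) * (k + 1) = (((k : ℝ) + 2) * (k + 1) : ℝ) := by push_cast; ring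
          rw [this, Complex.norm_real, Real.norm_of_nonneg (by positivity)]
        rw [h2, norm_div, h3, div_mul_eq_mul_div, div_le_iff₀ (by positivity)]
        refine h1.trans ?_
        rw [mul_comm C]
        refine mul_le_mul_of_nonneg_right ?_ hC
        nlinarith
  obtain ⟨C, hC⟩ := bdd (2 * A) (by positivity)
  refine Summable.of_nonneg_of_le (fun m => by positivity) (fun m => ?_)
    ((summable_geometric_two).mul_left C)
  have := hC m
  rw [mul_pow] at this
  calc ‖odeCoeff q a b m‖ * A ^ m
      = ‖odeCoeff q a b m‖ * (2 ^ m * A ^ m) * (1 / 2) ^ m := by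
        rw [one_div, inv_pow]; field_simp
    _ ≤ C * (1 / 2) ^ m := by gcongr

theorem exists_entire_solution (P : Polynomial ℂ) (a b : ℂ) :
    ∃ y : ℂ → ℂ, Differentiable ℂ y ∧ (∀ z, deriv (deriv y) z = P.eval z * y z) ∧
      y 0 = a ∧ deriv y 0 = b := by
  set q : ℕ → ℂ := P.coeff
  have hfin : ∀ m ∉ P.support, q m = 0 := fun m hm => by simpa [q] using hm
  have hq : ∀ A : ℝ, 0 < A → Summable fun m => ‖q m‖ * A ^ m := fun A _ =>
    summable_of_ne_finset_zero (s := P.support) fun m hm => by simp [hfin m hm]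
  set c := odeCoeff q a b with hcdef
  have hc := summable_odeCoeff hq a b
  have h1 := hasDerivAt_tsum_mul_pow hc
  have hc' := summable_norm_shift_mul_pow hc
  have h2 := hasDerivAt_tsum_mul_pow hc'
  have hd : deriv (fun z => ∑' m, c m * z ^ m) =
      fun z => ∑' m : ℕ, (((m + 1 : ℕ) : ℂ) * c (m + 1)) * z ^ m := funext fun z => (h1 z).deriv
  have at0 : ∀ e : ℕ → ℂ, ∑' m, e m * (0 : ℂ) ^ m = e 0 := fun e => by
    rw [tsum_eq_single 0 fun m hm => by simp [hm]]; simp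
  refine ⟨fun z => ∑' m, c m * z ^ m, fun z => (h1 z).differentiableAt, fun z => ?_, ?_, ?_⟩
  · rw [hd, (h2 z).deriv]
    have e1 : P.eval z = ∑' m, q m * z ^ m := by
      rw [Polynomial.eval_eq_sum, Polynomial.sum_def,
        tsum_eq_sum (s := P.support) fun m hm => by simp [hfin m hm]]
    have s1 : Summable fun m => ‖q m * z ^ m‖ := summable_of_ne_finset_zero (s := P.support)
      fun m hm => by simp [hfin m hm]
    have s2 : Summable fun m => ‖c m * z ^ m‖ := by
      refine Summable.of_nonneg_of_le (fun m => by positivity) (fun m => ?_)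
        (hc (‖z‖ + 1) (by positivity))
      rw [norm_mul, norm_pow]
      gcongr
      linarith
    rw [e1, tsum_mul_tsum_eq_tsum_sum_range_of_summable_norm s1 s2]
    refine tsum_congr fun m => ?_
    have hne : ((m : ℂ) + 2) * (m + 1) ≠ 0 := by
      have h1 : ((m + 2 : ℕ) : ℂ) ≠ 0 := Nat.cast_ne_zero.2 (by omega)
      have h2 : ((m + 1 : ℕ) : ℂ) ≠ 0 := Nat.cast_ne_zero.2 (by omega)
      push_cast at h1 h2
      exact mul_ne_zero h1 h2
    have e2 : ((m : ℂ) + 2) * (m + 1) * c (m + 2) =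
        ∑ i ∈ Finset.range (m + 1), q i * c (m - i) := by
      rw [← Fin.sum_univ_eq_sum_range (fun i => q i * c (m - i)), hcdef, odeCoeff, ← mul_div_assoc,
        mul_div_cancel_left₀ _ hne]
    have e3 : ∑ i ∈ Finset.range (m + 1), q i * z ^ i * (c (m - i) * z ^ (m - i)) =
        (∑ i ∈ Finset.range (m + 1), q i * c (m - i)) * z ^ m := by
      rw [Finset.sum_mul]
      refine Finset.sum_congr rfl fun i hi => ?_
      have : z ^ m = z ^ i * z ^ (m - i) := by
        rw [← pow_add]; congr 1; have := Finset.mem_range.1 hi; omega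
      rw [this]; ring
    rw [e3, ← e2]
    push_cast
    ring
  · refine (at0 c).trans ?_
    rw [hcdef, odeCoeff]
  · rw [hd]
    show ∑' m : ℕ, (((m + 1 : ℕ) : ℂ) * c (m + 1)) * (0 : ℂ) ^ m = b
    rw [at0 fun m => ((m + 1 : ℕ) : ℂ) * c (m + 1), hcdef, odeCoeff]
    simp

/-- The part of degree `< d` of the potential, which is linear in the parameters. -/
noncomputable def lowerPart (d : ℕ) (p : (Fin (d - 1) → ℂ) × ℂ) (z : ℂ) : ℂ :=
  (∑ i : Fin (d - 1), p.1 i * z ^ ((i : ℕ) + 1)) - p.2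

lemma Pol_sub_eq (d : ℕ) (p : (Fin (d - 1) → ℂ) × ℂ) (z : ℂ) :
    Pol d p.1 z - p.2 = z ^ d + lowerPart d p z := by
  simp only [Pol, lowerPart]; ring

lemma lowerPart_sub (d : ℕ) (p q : (Fin (d - 1) → ℂ) × ℂ) (z : ℂ) :
    lowerPart d (p - q) z = lowerPart d p z - lowerPart d q z := by
  simp only [lowerPart, Prod.fst_sub, Prod.snd_sub, Pi.sub_apply, sub_mul, Finset.sum_sub_distrib]
  ring

lemma norm_lowerPart_le {d : ℕ} (hd : 1 ≤ d) (p : (Fin (d - 1) → ℂ) × ℂ) {z : ℂ} {t : ℝ}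
    (ht : 1 ≤ t) (hz : ‖z‖ ≤ t) : ‖lowerPart d p z‖ ≤ d * ‖p‖ * t ^ (d - 1) := by
  have h1 : ‖∑ i : Fin (d - 1), p.1 i * z ^ ((i : ℕ) + 1)‖ ≤ ((d - 1 : ℕ) : ℝ) * (‖p‖ * t ^ (d - 1)) := by
    refine (norm_sum_le _ _).trans ?_
    refine (Finset.sum_le_card_nsmul _ _ (‖p‖ * t ^ (d - 1)) fun i _ => ?_).trans (by simp)
    rw [norm_mul, norm_pow]
    have h2 : ‖p.1 i‖ ≤ ‖p‖ := (norm_le_pi_norm _ i).trans (norm_fst_le p)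
    have h3 : ‖z‖ ^ ((i : ℕ) + 1) ≤ t ^ (d - 1) :=
      (pow_le_pow_left₀ (norm_nonneg _) hz _).trans (pow_le_pow_right₀ ht (by omega))
    gcongr
  have h2 : ‖p.2‖ ≤ ‖p‖ * t ^ (d - 1) := by
    have := norm_snd_le p
    have h4 : 1 ≤ t ^ (d - 1) := one_le_pow₀ ht
    nlinarith [norm_nonneg p]
  have h3 : (d : ℝ) = ((d - 1 : ℕ) : ℝ) + 1 := by
    rw [← Nat.cast_succ]; congr 1; omega
  calc ‖lowerPart d p z‖ ≤ _ := norm_sub_le _ _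
    _ ≤ ((d - 1 : ℕ) : ℝ) * (‖p‖ * t ^ (d - 1)) + ‖p‖ * t ^ (d - 1) := add_le_add h1 h2
    _ = d * ‖p‖ * t ^ (d - 1) := by rw [h3]; ring

/-- The potential as a polynomial. -/
noncomputable def potPoly (d : ℕ) (p : (Fin (d - 1) → ℂ) × ℂ) : Polynomial ℂ :=
  Polynomial.X ^ d +
    ((∑ i : Fin (d - 1), Polynomial.C (p.1 i) * Polynomial.X ^ ((i : ℕ) + 1)) - Polynomial.C p.2)

lemma eval_potPoly (d : ℕ) (p : (Fin (d - 1) → ℂ) × ℂ) (z : ℂ) :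
    (potPoly d p).eval z = Pol d p.1 z - p.2 := by
  rw [Pol_sub_eq]
  simp [potPoly, lowerPart, Polynomial.eval_finsetSum]

section Solutions

variable {d : ℕ} {p : (Fin (d - 1) → ℂ) × ℂ} {y y₁ y₂ : ℂ → ℂ}

lemma exists_isSol (d : ℕ) (p : (Fin (d - 1) → ℂ) × ℂ) (v : ℂ × ℂ) :
    ∃ y, IsSol d p.1 p.2 y ∧ (y 0, deriv y 0) = v := by
  obtain ⟨y, h1, h2, h3, h4⟩ := exists_entire_solution (potPoly d p) v.1 v.2
  exact ⟨y, ⟨h1, fun z => by rw [h2, eval_potPoly]⟩, by rw [h3, h4]⟩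

lemma differentiable_deriv_of_entire {f : ℂ → ℂ} (hf : Differentiable ℂ f) :
    Differentiable ℂ (deriv f) :=
  differentiableOn_univ.1 (hf.differentiableOn.deriv isOpen_univ)

lemma IsSol.lincomb (h₁ : IsSol d p.1 p.2 y₁) (h₂ : IsSol d p.1 p.2 y₂) (a b : ℂ) :
    IsSol d p.1 p.2 (fun z => a * y₁ z + b * y₂ z) ∧
      ∀ z, deriv (fun z => a * y₁ z + b * y₂ z) z = a * deriv y₁ z + b * deriv y₂ z := by
  have e : ∀ z, deriv (fun z => a * y₁ z + b * y₂ z) z = a * deriv y₁ z + b * deriv y₂ z :=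
    fun z => (((h₁.1 z).hasDerivAt.const_mul a).add ((h₂.1 z).hasDerivAt.const_mul b)).deriv
  refine ⟨⟨(h₁.1.const_mul a).add (h₂.1.const_mul b), fun z => ?_⟩, e⟩
  rw [funext e]
  refine ((((differentiable_deriv_of_entire h₁.1 z).hasDerivAt.const_mul a).add
    ((differentiable_deriv_of_entire h₂.1 z).hasDerivAt.const_mul b)).deriv).trans ?_
  rw [h₁.2, h₂.2]
  ring

lemma hasDerivAt_ray (τ : ℂ) {f : ℂ → ℂ} (hf : Differentiable ℂ f) (r : ℝ) :
    HasDerivAt (fun r : ℝ => f (r * τ)) (τ * deriv f (r * τ)) r := by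
  have h1 : HasDerivAt (fun r : ℝ => (r : ℂ) * τ) τ r := by
    simpa using (Complex.ofRealCLM.hasDerivAt (x := r)).mul_const τ
  have h2 := (hf (r * τ)).hasDerivAt.scomp r h1
  simpa [smul_eq_mul, Function.comp_def] using h2

/-- Gronwall's inequality for second-order equations along rays. -/
lemma norm_pair_le_gronwallBound {f : ℂ → ℂ} (hf : Differentiable ℂ f) {τ : ℂ} (hτ : ‖τ‖ ≤ 1)
    {R K η : ℝ} (hK : 1 ≤ K) (hη : 0 ≤ η)
    (h : ∀ r ∈ Set.Ico 0 R, ‖deriv (deriv f) (r * τ)‖ ≤ K * ‖f (r * τ)‖ + η) :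
    ∀ r ∈ Set.Icc 0 R, ‖(f (r * τ), deriv f (r * τ))‖ ≤
      gronwallBound ‖(f 0, deriv f 0)‖ K η r := by
  have hd : ∀ r : ℝ, HasDerivAt (fun r : ℝ => (f (r * τ), deriv f (r * τ)))
      (τ * deriv f (r * τ), τ * deriv (deriv f) (r * τ)) r := fun r =>
    (hasDerivAt_ray τ hf r).prodMk (hasDerivAt_ray τ (differentiable_deriv_of_entire hf) r)
  have := norm_le_gronwallBound_of_norm_deriv_right_le (a := 0) (b := R)
    (f := fun r : ℝ => (f (r * τ), deriv f (r * τ)))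
    (f' := fun r : ℝ => (τ * deriv f (r * τ), τ * deriv (deriv f) (r * τ)))
    (δ := ‖(f 0, deriv f 0)‖) (K := K) (ε := η)
    (fun r _ => (hd r).continuousAt.continuousWithinAt) (fun r _ => (hd r).hasDerivWithinAt)
    (by simp) (fun r hr => ?_)
  · simpa using this
  · have e1 : ‖f (r * τ)‖ ≤ ‖(f (r * τ), deriv f (r * τ))‖ := norm_fst_le (f (r * τ), deriv f (r * τ))
    have e2 : ‖deriv f (r * τ)‖ ≤ ‖(f (r * τ), deriv f (r * τ))‖ := norm_snd_le (f (r * τ), deriv f (r * τ))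
    have e3 := h r hr
    have e4 := norm_nonneg (f (r * τ), deriv f (r * τ))
    rw [Prod.norm_mk]
    refine max_le ?_ ?_ <;> rw [norm_mul]
    · nlinarith [norm_nonneg (deriv f (r * τ))]
    · nlinarith [norm_nonneg (deriv (deriv f) (r * τ))]

lemma norm_pot_le (hd : 2 ≤ d) {B R : ℝ} (hR : 1 ≤ R) (hp : ‖p‖ ≤ B) {z : ℂ} (hz : ‖z‖ ≤ R) :
    ‖Pol d p.1 z - p.2‖ ≤ R ^ d + d * B * R ^ (d - 1) := by
  rw [Pol_sub_eq]
  refine (norm_add_le _ _).trans (add_le_add ?_ ?_)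
  · rw [norm_pow]; gcongr
  · exact (norm_lowerPart_le (by omega) p hR hz).trans (by gcongr)

lemma one_le_pot_bound (d : ℕ) {B R : ℝ} (hR : 1 ≤ R) (hB : 0 ≤ B) :
    1 ≤ R ^ d + d * B * R ^ (d - 1) := by
  have := one_le_pow₀ hR (n := d)
  have : 0 ≤ d * B * R ^ (d - 1) := by positivity
  linarith

lemma IsSol.norm_pair_le (hd : 2 ≤ d) (hy : IsSol d p.1 p.2 y) {τ : ℂ} (hτ : ‖τ‖ ≤ 1) {B R : ℝ}
    (hR : 1 ≤ R) (hp : ‖p‖ ≤ B) {r : ℝ} (hr : r ∈ Set.Icc 0 R) :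
    ‖(y (r * τ), deriv y (r * τ))‖ ≤
      ‖(y 0, deriv y 0)‖ * Real.exp ((R ^ d + d * B * R ^ (d - 1)) * R) := by
  have hB : 0 ≤ B := (norm_nonneg _).trans hp
  have hK := one_le_pot_bound d hR hB
  have h := norm_pair_le_gronwallBound hy.1 hτ (R := R) (η := 0)
    hK le_rfl (fun s hs => ?_) r hr
  · rw [gronwallBound_ε0] at h
    refine h.trans ?_
    have := hr.2
    gcongr
  · rw [hy.2, norm_mul, add_zero]
    gcongr
    refine norm_pot_le hd hR hp ?_
    rw [norm_mul, Complex.norm_real, Real.norm_of_nonneg hs.1]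
    nlinarith [hs.1, hs.2, norm_nonneg τ]

lemma IsSol.eq_zero (hd : 2 ≤ d) (hy : IsSol d p.1 p.2 y) (h0 : y 0 = 0) (h1 : deriv y 0 = 0) :
    y = 0 := by
  funext z
  have h := hy.norm_pair_le hd (τ := z / (‖z‖ + 1 : ℝ)) ?_ (B := ‖p‖) (R := ‖z‖ + 1) (by simp) le_rfl
    (r := ‖z‖ + 1) ⟨by positivity, le_rfl⟩
  · have hz : ((‖z‖ + 1 : ℝ) : ℂ) ≠ 0 := by
      exact_mod_cast (by positivity : (‖z‖ + 1 : ℝ) ≠ 0)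
    rw [mul_div_cancel₀ _ hz, h0, h1] at h
    have h2 : ‖y z‖ ≤ ‖(y z, deriv y z)‖ := norm_fst_le (y z, deriv y z)
    simpa using h2.trans h
  · rw [norm_div, Complex.norm_real, Real.norm_of_nonneg (by positivity), div_le_one (by positivity)]
    linarith

lemma IsSol.eq_lincomb (hd : 2 ≤ d) (hy : IsSol d p.1 p.2 y) (h₁ : IsSol d p.1 p.2 y₁)
    (h₂ : IsSol d p.1 p.2 y₂) {a b : ℂ} (e0 : y 0 = a * y₁ 0 + b * y₂ 0)
    (e1 : deriv y 0 = a * deriv y₁ 0 + b * deriv y₂ 0) (z : ℂ) : y z = a * y₁ z + b * y₂ z := by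
  obtain ⟨h3, h4⟩ := h₁.lincomb h₂ a b
  obtain ⟨h5, h6⟩ := hy.lincomb h3 1 (-1)
  have := congrFun (h5.eq_zero hd (by simp [e0]) (by rw [h6, h4, e1]; ring)) z
  simp only [Pi.zero_apply] at this
  linear_combination this

end Solutions

section Energy

/-- If `g'' = V g` and `κ² ≤ Re V`, then `Re (conj g · g') + κ |g|²` is monotone. -/
lemma energy_monotoneOn {g g' V : ℝ → ℂ} {κ κ' : ℝ → ℝ} {R : ℝ}
    (hg : ∀ r, R ≤ r → HasDerivAt g (g' r) r) (hg' : ∀ r, R ≤ r → HasDerivAt g' (V r * g r) r)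
    (hκ : ∀ r, R ≤ r → HasDerivAt κ (κ' r) r) (h0 : ∀ r, R ≤ r → 0 ≤ κ r)
    (h1 : ∀ r, R ≤ r → 0 ≤ κ' r) (hV : ∀ r, R ≤ r → κ r ^ 2 ≤ (V r).re) :
    MonotoneOn (fun r => inner ℝ (g r) (g' r) + κ r * ‖g r‖ ^ 2) (Set.Ici R) := by
  have hder : ∀ r, R ≤ r → HasDerivAt (fun r => inner ℝ (g r) (g' r) + κ r * ‖g r‖ ^ 2)
      ((inner ℝ (g r) (V r * g r) + inner ℝ (g' r) (g' r)) +
        (κ' r * ‖g r‖ ^ 2 + κ r * (2 * inner ℝ (g r) (g' r)))) r := fun r hr =>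
    ((hg r hr).inner ℝ (hg' r hr)).add ((hκ r hr).mul (hg r hr).norm_sq)
  refine monotoneOn_of_deriv_nonneg (convex_Ici R)
    (fun r hr => (hder r hr).continuousAt.continuousWithinAt)
    (fun r hr => (hder r (interior_subset hr)).differentiableAt.differentiableWithinAt)
    fun r hr => ?_
  have hr : R ≤ r := interior_subset hr
  rw [(hder r hr).deriv]
  have e1 : inner ℝ (g r) (V r * g r) = (V r).re * ‖g r‖ ^ 2 := by
    rw [Complex.inner, mul_assoc, Complex.mul_conj', ← Complex.ofReal_pow,
      Complex.re_mul_ofReal]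
  have e2 : inner ℝ (g' r) (g' r) = ‖g' r‖ ^ 2 := real_inner_self_eq_norm_sq _
  have e3 : -(‖g r‖ * ‖g' r‖) ≤ inner ℝ (g r) (g' r) :=
    neg_le_of_abs_le (abs_real_inner_le_norm _ _)
  rw [e1, e2]
  have h3 := mul_le_mul_of_nonneg_right (hV r hr) (sq_nonneg ‖g r‖)
  have h4 := mul_nonneg (h1 r hr) (sq_nonneg ‖g r‖)
  have h5 := mul_le_mul_of_nonneg_left e3 (h0 r hr)
  nlinarith [sq_nonneg (‖g' r‖ - κ r * ‖g r‖)]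

lemma norm_le_of_energy_nonpos {g g' : ℝ → ℂ} {κ K : ℝ → ℝ} {R : ℝ}
    (hg : ∀ r, R ≤ r → HasDerivAt g (g' r) r) (hK : ∀ r, R ≤ r → HasDerivAt K (κ r) r)
    (hE : ∀ r, R ≤ r → inner ℝ (g r) (g' r) + κ r * ‖g r‖ ^ 2 ≤ 0) {r : ℝ} (hr : R ≤ r) :
    ‖g r‖ ≤ ‖g R‖ * Real.exp (K R) * Real.exp (-K r) := by
  have hder : ∀ r, R ≤ r → HasDerivAt (fun r => ‖g r‖ ^ 2 * Real.exp (2 * K r))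
      (2 * inner ℝ (g r) (g' r) * Real.exp (2 * K r) +
        ‖g r‖ ^ 2 * (Real.exp (2 * K r) * (2 * κ r))) r := fun r hr =>
    (hg r hr).norm_sq.mul ((hK r hr).const_mul 2).exp
  have hanti : AntitoneOn (fun r => ‖g r‖ ^ 2 * Real.exp (2 * K r)) (Set.Ici R) := by
    refine antitoneOn_of_deriv_nonpos (convex_Ici R)
      (fun r hr => (hder r hr).continuousAt.continuousWithinAt)
      (fun r hr => (hder r (interior_subset hr)).differentiableAt.differentiableWithinAt)
      fun r hr => ?_
    have hr : R ≤ r := interior_subset hr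
    rw [(hder r hr).deriv]
    nlinarith [hE r hr, Real.exp_pos (2 * K r)]
  have h := hanti (Set.mem_Ici.2 le_rfl) (Set.mem_Ici.2 hr) hr
  have e : ∀ s, ‖g s‖ ^ 2 * Real.exp (2 * K s) = (‖g s‖ * Real.exp (K s)) ^ 2 := fun s => by
    rw [mul_pow, ← Real.exp_nat_mul]; norm_num
  simp only [e] at h
  have h2 := (pow_le_pow_iff_left₀ (by positivity) (by positivity) two_ne_zero).1 h
  rw [Real.exp_neg, ← div_eq_mul_inv, le_div_iff₀ (Real.exp_pos _)]
  exact h2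

end Energy

section Decay

/-- The exponent governing the decay of subdominant solutions. -/
noncomputable def phase (d : ℕ) (r : ℝ) : ℝ := r ^ (((d : ℝ) + 2) / 2) / (d + 2)

/-- The derivative of `phase`. -/
noncomputable def phaseDeriv (d : ℕ) (r : ℝ) : ℝ := r ^ ((d : ℝ) / 2) / 2

/-- The radius beyond which the energy estimates hold for parameters of norm at most `B`. -/
noncomputable def threshold (d : ℕ) (B : ℝ) : ℝ := 4 * d * (B + 1)

/-- The energy of `y` along the ray of direction `τ`. -/
noncomputable def energy (d : ℕ) (τ : ℂ) (y : ℂ → ℂ) (r : ℝ) : ℝ :=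
  inner ℝ (y (r * τ)) (τ * deriv y (r * τ)) + phaseDeriv d r * ‖y (r * τ)‖ ^ 2

lemma hasDerivAt_phase (d : ℕ) {r : ℝ} (hr : 0 < r) : HasDerivAt (phase d) (phaseDeriv d r) r := by
  have h := (Real.hasDerivAt_rpow_const (p := ((d : ℝ) + 2) / 2) (Or.inl hr.ne')).div_const ((d : ℝ) + 2)
  refine h.congr_deriv ?_
  have : ((d : ℝ) + 2) / 2 - 1 = d / 2 := by ring
  rw [this, phaseDeriv]
  have : (d : ℝ) + 2 ≠ 0 := by positivity
  field_simp

lemma hasDerivAt_phaseDeriv (d : ℕ) {r : ℝ} (hr : 0 < r) :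
    HasDerivAt (phaseDeriv d) (d / 2 * r ^ ((d : ℝ) / 2 - 1) / 2) r :=
  (Real.hasDerivAt_rpow_const (p := (d : ℝ) / 2) (Or.inl hr.ne')).div_const 2

lemma phaseDeriv_sq (d : ℕ) {r : ℝ} (hr : 0 ≤ r) : phaseDeriv d r ^ 2 = r ^ d / 4 := by
  rw [phaseDeriv, div_pow, ← Real.rpow_natCast (r ^ _), ← Real.rpow_mul hr]
  norm_num

lemma phaseDeriv_nonneg (d : ℕ) {r : ℝ} (hr : 0 ≤ r) : 0 ≤ phaseDeriv d r := by
  rw [phaseDeriv]; positivity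

lemma phase_nonneg (d : ℕ) {r : ℝ} (hr : 0 ≤ r) : 0 ≤ phase d r := by
  rw [phase]; positivity

lemma phase_mono (d : ℕ) {r s : ℝ} (hr : 0 ≤ r) (hrs : r ≤ s) : phase d r ≤ phase d s := by
  rw [phase, phase]; gcongr

variable {d : ℕ} {p : (Fin (d - 1) → ℂ) × ℂ} {y y₁ y₂ : ℂ → ℂ} {τ : ℂ} {B : ℝ}

lemma one_le_threshold (hd : 2 ≤ d) (hB : 0 ≤ B) : 1 ≤ threshold d B := by
  have : (2 : ℝ) ≤ d := by exact_mod_cast hd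
  rw [threshold]; nlinarith

lemma norm_eq_one_of_pow (hτ : τ ^ (d + 2) = 1) : ‖τ‖ = 1 :=
  Complex.norm_eq_one_of_pow_eq_one hτ (by omega)

lemma IsSol.hasDerivAt_ray_deriv (hy : IsSol d p.1 p.2 y) (τ : ℂ) (r : ℝ) :
    HasDerivAt (fun r : ℝ => τ * deriv y (r * τ))
      (τ ^ 2 * (Pol d p.1 (r * τ) - p.2) * y (r * τ)) r := by
  have := (hasDerivAt_ray τ (differentiable_deriv_of_entire hy.1) r).const_mul τ
  rw [hy.2] at this
  refine this.congr_deriv (by ring)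

lemma norm_ray (hτ : ‖τ‖ = 1) {r : ℝ} (hr : 0 ≤ r) : ‖(r : ℂ) * τ‖ = r := by
  rw [norm_mul, hτ, mul_one, Complex.norm_real, Real.norm_of_nonneg hr]

lemma le_re_ray_potential (hd : 2 ≤ d) (hp : ‖p‖ ≤ B) (hτ : τ ^ (d + 2) = 1) {r : ℝ}
    (hr : threshold d B ≤ r) : r ^ d / 4 ≤ (τ ^ 2 * (Pol d p.1 (r * τ) - p.2)).re := by
  have hB : 0 ≤ B := (norm_nonneg _).trans hp
  have h1 : 1 ≤ r := (one_le_threshold hd hB).trans hr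
  have hn := norm_eq_one_of_pow hτ
  have e : τ ^ 2 * (Pol d p.1 (r * τ) - p.2) = ((r ^ d : ℝ) : ℂ) + τ ^ 2 * lowerPart d p (r * τ) := by
    rw [Pol_sub_eq, mul_add, mul_pow]
    have : τ ^ 2 * (r ^ d * τ ^ d) = τ ^ (d + 2) * (r : ℂ) ^ d := by ring
    rw [this, hτ]; simp
  have h2 : ‖τ ^ 2 * lowerPart d p (r * τ)‖ ≤ d * B * r ^ (d - 1) := by
    rw [norm_mul, norm_pow, hn, one_pow, one_mul]
    exact (norm_lowerPart_le (by omega) p h1 (norm_ray hn (by linarith)).le).trans (by gcongr)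
  have h3 := (abs_le.1 ((Complex.abs_re_le_norm _).trans h2)).1
  have h4 : r ^ d = r * r ^ (d - 1) := by rw [← pow_succ']; congr 1; omega
  have h5 : d * B ≤ r * (3 / 4) := by
    rw [threshold] at hr
    have : (2 : ℝ) ≤ d := by exact_mod_cast hd
    nlinarith
  have h6 : 0 ≤ r ^ (d - 1) := by positivity
  rw [e, Complex.add_re, Complex.ofReal_re, h4]
  nlinarith [mul_le_mul_of_nonneg_right h5 h6]

lemma IsSol.energy_monotoneOn (hd : 2 ≤ d) (hp : ‖p‖ ≤ B) (hτ : τ ^ (d + 2) = 1)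
    (hy : IsSol d p.1 p.2 y) : MonotoneOn (energy d τ y) (Set.Ici (threshold d B)) := by
  have hB : 0 ≤ B := (norm_nonneg _).trans hp
  have hpos : ∀ r, threshold d B ≤ r → 0 < r := fun r hr => by
    linarith [one_le_threshold hd hB]
  refine _root_.energy_monotoneOn (fun r _ => hasDerivAt_ray τ hy.1 r)
    (fun r _ => hy.hasDerivAt_ray_deriv τ r)
    (fun r hr => hasDerivAt_phaseDeriv d (hpos r hr)) (fun r hr => phaseDeriv_nonneg d (hpos r hr).le)
    (fun r hr => ?_) (fun r hr => ?_)
  · have := hpos r hr; positivity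
  · rw [phaseDeriv_sq d (hpos r hr).le]
    exact le_re_ray_potential hd hp hτ hr

/-- The constant in the decay estimate for subdominant solutions. -/
noncomputable def decayConst (d : ℕ) (B : ℝ) : ℝ :=
  Real.exp ((threshold d B ^ d + d * B * threshold d B ^ (d - 1)) * threshold d B) *
    Real.exp (phase d (threshold d B))

lemma decayConst_pos (d : ℕ) (B : ℝ) : 0 < decayConst d B := by
  rw [decayConst]; positivity

lemma IsSol.norm_le_of_energy_nonpos (hd : 2 ≤ d) (hp : ‖p‖ ≤ B) (hτ : τ ^ (d + 2) = 1)
    (hy : IsSol d p.1 p.2 y) (hE : ∀ r, threshold d B ≤ r → energy d τ y r ≤ 0) {r : ℝ}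
    (hr : 0 ≤ r) :
    ‖y (r * τ)‖ ≤ decayConst d B * ‖(y 0, deriv y 0)‖ * Real.exp (-phase d r) := by
  have hB : 0 ≤ B := (norm_nonneg _).trans hp
  have h1 := one_le_threshold hd hB
  have hn := norm_eq_one_of_pow hτ
  have hin : ∀ s ∈ Set.Icc 0 (threshold d B), ‖y (s * τ)‖ ≤ ‖(y 0, deriv y 0)‖ *
      Real.exp ((threshold d B ^ d + d * B * threshold d B ^ (d - 1)) * threshold d B) :=
    fun s hs => (norm_fst_le (y (s * τ), deriv y (s * τ))).trans
      (hy.norm_pair_le hd hn.le h1 hp hs)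
  rcases le_total r (threshold d B) with h | h
  · refine (hin r ⟨hr, h⟩).trans ?_
    have h2 : 1 ≤ Real.exp (phase d (threshold d B)) * Real.exp (-phase d r) := by
      rw [← Real.exp_add]
      exact Real.one_le_exp (by linarith [phase_mono d hr h])
    rw [decayConst]
    calc _ ≤ (‖(y 0, deriv y 0)‖ *
          Real.exp ((threshold d B ^ d + d * B * threshold d B ^ (d - 1)) * threshold d B)) *
          (Real.exp (phase d (threshold d B)) * Real.exp (-phase d r)) :=
        le_mul_of_one_le_right (by positivity) h2
      _ = _ := by ring
  · have h2 := _root_.norm_le_of_energy_nonpos (R := threshold d B)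
      (fun r _ => hasDerivAt_ray τ hy.1 r)
      (fun r hr => hasDerivAt_phase d (by linarith)) hE h
    refine h2.trans ?_
    have h3 := hin (threshold d B) ⟨by linarith, le_rfl⟩
    rw [decayConst]
    calc _ ≤ (‖(y 0, deriv y 0)‖ *
          Real.exp ((threshold d B ^ d + d * B * threshold d B ^ (d - 1)) * threshold d B)) *
          Real.exp (phase d (threshold d B)) * Real.exp (-phase d r) := by gcongr
      _ = _ := by ring

/-- Existence of a subdominant solution, with a decay estimate uniform in the parameters. -/
theorem exists_decaying (hd : 2 ≤ d) (hp : ‖p‖ ≤ B) (hτ : τ ^ (d + 2) = 1) :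
    ∃ y, IsSol d p.1 p.2 y ∧ ‖(y 0, deriv y 0)‖ = 1 ∧
      ∀ r : ℝ, 0 ≤ r → ‖y (r * τ)‖ ≤ decayConst d B * Real.exp (-phase d r) := by
  have hB : 0 ≤ B := (norm_nonneg _).trans hp
  obtain ⟨C, hC, hC0⟩ := exists_isSol d p (1, 0)
  obtain ⟨S, hS, hS0⟩ := exists_isSol d p (0, 1)
  simp only [Prod.mk.injEq] at hC0 hS0
  set Y : ℂ × ℂ → ℂ → ℂ := fun v z => v.1 * C z + v.2 * S z with hY
  have hYs : ∀ v, IsSol d p.1 p.2 (Y v) := fun v => (hC.lincomb hS v.1 v.2).1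
  have hYd : ∀ v z, deriv (Y v) z = v.1 * deriv C z + v.2 * deriv S z :=
    fun v => (hC.lincomb hS v.1 v.2).2
  have hYv : ∀ v, (Y v 0, deriv (Y v) 0) = v := fun v => by
    rw [hYd]; simp [hY, hC0, hS0]
  set K : ℕ → Set (ℂ × ℂ) := fun N =>
    Metric.sphere 0 1 ∩ {v | energy d τ (Y v) (threshold d B + N) ≤ 0} with hK
  have hcont : ∀ r, Continuous fun v => energy d τ (Y v) r := fun r => by
    simp only [energy, hYd]
    simp only [hY]
    fun_prop
  have hclosed : ∀ N, IsClosed (K N) := fun N =>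
    Metric.isClosed_sphere.inter (isClosed_le (hcont _) continuous_const)
  have hmono : ∀ N, K (N + 1) ⊆ K N := fun N v hv =>
    ⟨hv.1, ((hYs v).energy_monotoneOn hd hp hτ (Set.mem_Ici.2 (by simp))
      (Set.mem_Ici.2 (by simp; positivity)) (by simp)).trans hv.2⟩
  have hne : ∀ N, (K N).Nonempty := fun N => by
    set z : ℂ := ((threshold d B + N : ℝ) : ℂ) * τ with hz
    obtain ⟨v, hv0, hv⟩ : ∃ v : ℂ × ℂ, v ≠ 0 ∧ v.1 * C z + v.2 * S z = 0 := by
      by_cases h : S z = 0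
      · exact ⟨(0, 1), by simp, by simp [h]⟩
      · exact ⟨(S z, -C z), by simp [h], by ring⟩
    have hnv : ((‖v‖ : ℝ) : ℂ) ≠ 0 := by simpa using hv0
    refine ⟨((‖v‖ : ℝ) : ℂ)⁻¹ • v, ?_, ?_⟩
    · rw [mem_sphere_zero_iff_norm, norm_smul, norm_inv, Complex.norm_real, norm_norm]
      exact inv_mul_cancel₀ (norm_ne_zero_iff.2 hv0)
    · have : Y (((‖v‖ : ℝ) : ℂ)⁻¹ • v) z = 0 := by
        simp only [hY, Prod.smul_fst, Prod.smul_snd, smul_eq_mul]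
        linear_combination ((‖v‖ : ℝ) : ℂ)⁻¹ * hv
      simp only [Set.mem_ofPred_eq, energy, ← hz, this]
      simp
  obtain ⟨v, hv⟩ := IsCompact.nonempty_iInter_of_sequence_nonempty_isCompact_isClosed K hmono hne
    ((isCompact_sphere _ _).inter_right (isClosed_le (hcont _) continuous_const)) hclosed
  rw [Set.mem_iInter] at hv
  have hv1 : ‖v‖ = 1 := mem_sphere_zero_iff_norm.1 (hv 0).1
  refine ⟨Y v, hYs v, by rw [hYv, hv1], fun r hr => ?_⟩
  have := (hYs v).norm_le_of_energy_nonpos hd hp hτ (fun s hs => ?_) hr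
  · rwa [hYv, hv1, mul_one] at this
  · obtain ⟨N, hN⟩ := exists_nat_ge s
    have h1 := one_le_threshold hd hB
    exact ((hYs v).energy_monotoneOn hd hp hτ (Set.mem_Ici.2 hs)
      (Set.mem_Ici.2 (by simp)) (by linarith)).trans (hv N).2

/-- A solution tending to zero along a central ray and vanishing far out on it is zero. -/
lemma IsSol.eq_zero_of_tendsto (hd : 2 ≤ d) (hτ : τ ^ (d + 2) = 1) (hy : IsSol d p.1 p.2 y)
    (h0 : y ((threshold d ‖p‖ : ℝ) * τ) = 0)
    (hlim : Tendsto (fun r : ℝ => y (r * τ)) atTop (𝓝 0)) : y = 0 := by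
  set R := threshold d ‖p‖
  have h1 := one_le_threshold hd (norm_nonneg p)
  have hτ0 : τ ≠ 0 := fun h => by simp [h] at hτ
  have hmon := _root_.energy_monotoneOn (R := R) (κ := 0) (κ' := 0)
    (fun r _ => hasDerivAt_ray τ hy.1 r)
    (fun r _ => hy.hasDerivAt_ray_deriv τ r) (fun r _ => hasDerivAt_const r 0) (fun _ _ => le_rfl)
    (fun _ _ => le_rfl) (fun r hr => by
      have := le_re_ray_potential hd le_rfl hτ hr
      have h2 : 0 ≤ r := by linarith
      simp only [Pi.zero_apply]
      have : 0 ≤ r ^ d / 4 := by positivity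
      linarith)
  have hnn : ∀ r, R ≤ r → 0 ≤ inner ℝ (y (r * τ)) (τ * deriv y (r * τ)) := fun r hr => by
    have := hmon (Set.mem_Ici.2 le_rfl) (Set.mem_Ici.2 hr) hr
    simpa [h0] using this
  have hsq : MonotoneOn (fun r : ℝ => ‖y (r * τ)‖ ^ 2) (Set.Ici R) := by
    have hder := fun r : ℝ => (hasDerivAt_ray τ hy.1 r).norm_sq
    refine monotoneOn_of_deriv_nonneg (convex_Ici R)
      (fun r hr => (hder r).continuousAt.continuousWithinAt)
      (fun r hr => (hder r).differentiableAt.differentiableWithinAt) fun r hr => ?_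
    rw [(hder r).deriv]
    have := hnn r (interior_subset hr)
    positivity
  have hlim2 : Tendsto (fun r : ℝ => ‖y (r * τ)‖ ^ 2) atTop (𝓝 0) := by
    simpa using (hlim.norm).pow 2
  have hz : ∀ r, R ≤ r → y (r * τ) = 0 := fun r hr => by
    have : ‖y (r * τ)‖ ^ 2 ≤ 0 := ge_of_tendsto hlim2 (by
      filter_upwards [eventually_ge_atTop r] with s hs
      exact hsq (Set.mem_Ici.2 hr) (Set.mem_Ici.2 (hr.trans hs)) hs)
    simpa using le_antisymm this (sq_nonneg _)
  have han : AnalyticOnNhd ℂ y Set.univ := hy.1.differentiableOn.analyticOnNhd isOpen_univ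
  refine funext fun w => han.eqOn_zero_of_preconnected_of_frequently_eq_zero isPreconnected_univ
    (z₀ := R * τ) (Set.mem_univ _) ?_ (Set.mem_univ w)
  have ht : Tendsto (fun r : ℝ => (r : ℂ) * τ) (𝓝[>] R) (𝓝[≠] (R * τ)) := by
    refine tendsto_nhdsWithin_iff.2 ⟨?_, ?_⟩
    · exact ((Complex.continuous_ofReal.mul continuous_const).tendsto R).mono_left nhdsWithin_le_nhds
    · filter_upwards [self_mem_nhdsWithin] with r hr
      simpa [hτ0] using (ne_of_gt hr)
  refine ht.frequently (Eventually.frequently ?_)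
  filter_upwards [self_mem_nhdsWithin] with r hr using hz r (le_of_lt hr)

/-- Two solutions tending to zero along the same central ray are proportional. -/
lemma IsSol.det_eq_zero_of_tendsto (hd : 2 ≤ d) (hτ : τ ^ (d + 2) = 1) (h₁ : IsSol d p.1 p.2 y₁)
    (h₂ : IsSol d p.1 p.2 y₂) (l₁ : Tendsto (fun r : ℝ => y₁ (r * τ)) atTop (𝓝 0))
    (l₂ : Tendsto (fun r : ℝ => y₂ (r * τ)) atTop (𝓝 0)) :
    y₁ 0 * deriv y₂ 0 - deriv y₁ 0 * y₂ 0 = 0 := by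
  set z : ℂ := (threshold d ‖p‖ : ℝ) * τ with hz
  by_cases h : y₁ z = 0
  · rw [h₁.eq_zero_of_tendsto hd hτ h l₁]
    have : deriv (0 : ℂ → ℂ) 0 = 0 := by simp
    rw [this]; simp
  · obtain ⟨h3, h4⟩ := h₁.lincomb h₂ (-(y₂ z)) (y₁ z)
    have h5 := h3.eq_zero_of_tendsto hd hτ (by rw [← hz]; ring)
      (by simpa using (l₁.const_mul (-(y₂ z))).add (l₂.const_mul (y₁ z)))
    have e0 := congrFun h5 0
    have e1 := h4 0
    rw [h5] at e1
    have : deriv (0 : ℂ → ℂ) 0 = 0 := by simp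
    rw [this] at e1
    simp only [Pi.zero_apply] at e0
    have : y₁ z * (y₁ 0 * deriv y₂ 0 - deriv y₁ 0 * y₂ 0) = 0 := by
      linear_combination -(y₁ 0) * e1 - deriv y₁ 0 * e0
    exact (mul_eq_zero.1 this).resolve_left h

lemma tendsto_phase (d : ℕ) : Tendsto (phase d) atTop atTop :=
  (tendsto_rpow_atTop (by positivity)).atTop_div_const (by positivity)

lemma tendsto_zero_of_decay {f : ℝ → ℂ} {A : ℝ}
    (h : ∀ r, 0 ≤ r → ‖f r‖ ≤ A * Real.exp (-phase d r)) : Tendsto f atTop (𝓝 0) := by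
  have : Tendsto (fun r => A * Real.exp (-phase d r)) atTop (𝓝 0) := by
    simpa using (Real.tendsto_exp_neg_atTop_nhds_zero.comp (tendsto_phase d)).const_mul A
  refine squeeze_zero_norm' ?_ this
  filter_upwards [eventually_ge_atTop 0] with r hr using h r hr

/-- A solution tending to zero along a central ray decays exponentially. -/
lemma IsSol.decay_of_tendsto (hd : 2 ≤ d) (hτ : τ ^ (d + 2) = 1) (hy : IsSol d p.1 p.2 y)
    (hlim : Tendsto (fun r : ℝ => y (r * τ)) atTop (𝓝 0)) :
    ∃ A, ∀ r : ℝ, 0 ≤ r → ‖y (r * τ)‖ ≤ A * Real.exp (-phase d r) := by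
  obtain ⟨Y, hY, h1, hdec⟩ := exists_decaying hd (le_refl ‖p‖) hτ
  have hdet := hy.det_eq_zero_of_tendsto hd hτ hY hlim (tendsto_zero_of_decay hdec)
  obtain ⟨c, hc0, hc1⟩ : ∃ c : ℂ, y 0 = c * Y 0 ∧ deriv y 0 = c * deriv Y 0 := by
    by_cases h : Y 0 = 0
    · have h' : deriv Y 0 ≠ 0 := fun h' => by simp [h, h'] at h1
      refine ⟨deriv y 0 / deriv Y 0, ?_, by field_simp⟩
      rw [h] at hdet ⊢
      simpa [h'] using hdet
    · refine ⟨y 0 / Y 0, by field_simp, ?_⟩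
      field_simp
      linear_combination -hdet
  refine ⟨‖c‖ * decayConst d ‖p‖, fun r hr => ?_⟩
  have e := hy.eq_lincomb hd hY hY (a := c) (b := 0) (by simp [hc0]) (by simp [hc1]) (r * τ)
  rw [e, zero_mul, add_zero, norm_mul, mul_assoc]
  exact mul_le_mul_of_nonneg_left (hdec r hr) (norm_nonneg _)

end Decay

section Sector

variable {d : ℕ} {p : (Fin (d - 1) → ℂ) × ℂ} {y : ℂ → ℂ} {τ σ : ℂ}

lemma inner_growth_le {g g' s l : ℂ} {r q D B : ℝ} (hr : 1 ≤ r) (hq : 1 ≤ q) (hD : 0 ≤ D)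
    (hl : ‖l‖ ≤ D * B * (r * q ^ 2)) :
    2 * inner ℝ g' (((((r * q) ^ 2 : ℝ) : ℂ) * (s - 1) + l) * g) + (D * (r * q ^ 2) * ‖g‖ ^ 2 +
      (r * q) ^ 2 * (2 * inner ℝ g g')) ≤
      2 * (‖s‖ * (r * q / 2) + (B + 1) * (D / 2 * q)) * (‖g'‖ ^ 2 + (r * q) ^ 2 * ‖g‖ ^ 2) := by
  have e : ((((r * q) ^ 2 : ℝ) : ℂ) * (s - 1) + l) * g =
      ((r * q) ^ 2 : ℝ) • (s * g) - ((r * q) ^ 2 : ℝ) • g + l * g := by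
    rw [Complex.real_smul, Complex.real_smul]; ring
  have e2 : 2 * inner ℝ g' (((((r * q) ^ 2 : ℝ) : ℂ) * (s - 1) + l) * g) +
      (D * (r * q ^ 2) * ‖g‖ ^ 2 + (r * q) ^ 2 * (2 * inner ℝ g g')) =
      2 * ((r * q) ^ 2 * inner ℝ g' (s * g)) +
      2 * inner ℝ g' (l * g) + D * (r * q ^ 2) * ‖g‖ ^ 2 := by
    rw [e, inner_add_right, inner_sub_right, inner_smul_right, inner_smul_right,
      real_inner_comm g g']
    ring
  have i1 : inner ℝ g' (s * g) ≤ ‖g'‖ * (‖s‖ * ‖g‖) :=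
    (real_inner_le_norm _ _).trans (by rw [norm_mul s])
  have i2 : inner ℝ g' (l * g) ≤ ‖g'‖ * (D * B * (r * q ^ 2) * ‖g‖) :=
    (real_inner_le_norm _ _).trans (by rw [norm_mul l]; gcongr)
  set E := ‖g'‖ ^ 2 + (r * q) ^ 2 * ‖g‖ ^ 2 with hE
  have a1 : 2 * (‖g'‖ * (r * q * ‖g‖)) ≤ E := by
    nlinarith [sq_nonneg (‖g'‖ - r * q * ‖g‖)]
  have a2 : (r * q * ‖g‖) ^ 2 ≤ E := by nlinarith [sq_nonneg ‖g'‖]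
  have hDB : 0 ≤ D * B := by
    have := (norm_nonneg l).trans hl
    have h2 : 0 < r * q ^ 2 := by positivity
    exact le_of_mul_le_mul_right (by linarith) h2
  have b1 : 2 * ((r * q) ^ 2 * inner ℝ g' (s * g)) ≤ ‖s‖ * (r * q) * E := by
    calc _ ≤ 2 * ((r * q) ^ 2 * (‖g'‖ * (‖s‖ * ‖g‖))) := by gcongr
      _ = ‖s‖ * (r * q) * (2 * (‖g'‖ * (r * q * ‖g‖))) := by ring
      _ ≤ _ := by gcongr
  have b2 : 2 * inner ℝ g' (l * g) ≤ D * B * q * E := by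
    calc _ ≤ 2 * (‖g'‖ * (D * B * (r * q ^ 2) * ‖g‖)) := by gcongr
      _ = D * B * q * (2 * (‖g'‖ * (r * q * ‖g‖))) := by ring
      _ ≤ _ := by gcongr
  have b3 : D * (r * q ^ 2) * ‖g‖ ^ 2 ≤ D * q * E := by
    calc _ = D * (1 * (r * q ^ 2 * ‖g‖ ^ 2)) := by ring
      _ ≤ D * ((r * q) * (r * q ^ 2 * ‖g‖ ^ 2)) := by
        gcongr; nlinarith
      _ = D * q * (r * q * ‖g‖) ^ 2 := by ring
      _ ≤ _ := by gcongr
  rw [e2]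
  linarith

/-- A Gronwall-type estimate on a half-line. -/
lemma le_mul_exp_of_deriv_le {E E' Ψ Ψ' : ℝ → ℝ} {a : ℝ} (hE : ∀ r, a ≤ r → HasDerivAt E (E' r) r)
    (hΨ : ∀ r, a ≤ r → HasDerivAt Ψ (Ψ' r) r) (h : ∀ r, a ≤ r → E' r ≤ Ψ' r * E r)
    (hE0 : 0 ≤ E a) (hΨ0 : 0 ≤ Ψ a) {r : ℝ} (hr : a ≤ r) : E r ≤ E a * Real.exp (Ψ r) := by
  have hD : ∀ r, a ≤ r → HasDerivAt (fun r => Real.exp (-Ψ r) * E r)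
      (Real.exp (-Ψ r) * (-Ψ' r) * E r + Real.exp (-Ψ r) * E' r) r := fun r hr =>
    ((hΨ r hr).fun_neg.exp).mul (hE r hr)
  have hanti : AntitoneOn (fun r => Real.exp (-Ψ r) * E r) (Set.Ici a) := by
    refine antitoneOn_of_deriv_nonpos (convex_Ici a)
      (fun r hr => (hD r hr).continuousAt.continuousWithinAt)
      (fun r hr => (hD r (interior_subset hr)).differentiableAt.differentiableWithinAt)
      fun r hr => ?_
    have hr1 : a ≤ r := interior_subset hr
    rw [(hD r hr1).deriv]
    have := mul_le_mul_of_nonneg_left (h r hr1) (Real.exp_pos (-Ψ r)).le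
    linarith
  have h2 : Real.exp (-Ψ r) * E r ≤ Real.exp (-Ψ a) * E a :=
    hanti (Set.mem_Ici.2 le_rfl) (Set.mem_Ici.2 hr) hr
  have h3 : Real.exp (-Ψ a) ≤ 1 := Real.exp_le_one_iff.2 (by linarith)
  have h4 : Real.exp (-Ψ r) * E r ≤ E a := by nlinarith
  have h5 : Real.exp (-Ψ r) * Real.exp (Ψ r) = 1 := by rw [← Real.exp_add]; simp
  have h6 := mul_le_mul_of_nonneg_right h4 (Real.exp_pos (Ψ r)).le
  linear_combination h6 - E r * h5

/-- Growth of a solution along an arbitrary ray. -/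
lemma IsSol.norm_ray_le (hd : 2 ≤ d) (hy : IsSol d p.1 p.2 y) (hσ : ‖σ‖ = 1) {r : ℝ}
    (hr : 0 ≤ r) :
    ‖y (r * σ)‖ ≤ 2 * (‖(y 0, deriv y 0)‖ * Real.exp (1 + d * ‖p‖)) *
      Real.exp (‖σ ^ (d + 2) + 1‖ * phase d r + (‖p‖ + 1) * r ^ ((d : ℝ) / 2)) := by
  obtain ⟨K, hK⟩ : ∃ K, K = ‖(y 0, deriv y 0)‖ * Real.exp (1 + d * ‖p‖) := ⟨_, rfl⟩
  have hB : 0 ≤ ‖p‖ := norm_nonneg _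
  have hK0 : 0 ≤ K := by rw [hK]; positivity
  have hd2 : (2 : ℝ) ≤ d := by exact_mod_cast hd
  have hin : ∀ s ∈ Set.Icc (0 : ℝ) 1, ‖y (s * σ)‖ ≤ K ∧ ‖deriv y (s * σ)‖ ≤ K := fun s hs => by
    have := hy.norm_pair_le hd hσ.le le_rfl (le_refl ‖p‖) hs
    rw [one_pow, one_pow, mul_one, mul_one, ← hK] at this
    exact ⟨(norm_fst_le (y (s * σ), deriv y (s * σ))).trans this,
      (norm_snd_le (y (s * σ), deriv y (s * σ))).trans this⟩
  rw [← hK]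
  obtain ⟨Ψ, hΨ⟩ : ∃ Ψ : ℝ → ℝ, ∀ r, Ψ r = ‖σ ^ (d + 2) + 1‖ * phase d r + (‖p‖ + 1) * r ^ ((d : ℝ) / 2) :=
    ⟨_, fun _ => rfl⟩
  rw [← hΨ]
  have hΨ0 : ∀ r, 0 ≤ r → 0 ≤ Ψ r := fun r hr => by
    have := phase_nonneg d hr
    rw [hΨ]
    positivity
  rcases le_total r 1 with h1 | h1
  · have := (hin r ⟨hr, h1⟩).1
    have h2 := Real.one_le_exp (hΨ0 r hr)
    nlinarith
  have h3 := le_mul_exp_of_deriv_le (a := 1)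
    (E := fun r => ‖σ * deriv y (r * σ)‖ ^ 2 + r ^ d * ‖y (r * σ)‖ ^ 2) (Ψ := fun r => 2 * Ψ r)
    (Ψ' := fun r => 2 * (‖σ ^ (d + 2) + 1‖ * phaseDeriv d r +
      (‖p‖ + 1) * (d / 2 * r ^ ((d : ℝ) / 2 - 1))))
    (fun r _ => (hy.hasDerivAt_ray_deriv σ r).norm_sq.add
      ((hasDerivAt_pow d r).mul (hasDerivAt_ray σ hy.1 r).norm_sq))
    (fun r hr => by
      have hr0 : 0 < r := by linarith
      rw [funext hΨ]
      exact ((((hasDerivAt_phase d hr0).const_mul _).add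
        ((Real.hasDerivAt_rpow_const (Or.inl hr0.ne')).const_mul (‖p‖ + 1))).const_mul 2))
    (fun r hr => ?_) (by positivity) (by have := hΨ0 1 (by simp); positivity) h1
  · have h4 : ‖σ * deriv y ((1 : ℝ) * σ)‖ ^ 2 + 1 ^ d * ‖y ((1 : ℝ) * σ)‖ ^ 2 ≤ (2 * K) ^ 2 := by
      obtain ⟨h3, h4⟩ := hin 1 (by simp)
      rw [norm_mul, hσ, one_mul, one_pow]
      nlinarith [norm_nonneg (y ((1 : ℝ) * σ)), norm_nonneg (deriv y ((1 : ℝ) * σ))]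
    have h5 : Real.exp (2 * Ψ r) = Real.exp (Ψ r) ^ 2 := by
      rw [← Real.exp_nat_mul]; simp
    refine abs_le_of_sq_le_sq' ?_ (by positivity) |>.2
    rw [mul_pow (2 * K), ← h5]
    refine le_trans ?_ (h3.trans (mul_le_mul_of_nonneg_right h4 (Real.exp_pos _).le))
    have : 1 ≤ r ^ d := one_le_pow₀ h1
    nlinarith [sq_nonneg ‖y (r * σ)‖, sq_nonneg ‖σ * deriv y (r * σ)‖]
  · have hr0 : 0 < r := by linarith
    obtain ⟨q, hq⟩ : ∃ q, q = r ^ ((d : ℝ) / 2 - 1) := ⟨_, rfl⟩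
    have hq1 : 1 ≤ q := hq ▸ Real.one_le_rpow hr (by linarith)
    have hqr : r ^ ((d : ℝ) / 2) = r * q := by
      rw [hq, Real.rpow_sub_one hr0.ne']; field_simp
    have hrd : r ^ d = (r * q) ^ 2 := by
      have := phaseDeriv_sq d hr0.le
      rw [phaseDeriv, hqr] at this
      linarith
    have hrd1 : r * r ^ (d - 1) = (r * q) ^ 2 := by
      rw [← hrd, ← pow_succ']; congr 1; omega
    have hrd2 : r ^ (d - 1) = r * q ^ 2 := by
      apply mul_left_cancel₀ hr0.ne'; rw [hrd1]; ring
    have hl : ‖σ ^ 2 * lowerPart d p (r * σ)‖ ≤ d * ‖p‖ * (r * q ^ 2) := by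
      rw [norm_mul, norm_pow, hσ, one_pow, one_mul, ← hrd2]
      exact norm_lowerPart_le (by omega) p hr (norm_ray hσ hr0.le).le
    have key := inner_growth_le (g := y (r * σ)) (g' := σ * deriv y (r * σ))
      (s := σ ^ (d + 2) + 1) hr hq1 (by positivity) hl
    have e : σ ^ 2 * (Pol d p.1 (r * σ) - p.2) =
        (((r * q) ^ 2 : ℝ) : ℂ) * (σ ^ (d + 2) + 1 - 1) + σ ^ 2 * lowerPart d p (r * σ) := by
      rw [Pol_sub_eq, ← hrd]; push_cast; ring
    rw [e, hrd2, hrd, phaseDeriv, hqr, ← hq]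
    exact key

/-- A crude global bound for solutions. -/
lemma IsSol.exists_norm_le (hd : 2 ≤ d) (hy : IsSol d p.1 p.2 y) :
    ∃ K M : ℝ, 0 ≤ K ∧ 0 ≤ M ∧
      ∀ z : ℂ, ‖y z‖ ≤ K * Real.exp (M * ‖z‖ ^ (((d : ℝ) + 2) / 2)) := by
  refine ⟨2 * (‖(y 0, deriv y 0)‖ * Real.exp (1 + d * ‖p‖)) * Real.exp (‖p‖ + 1), 2 + (‖p‖ + 1),
    by positivity, by positivity, fun z => ?_⟩
  obtain ⟨r, σ, hr, hσ, rfl⟩ : ∃ (r : ℝ) (σ : ℂ), 0 ≤ r ∧ ‖σ‖ = 1 ∧ r * σ = z :=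
    ⟨‖z‖, exp (z.arg * I), norm_nonneg _, by rw [Complex.norm_exp_ofReal_mul_I],
      norm_mul_exp_arg_mul_I z⟩
  rw [norm_ray hσ hr]
  refine (hy.norm_ray_le hd hσ hr).trans ?_
  rw [mul_assoc _ (Real.exp (‖p‖ + 1)), ← Real.exp_add]
  refine mul_le_mul_of_nonneg_left (Real.exp_le_exp.2 ?_) (by positivity)
  have h1 : ‖σ ^ (d + 2) + 1‖ ≤ 2 := by
    refine (norm_add_le _ _).trans ?_
    rw [norm_pow, hσ]; norm_num
  have h2 : phase d r ≤ r ^ (((d : ℝ) + 2) / 2) := by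
    rw [phase]
    exact div_le_self (by positivity) (by linarith [(Nat.cast_nonneg d : (0 : ℝ) ≤ d)])
  have h3 : r ^ ((d : ℝ) / 2) ≤ 1 + r ^ (((d : ℝ) + 2) / 2) := by
    have h4 : 0 ≤ r ^ (((d : ℝ) + 2) / 2) := by positivity
    rcases le_total r 1 with h | h
    · linarith [Real.rpow_le_one hr h (z := (d : ℝ) / 2) (by positivity)]
    · linarith [Real.rpow_le_rpow_of_exponent_le h (show (d : ℝ) / 2 ≤ ((d : ℝ) + 2) / 2 by linarith)]
  have h5 := mul_le_mul h1 h2 (phase_nonneg d hr) zero_le_two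
  have h6 := mul_le_mul_of_nonneg_left h3 (show 0 ≤ ‖p‖ + 1 by positivity)
  linarith

/-- Lower order terms in the exponent are absorbed by `ε r ^ ((d + 2) / 2)`. -/
lemma exists_lower_order_le (d : ℕ) (M : ℝ) {ε : ℝ} (hε : 0 < ε) :
    ∃ C, ∀ r : ℝ, 0 ≤ r → M * r ^ ((d : ℝ) / 2) - ε * r ^ (((d : ℝ) + 2) / 2) ≤ C := by
  refine ⟨|M| * (|M| / ε) ^ ((d : ℝ) / 2), fun r hr => ?_⟩
  have e : r ^ (((d : ℝ) + 2) / 2) = r ^ ((d : ℝ) / 2) * r := by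
    rcases hr.eq_or_lt with rfl | hr
    · rw [Real.zero_rpow (by positivity), mul_zero]
    · rw [← Real.rpow_add_one hr.ne']; congr 1; ring
  have h0 : 0 ≤ r ^ ((d : ℝ) / 2) := by positivity
  have hM := le_abs_self M
  have e2 : M * r ^ ((d : ℝ) / 2) - ε * r ^ (((d : ℝ) + 2) / 2) = r ^ ((d : ℝ) / 2) * (M - ε * r) := by
    rw [e]; ring
  rw [e2]
  rcases le_total (|M| / ε) r with h | h
  · rw [div_le_iff₀ hε] at h
    have : r ^ ((d : ℝ) / 2) * (M - ε * r) ≤ 0 := mul_nonpos_of_nonneg_of_nonpos h0 (by linarith)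
    exact this.trans (by positivity)
  · have h3 : r ^ ((d : ℝ) / 2) ≤ (|M| / ε) ^ ((d : ℝ) / 2) := by gcongr
    have h4 : M - ε * r ≤ |M| := by nlinarith
    calc _ ≤ r ^ ((d : ℝ) / 2) * |M| := by gcongr
      _ ≤ _ := by rw [mul_comm]; gcongr

/-- Decay on the central ray of a Stokes sector propagates to one half of the sector. -/
lemma tendsto_zero_half_sector {A K M K' M' s : ℝ} (hs : s = 1 ∨ s = -1)
    (hy : Differentiable ℂ y) (hτ : ‖τ‖ = 1)
    (hK : 0 ≤ K) (hM : 0 ≤ M) (hK' : 0 ≤ K')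
    (hgrow : ∀ z : ℂ, ‖y z‖ ≤ K * Real.exp (M * ‖z‖ ^ (((d : ℝ) + 2) / 2)))
    (hdec : ∀ r : ℝ, 0 ≤ r → ‖y (r * τ)‖ ≤ A * Real.exp (-phase d r))
    (hedge : ∀ r : ℝ, 0 ≤ r → ‖y (r * (τ * exp ((s * (Real.pi / (d + 2)) : ℝ) * I)))‖ ≤
      K' * Real.exp (M' * r ^ ((d : ℝ) / 2)))
    {φ : ℝ} (hφ0 : 0 ≤ φ) (hφ : φ < Real.pi / (d + 2)) :
    Tendsto (fun r : ℝ => y (r * (τ * exp ((s * φ : ℝ) * I)))) atTop (𝓝 0) := by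
  set ρ : ℝ := ((d : ℝ) + 2) / 2 with hρ
  have hd0 : (0 : ℝ) ≤ d := Nat.cast_nonneg d
  have hρ0 : 0 < ρ := by rw [hρ]; positivity
  have hs2 : s * s = 1 := by rcases hs with rfl | rfl <;> norm_num
  have hs1 : |s| = 1 := by rcases hs with rfl | rfl <;> norm_num
  set a : ℝ := 1 / (d + 2) with ha
  have ha0 : 0 < a := by rw [ha]; positivity
  have hρφ : ρ * (Real.pi / (d + 2)) = Real.pi / 2 := by rw [hρ]; field_simp
  have hcos : 0 < Real.cos (ρ * φ) := by
    refine Real.cos_pos_of_mem_Ioo ⟨by linarith [mul_nonneg hρ0.le hφ0, Real.pi_pos], ?_⟩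
    rw [← hρφ]; gcongr
  set ε : ℝ := a * Real.cos (ρ * φ) / 2 with hε
  have hε0 : 0 < ε := by positivity
  obtain ⟨C', hC'⟩ := exists_lower_order_le d M' hε0
  set f : ℂ → ℂ := fun w => y (exp (s * w) * τ) * exp ((a + s * ε * I) * exp (ρ * (s * w))) with hf
  have hfd : Differentiable ℂ f := by
    refine (hy.comp ?_).mul ?_ <;> fun_prop
  -- polar form of the argument and of the exponential factor
  have harg : ∀ w : ℂ, exp (s * w) * τ = (Real.exp (s * w.re) : ℝ) * (τ * exp ((s * w.im : ℝ) * I)) := by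
    intro w
    have : (s : ℂ) * w = (s * w.re : ℝ) + (s * w.im : ℝ) * I := by
      nth_rewrite 1 [← Complex.re_add_im w]; push_cast; ring
    rw [this, Complex.exp_add, Complex.ofReal_exp]
    ring
  have hexp : ∀ w : ℂ, ‖exp ((a + s * ε * I) * exp (ρ * (s * w)))‖ =
      Real.exp (Real.exp (s * w.re) ^ ρ * (a * Real.cos (ρ * w.im) - ε * Real.sin (ρ * w.im))) := by
    intro w
    have h1 : (ρ : ℂ) * (s * w) = (ρ * (s * w.re) : ℝ) + (ρ * (s * w.im) : ℝ) * I := by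
      nth_rewrite 1 [← Complex.re_add_im w]; push_cast; ring
    have h2 : Real.exp (s * w.re) ^ ρ = Real.exp (ρ * (s * w.re)) := by
      rw [← Real.exp_mul, mul_comm]
    have h3 : Real.sin (ρ * (s * w.im)) = s * Real.sin (ρ * w.im) := by
      rcases hs with rfl | rfl
      · simp
      · rw [show ρ * (-1 * w.im) = -(ρ * w.im) by ring, Real.sin_neg]; ring
    have h4 : Real.cos (ρ * (s * w.im)) = Real.cos (ρ * w.im) := by
      rcases hs with rfl | rfl
      · simp
      · rw [← Real.cos_neg]; congr 1; ring
    rw [Complex.norm_exp, h1, Complex.exp_add, Complex.exp_mul_I, ← Complex.ofReal_cos,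
      ← Complex.ofReal_sin, ← Complex.ofReal_exp, h2, h3, h4]
    have h5 : ∀ E c v : ℝ, (((a : ℂ) + s * ε * I) * (E * (c + ((s * v : ℝ) : ℂ) * I))) =
        ((E * (a * c - (s * s) * (ε * v)) : ℝ) : ℂ) + ((E * (a * (s * v) + s * ε * c) : ℝ) : ℂ) * I := by
      intro E c v
      push_cast
      linear_combination (E * s * ε * s * v : ℂ) * I_sq
    rw [h5, hs2, one_mul, Complex.add_re, Complex.ofReal_re, Complex.re_ofReal_mul, Complex.I_re,
      mul_zero, add_zero]
  have hn : ∀ r, 0 < r → ∀ φ : ℝ, ∃ w : ℂ, w.im = φ ∧ Real.exp (s * w.re) = r := by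
    intro r hr φ
    refine ⟨⟨s * Real.log r, φ⟩, rfl, ?_⟩
    rw [← mul_assoc, hs2, one_mul, Real.exp_log hr]
  have key : ∀ w : ℂ, 0 ≤ w.im → w.im ≤ Real.pi / (d + 2) →
      ‖f w‖ ≤ max A (K' * Real.exp C') := by
    intro w h0 h1
    refine PhragmenLindelof.horizontal_strip (a := 0) (b := Real.pi / (d + 2))
      hfd.diffContOnCl ⟨ρ, ?_, M + a + ε, ?_⟩ ?_ ?_ h0 h1
    · rw [sub_zero, div_div_cancel₀ Real.pi_pos.ne', hρ]; linarith
    · refine Asymptotics.IsBigO.of_bound K (Eventually.of_forall fun w => ?_)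
      rw [hf]
      simp only [norm_mul (y _)]
      rw [hexp, Real.norm_of_nonneg (Real.exp_pos _).le]
      have h1 : Real.exp (s * w.re) ^ ρ ≤ Real.exp (ρ * |w.re|) := by
        rw [← Real.exp_mul, mul_comm, Real.exp_le_exp]
        refine mul_le_mul_of_nonneg_left ?_ hρ0.le
        refine (le_abs_self _).trans ?_
        rw [abs_mul, hs1, one_mul]
      have h2 : ‖exp (s * w) * τ‖ = Real.exp (s * w.re) := by
        rw [norm_mul, hτ, mul_one, Complex.norm_exp]; simp
      have h3 : 0 ≤ Real.exp (s * w.re) ^ ρ := by positivity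
      calc _ ≤ K * Real.exp (M * Real.exp (s * w.re) ^ ρ) * Real.exp (Real.exp (s * w.re) ^ ρ * (a + ε)) := by
            refine mul_le_mul ((hgrow _).trans (by rw [h2])) (Real.exp_le_exp.2 ?_)
              (Real.exp_pos _).le (by positivity)
            refine mul_le_mul_of_nonneg_left ?_ h3
            nlinarith [Real.cos_le_one (ρ * w.im), Real.neg_one_le_sin (ρ * w.im)]
        _ = K * Real.exp ((M + a + ε) * Real.exp (s * w.re) ^ ρ) := by
            rw [mul_assoc, ← Real.exp_add]; ring_nf
        _ ≤ _ := by gcongr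
    · intro w hw
      refine le_trans ?_ (le_max_left _ _)
      rw [hf]
      simp only [norm_mul (y _)]
      rw [hexp, harg, hw]
      have := hdec (Real.exp (s * w.re)) (Real.exp_pos _).le
      simp only [mul_zero, Complex.ofReal_zero, zero_mul, Complex.exp_zero, mul_one, Real.cos_zero,
        Real.sin_zero, sub_zero]
      refine (mul_le_mul_of_nonneg_right this (Real.exp_pos _).le).trans (le_of_eq ?_)
      rw [mul_assoc, ← Real.exp_add, phase, ← hρ, ha]
      ring_nf
      simp
    · intro w hw
      refine le_trans ?_ (le_max_right _ _)
      rw [hf]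
      simp only [norm_mul (y _)]
      rw [hexp, harg, hw, hρφ, Real.cos_pi_div_two, Real.sin_pi_div_two]
      refine (mul_le_mul_of_nonneg_right (hedge _ (Real.exp_pos _).le) (Real.exp_pos _).le).trans ?_
      rw [mul_assoc, ← Real.exp_add]
      have := hC' _ (Real.exp_pos (s * w.re)).le
      refine mul_le_mul_of_nonneg_left (Real.exp_le_exp.2 ?_) hK'
      linarith
  have hlim : Tendsto (fun r : ℝ => max A (K' * Real.exp C') * Real.exp (-(ε * r ^ ρ))) atTop (𝓝 0) := by
    simpa using (Real.tendsto_exp_neg_atTop_nhds_zero.comp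
      ((tendsto_rpow_atTop hρ0).const_mul_atTop hε0)).const_mul (max A (K' * Real.exp C'))
  refine squeeze_zero_norm' ?_ hlim
  filter_upwards [eventually_gt_atTop 0] with r hr
  obtain ⟨w, hw1, hw2⟩ := hn r hr φ
  have h := key w (by rw [hw1]; exact hφ0) (by rw [hw1]; exact hφ.le)
  rw [hf] at h
  simp only [norm_mul (y _)] at h
  rw [hexp, harg, hw1, hw2] at h
  have h2 : Real.exp (ε * r ^ ρ) ≤
      Real.exp (r ^ ρ * (a * Real.cos (ρ * φ) - ε * Real.sin (ρ * φ))) := by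
    rw [Real.exp_le_exp, mul_comm]
    refine mul_le_mul_of_nonneg_left ?_ (by positivity)
    nlinarith [Real.sin_le_one (ρ * φ)]
  rw [Real.exp_neg, ← div_eq_mul_inv, le_div_iff₀ (Real.exp_pos _)]
  exact (mul_le_mul_of_nonneg_left h2 (norm_nonneg _)).trans h

/-- A solution decaying along the central ray of a Stokes sector is subdominant in it. -/
lemma IsSol.subdominant_of_decay (hd : 2 ≤ d) (hy : IsSol d p.1 p.2 y) {A : ℝ} (j : ℕ)
    (hdec : ∀ r : ℝ, 0 ≤ r → ‖y (r * exp ((2 * Real.pi * j / (d + 2 : ℕ) : ℝ) * I))‖ ≤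
      A * Real.exp (-phase d r)) : Subdominant (d + 2) j y := by
  intro θ hθ
  obtain ⟨K, M, hK, hM, hgrow⟩ := hy.exists_norm_le hd
  set θ₀ : ℝ := 2 * Real.pi * j / (d + 2 : ℕ) with hθ₀
  rw [DirIn, ← hθ₀] at hθ
  have hcast : ((d + 2 : ℕ) : ℝ) = d + 2 := by push_cast; ring
  rw [hcast] at hθ
  obtain ⟨s, hs, hsabs⟩ : ∃ s : ℝ, (s = 1 ∨ s = -1) ∧ θ - θ₀ = s * |θ - θ₀| := by
    rcases le_total 0 (θ - θ₀) with h | h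
    · exact ⟨1, Or.inl rfl, by rw [abs_of_nonneg h, one_mul]⟩
    · exact ⟨-1, Or.inr rfl, by rw [abs_of_nonpos h]; ring⟩
  have hnorm : ∀ t : ℝ, ‖exp (θ₀ * I) * exp (t * I)‖ = 1 := fun t => by
    rw [norm_mul, Complex.norm_exp_ofReal_mul_I, Complex.norm_exp_ofReal_mul_I, one_mul]
  have hpow : (exp (θ₀ * I) * exp ((s * (Real.pi / (d + 2)) : ℝ) * I)) ^ (d + 2) = -1 := by
    rw [mul_pow, ← Complex.exp_nat_mul, ← Complex.exp_nat_mul]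
    have e1 : ((d + 2 : ℕ) : ℂ) * (θ₀ * I) = j * (2 * Real.pi * I) := by
      have : ((d + 2 : ℕ) : ℂ) ≠ 0 := by exact_mod_cast (show d + 2 ≠ 0 by omega)
      rw [hθ₀]; push_cast at this ⊢
      field_simp
    have e2 : ((d + 2 : ℕ) : ℂ) * ((s * (Real.pi / (d + 2)) : ℝ) * I) = s * (Real.pi * I) := by
      have : ((d + 2 : ℕ) : ℂ) ≠ 0 := by exact_mod_cast (show d + 2 ≠ 0 by omega)
      push_cast at this ⊢
      field_simp
    rw [e1, e2, Complex.exp_nat_mul_two_pi_mul_I, one_mul]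
    rcases hs with rfl | rfl
    · simp
    · simp [Complex.exp_neg]
  have h := tendsto_zero_half_sector (d := d) (τ := exp (θ₀ * I)) hs hy.1
    (Complex.norm_exp_ofReal_mul_I _) hK hM
    (K' := 2 * (‖(y 0, deriv y 0)‖ * Real.exp (1 + d * ‖p‖))) (M' := ‖p‖ + 1) (by positivity)
    hgrow hdec (fun r hr => ?_) (abs_nonneg (θ - θ₀)) hθ
  · rw [← hsabs] at h
    refine h.congr fun r => ?_
    rw [← Complex.exp_add]
    congr 3
    push_cast; ring
  · have := hy.norm_ray_le hd (hnorm (s * (Real.pi / (d + 2)))) hr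
    rwa [hpow, neg_add_cancel, norm_zero, zero_mul, zero_add] at this

end Sector

section Wronskian

open MeasureTheory

variable {d : ℕ} {p q : (Fin (d - 1) → ℂ) × ℂ} {y y₁ y₂ : ℂ → ℂ} {τ : ℂ} {A A₁ A₂ B : ℝ}

lemma linear_le_phase (d : ℕ) {r : ℝ} (hr : 0 ≤ r) : (r - 1) / (d + 2) ≤ phase d r := by
  rw [phase]
  gcongr
  rcases le_total r 1 with h | h
  · linarith [Real.rpow_nonneg hr (((d : ℝ) + 2) / 2)]
  · have := Real.rpow_le_rpow_of_exponent_le h (show (1 : ℝ) ≤ ((d : ℝ) + 2) / 2 by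
      linarith [(Nat.cast_nonneg d : (0 : ℝ) ≤ d)])
    rw [Real.rpow_one] at this
    linarith

lemma tendsto_pow_mul_exp_neg_phase (d m : ℕ) :
    Tendsto (fun r : ℝ => (r + 1) ^ m * Real.exp (-phase d r)) atTop (𝓝 0) := by
  have hd : (0 : ℝ) < d + 2 := by positivity
  have h1 := (Real.tendsto_pow_mul_exp_neg_atTop_nhds_zero m).comp
    (tendsto_id.atTop_add (tendsto_const_nhds (x := (1 : ℝ))) |>.atTop_div_const hd)
  have h2 := h1.const_mul (((d : ℝ) + 2) ^ m * Real.exp (2 / (d + 2)))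
  rw [mul_zero] at h2
  refine squeeze_zero' ?_ ?_ h2
  · filter_upwards [eventually_ge_atTop 0] with r hr
    positivity
  · filter_upwards [eventually_ge_atTop 0] with r hr
    have h3 := linear_le_phase d hr
    have e : ((d : ℝ) + 2) ^ m * Real.exp (2 / (d + 2)) *
        (((r + 1) / (d + 2)) ^ m * Real.exp (-((r + 1) / (d + 2)))) =
        (r + 1) ^ m * Real.exp (-((r - 1) / (d + 2))) := by
      have e2 : -((r - 1) / ((d : ℝ) + 2)) = 2 / (d + 2) + -((r + 1) / (d + 2)) := by
        field_simp; ring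
      rw [e2, Real.exp_add, div_pow]
      field_simp
    simp only [Function.comp_apply, id]
    rw [e]
    gcongr

lemma integrableOn_pow_mul_exp_neg_phase (d m : ℕ) :
    IntegrableOn (fun r : ℝ => r ^ m * Real.exp (-phase d r)) (Set.Ioi 0) := by
  have h := integrableOn_rpow_mul_exp_neg_mul_rpow (s := m) (p := ((d : ℝ) + 2) / 2)
    (b := 1 / (d + 2)) (by linarith [(Nat.cast_nonneg m : (0 : ℝ) ≤ m)]) (by positivity)
    (by positivity)
  refine h.congr_fun (fun r _ => ?_) measurableSet_Ioi
  simp only [Real.rpow_natCast, phase]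
  congr 2
  ring

/-- Exponential decay along the ray of direction `τ`. -/
def DecaysOn (d : ℕ) (τ : ℂ) (A : ℝ) (y : ℂ → ℂ) : Prop :=
  ∀ r : ℝ, 0 ≤ r → ‖y (r * τ)‖ ≤ A * Real.exp (-phase d r)

lemma DecaysOn.nonneg (h : DecaysOn d τ A y) : 0 ≤ A := by
  have := (norm_nonneg _).trans (h 0 le_rfl)
  exact le_of_mul_le_mul_right (by linarith) (Real.exp_pos (-phase d 0))

lemma DecaysOn.norm_mul_le (h₁ : DecaysOn d τ A₁ y₁) (h₂ : DecaysOn d τ A₂ y₂) {r : ℝ}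
    (hr : 0 ≤ r) : ‖y₁ (r * τ) * y₂ (r * τ)‖ ≤ A₁ * A₂ * Real.exp (-phase d r) := by
  have h0 := phase_nonneg d hr
  have h1 : Real.exp (-phase d r) ≤ 1 := Real.exp_le_one_iff.2 (by linarith)
  rw [norm_mul]
  calc _ ≤ (A₁ * Real.exp (-phase d r)) * (A₂ * 1) :=
        mul_le_mul (h₁ r hr) ((h₂ r hr).trans (mul_le_mul_of_nonneg_left h1 h₂.nonneg))
          (norm_nonneg _) (mul_nonneg h₁.nonneg (Real.exp_pos _).le)
    _ = _ := by ring

lemma IsSol.norm_deriv_le (hd : 2 ≤ d) (hτ : ‖τ‖ = 1) (hy : IsSol d p.1 p.2 y)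
    (h : DecaysOn d τ A y) {r : ℝ} (hr : 0 ≤ r) :
    ‖deriv y (r * τ)‖ ≤ (3 + d * ‖p‖) * A * ((r + 1) ^ d * Real.exp (-phase d r)) := by
  have hA := h.nonneg
  have hR : 1 ≤ r + 1 := by linarith
  set C := (1 + d * ‖p‖) * (r + 1) ^ d * (A * Real.exp (-phase d r)) with hC
  have hC0 : 0 ≤ C := by positivity
  have h2 : ∀ s ∈ Set.Icc r (r + 1), ‖τ ^ 2 * (Pol d p.1 (s * τ) - p.2) * y (s * τ)‖ ≤ C := by
    intro s hs
    have hs0 : 0 ≤ s := hr.trans hs.1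
    rw [norm_mul, norm_mul, norm_pow, hτ, one_pow, one_mul]
    refine mul_le_mul ?_ ?_ (norm_nonneg _) (by positivity)
    · refine (norm_pot_le hd hR le_rfl (z := s * τ) (by rw [norm_ray hτ hs0]; exact hs.2)).trans ?_
      have : (r + 1) ^ (d - 1) ≤ (r + 1) ^ d := pow_le_pow_right₀ hR (by omega)
      have := mul_le_mul_of_nonneg_left this (show 0 ≤ d * ‖p‖ by positivity)
      linarith
    · refine (h s hs0).trans ?_
      have := phase_mono d hr hs.1
      gcongr
  have h3 : ∀ s ∈ Set.Icc r (r + 1), ‖τ * deriv y (s * τ) - τ * deriv y (r * τ)‖ ≤ C := by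
    intro s hs
    have := (convex_Icc r (r + 1)).norm_image_sub_le_of_norm_hasDerivWithin_le
      (fun x _ => (hy.hasDerivAt_ray_deriv τ x).hasDerivWithinAt) h2 ⟨le_rfl, by linarith⟩ hs
    refine this.trans (mul_le_of_le_one_right hC0 ?_)
    rw [Real.norm_of_nonneg (by linarith [hs.1])]
    linarith [hs.2]
  have h4 := (convex_Icc r (r + 1)).norm_image_sub_le_of_norm_hasDerivWithin_le
    (f := fun s : ℝ => y (s * τ) - s * (τ * deriv y (r * τ)))
    (f' := fun s : ℝ => τ * deriv y (s * τ) - 1 * (τ * deriv y (r * τ)))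
    (fun x _ => ((hasDerivAt_ray τ hy.1 x).sub
      ((Complex.ofRealCLM.hasDerivAt (x := x)).mul_const _)).hasDerivWithinAt)
    (fun s hs => by rw [one_mul]; exact h3 s hs) ⟨le_rfl, by linarith⟩ ⟨by linarith, le_rfl⟩
  have e : τ * deriv y (r * τ) = y ((r + 1 : ℝ) * τ) - y (r * τ) -
      ((y ((r + 1 : ℝ) * τ) - (r + 1 : ℝ) * (τ * deriv y (r * τ))) -
        (y (r * τ) - r * (τ * deriv y (r * τ)))) := by push_cast; ring
  have h5 : ‖deriv y (r * τ)‖ = ‖τ * deriv y (r * τ)‖ := by rw [norm_mul, hτ, one_mul]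
  have h6 : ‖y ((r + 1 : ℝ) * τ)‖ ≤ A * Real.exp (-phase d r) := by
    refine (h _ (by linarith)).trans ?_
    have := phase_mono d hr (show r ≤ r + 1 by linarith)
    gcongr
  have h7 : ‖(r + 1) - r‖ = 1 := by simp
  rw [h7, mul_one] at h4
  rw [h5, e]
  have h8 : A * Real.exp (-phase d r) ≤ A * ((r + 1) ^ d * Real.exp (-phase d r)) := by
    refine mul_le_mul_of_nonneg_left ?_ hA
    exact le_mul_of_one_le_left (Real.exp_pos _).le (one_le_pow₀ hR)
  have h9 : (3 + d * ‖p‖) * A * ((r + 1) ^ d * Real.exp (-phase d r)) =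
      2 * (A * ((r + 1) ^ d * Real.exp (-phase d r))) + C := by rw [hC]; ring
  refine (norm_sub_le _ _).trans ((add_le_add (norm_sub_le _ _) h4).trans ?_)
  have := h r hr
  linarith

lemma DecaysOn.norm_pow_mul_le (hτ : ‖τ‖ = 1) (h₁ : DecaysOn d τ A₁ y₁) (h₂ : DecaysOn d τ A₂ y₂)
    (k : ℕ) {r : ℝ} (hr : 0 ≤ r) :
    ‖((r : ℂ) * τ) ^ k * (y₁ (r * τ) * y₂ (r * τ))‖ ≤
      A₁ * A₂ * (r ^ k * Real.exp (-phase d r)) := by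
  rw [norm_mul, norm_pow, norm_ray hτ hr]
  have := mul_le_mul_of_nonneg_left (h₁.norm_mul_le h₂ hr) (pow_nonneg hr k)
  linarith

lemma DecaysOn.integrableOn_pow_mul (hτ : ‖τ‖ = 1) (c₁ : Continuous y₁) (c₂ : Continuous y₂)
    (h₁ : DecaysOn d τ A₁ y₁) (h₂ : DecaysOn d τ A₂ y₂) (k : ℕ) :
    IntegrableOn (fun r : ℝ => ((r : ℂ) * τ) ^ k * (y₁ (r * τ) * y₂ (r * τ))) (Set.Ioi 0) := by
  refine Integrable.mono' ((integrableOn_pow_mul_exp_neg_phase d k).const_mul (A₁ * A₂)) ?_ ?_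
  · exact (by fun_prop : Continuous fun r : ℝ =>
      ((r : ℂ) * τ) ^ k * (y₁ (r * τ) * y₂ (r * τ))).aestronglyMeasurable
  · filter_upwards [ae_restrict_mem measurableSet_Ioi] with r hr
    exact h₁.norm_pow_mul_le hτ h₂ k (le_of_lt hr)

/-- The moments of a product of two functions along a ray. -/
noncomputable def moment (τ : ℂ) (y₁ y₂ : ℂ → ℂ) (k : ℕ) : ℂ :=
  ∫ r in Set.Ioi (0 : ℝ), ((r : ℂ) * τ) ^ k * (y₁ (r * τ) * y₂ (r * τ))

/-- The linear functional of the parameters governing the variation of the subdominant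
solution. -/
noncomputable def pairing (d : ℕ) (τ : ℂ) (y₁ y₂ : ℂ → ℂ) : ((Fin (d - 1) → ℂ) × ℂ) →L[ℂ] ℂ :=
  -τ • ((∑ i : Fin (d - 1), moment τ y₁ y₂ (i + 1) •
    (ContinuousLinearMap.proj i).comp (ContinuousLinearMap.fst ℂ (Fin (d - 1) → ℂ) ℂ)) -
    moment τ y₁ y₂ 0 • ContinuousLinearMap.snd ℂ (Fin (d - 1) → ℂ) ℂ)

lemma pairing_apply (d : ℕ) (τ : ℂ) (y₁ y₂ : ℂ → ℂ) (q : (Fin (d - 1) → ℂ) × ℂ) :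
    pairing d τ y₁ y₂ q = -τ * ((∑ i : Fin (d - 1), moment τ y₁ y₂ (i + 1) * q.1 i) -
      moment τ y₁ y₂ 0 * q.2) := by
  simp [pairing]

lemma pairing_eq_integral (hτ : ‖τ‖ = 1) (c₁ : Continuous y₁) (c₂ : Continuous y₂)
    (h₁ : DecaysOn d τ A₁ y₁) (h₂ : DecaysOn d τ A₂ y₂) (q : (Fin (d - 1) → ℂ) × ℂ) :
    pairing d τ y₁ y₂ q =
      -τ * ∫ r in Set.Ioi (0 : ℝ), lowerPart d q (r * τ) * (y₁ (r * τ) * y₂ (r * τ)) := by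
  have hI := DecaysOn.integrableOn_pow_mul hτ c₁ c₂ h₁ h₂
  have e : ∀ r : ℝ, lowerPart d q (r * τ) * (y₁ (r * τ) * y₂ (r * τ)) =
      (∑ i : Fin (d - 1), ((r : ℂ) * τ) ^ ((i : ℕ) + 1) * (y₁ (r * τ) * y₂ (r * τ)) * q.1 i) -
        ((r : ℂ) * τ) ^ 0 * (y₁ (r * τ) * y₂ (r * τ)) * q.2 := fun r => by
    rw [lowerPart, sub_mul, Finset.sum_mul, pow_zero, one_mul]
    congr 1
    · exact Finset.sum_congr rfl fun i _ => by ring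
    · ring
  simp_rw [pairing_apply, moment, e]
  rw [integral_sub (integrable_finsetSum _ fun i _ => (hI _).mul_const _) ((hI 0).mul_const _),
    integral_finsetSum _ fun i _ => (hI _).mul_const _, integral_mul_const]
  simp_rw [integral_mul_const]

/-- The Wronskian of two decaying solutions for different parameters. -/
lemma IsSol.wronskian_eq (hd : 2 ≤ d) (hτ : ‖τ‖ = 1) (s₁ : IsSol d p.1 p.2 y₁)
    (s₂ : IsSol d q.1 q.2 y₂) (h₁ : DecaysOn d τ A₁ y₁) (h₂ : DecaysOn d τ A₂ y₂) :
    y₁ 0 * deriv y₂ 0 - deriv y₁ 0 * y₂ 0 = pairing d τ y₁ y₂ (q - p) := by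
  have hW : ∀ r : ℝ, HasDerivAt
      (fun r : ℝ => y₁ (r * τ) * (τ * deriv y₂ (r * τ)) - τ * deriv y₁ (r * τ) * y₂ (r * τ))
      (τ ^ 2 * (lowerPart d (q - p) (r * τ) * (y₁ (r * τ) * y₂ (r * τ)))) r := fun r => by
    refine (((hasDerivAt_ray τ s₁.1 r).mul (s₂.hasDerivAt_ray_deriv τ r)).sub
      ((s₁.hasDerivAt_ray_deriv τ r).mul (hasDerivAt_ray τ s₂.1 r))).congr_deriv ?_
    rw [lowerPart_sub, Pol_sub_eq, Pol_sub_eq]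
    ring
  have hint : IntegrableOn (fun r : ℝ =>
      lowerPart d (q - p) (r * τ) * (y₁ (r * τ) * y₂ (r * τ))) (Set.Ioi 0) := by
    have hI := DecaysOn.integrableOn_pow_mul hτ s₁.1.continuous s₂.1.continuous h₁ h₂
    have := (integrable_finsetSum Finset.univ fun (i : Fin (d - 1)) _ =>
      (hI ((i : ℕ) + 1)).mul_const ((q - p).1 i)).sub ((hI 0).mul_const (q - p).2)
    refine this.congr (Eventually.of_forall fun r => ?_)
    simp only [Pi.sub_apply, lowerPart, sub_mul, Finset.sum_mul, pow_zero, one_mul]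
    congr 1
    · exact Finset.sum_congr rfl fun i _ => by ring
    · ring
  have hbd : ∀ r : ℝ, 0 ≤ r → ‖y₁ (r * τ) * (τ * deriv y₂ (r * τ)) -
      τ * deriv y₁ (r * τ) * y₂ (r * τ)‖ ≤ (A₁ * ((3 + d * ‖q‖) * A₂) +
        (3 + d * ‖p‖) * A₁ * A₂) * ((r + 1) ^ d * Real.exp (-phase d r)) := fun r hr => by
    have hE : Real.exp (-phase d r) ≤ 1 :=
      Real.exp_le_one_iff.2 (by linarith [phase_nonneg d hr])
    have b1 : ‖y₁ (r * τ)‖ ≤ A₁ := (h₁ r hr).trans (mul_le_of_le_one_right h₁.nonneg hE)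
    have b2 : ‖y₂ (r * τ)‖ ≤ A₂ := (h₂ r hr).trans (mul_le_of_le_one_right h₂.nonneg hE)
    have n1 := h₁.nonneg
    have n2 := h₂.nonneg
    refine (norm_sub_le _ _).trans ?_
    rw [norm_mul, norm_mul, norm_mul, norm_mul, hτ, one_mul, one_mul, add_mul]
    refine add_le_add ?_ ?_
    · rw [mul_assoc A₁]
      exact mul_le_mul b1 (s₂.norm_deriv_le hd hτ h₂ hr) (norm_nonneg _) n1
    · rw [mul_right_comm]
      exact mul_le_mul (s₁.norm_deriv_le hd hτ h₁ hr) b2 (norm_nonneg _) (by positivity)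
  have hlim : Tendsto (fun r : ℝ => y₁ (r * τ) * (τ * deriv y₂ (r * τ)) -
      τ * deriv y₁ (r * τ) * y₂ (r * τ)) atTop (𝓝 0) := by
    have := (tendsto_pow_mul_exp_neg_phase d d).const_mul (A₁ * ((3 + d * ‖q‖) * A₂) +
        (3 + d * ‖p‖) * A₁ * A₂)
    rw [mul_zero] at this
    refine squeeze_zero_norm' ?_ this
    filter_upwards [eventually_ge_atTop 0] with r hr using hbd r hr
  have h := integral_Ioi_of_hasDerivAt_of_tendsto' (fun r _ => hW r) (hint.const_mul _) hlim
  rw [pairing_eq_integral hτ s₁.1.continuous s₂.1.continuous h₁ h₂]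
  rw [integral_const_mul] at h
  simp only [Complex.ofReal_zero, zero_mul] at h
  have hτ0 : τ ≠ 0 := by rintro rfl; simp at hτ
  apply mul_left_cancel₀ hτ0
  linear_combination h

end Wronskian

section Family

open MeasureTheory

variable {d : ℕ} {p p₀ q : (Fin (d - 1) → ℂ) × ℂ} {y y₁ y₂ : ℂ → ℂ} {τ : ℂ} {A B : ℝ}

/-- The solution with given Cauchy data at the origin. -/
noncomputable def sol (d : ℕ) (p : (Fin (d - 1) → ℂ) × ℂ) (v : ℂ × ℂ) : ℂ → ℂ :=
  (exists_isSol d p v).choose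

lemma isSol_sol (d : ℕ) (p : (Fin (d - 1) → ℂ) × ℂ) (v : ℂ × ℂ) : IsSol d p.1 p.2 (sol d p v) :=
  (exists_isSol d p v).choose_spec.1

lemma sol_zero (d : ℕ) (p : (Fin (d - 1) → ℂ) × ℂ) (v : ℂ × ℂ) : sol d p v 0 = v.1 :=
  congrArg Prod.fst (exists_isSol d p v).choose_spec.2

lemma deriv_sol_zero (d : ℕ) (p : (Fin (d - 1) → ℂ) × ℂ) (v : ℂ × ℂ) :
    deriv (sol d p v) 0 = v.2 :=
  congrArg Prod.snd (exists_isSol d p v).choose_spec.2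

lemma continuous_sol (d : ℕ) (p : (Fin (d - 1) → ℂ) × ℂ) (v : ℂ × ℂ) : Continuous (sol d p v) :=
  (isSol_sol d p v).1.continuous

lemma IsSol.eq_sol (hd : 2 ≤ d) (hy : IsSol d p.1 p.2 y) : y = sol d p (y 0, deriv y 0) := by
  funext z
  have h := hy.eq_lincomb hd (isSol_sol d p (y 0, deriv y 0)) (isSol_sol d p (y 0, deriv y 0))
    (a := 1) (b := 0) (by simp [sol_zero]) (by simp [deriv_sol_zero]) z
  simpa using h

lemma sol_smul (hd : 2 ≤ d) (p : (Fin (d - 1) → ℂ) × ℂ) (c : ℂ) (v : ℂ × ℂ) (z : ℂ) :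
    sol d p (c • v) z = c * sol d p v z := by
  have h := (isSol_sol d p (c • v)).eq_lincomb hd (isSol_sol d p v) (isSol_sol d p v)
    (a := c) (b := 0) (by simp [sol_zero]) (by simp [deriv_sol_zero]) z
  simpa using h

/-- Continuous dependence of solutions on the parameters and the Cauchy data. -/
lemma tendsto_sol (hd : 2 ≤ d) {v : (Fin (d - 1) → ℂ) × ℂ → ℂ × ℂ} (hv : ContinuousAt v p) (z : ℂ) :
    Tendsto (fun q => sol d q (v q) z) (𝓝 p) (𝓝 (sol d p (v p) z)) := by
  set R : ℝ := ‖z‖ + 1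
  have hR : 1 ≤ R := by simp [R]
  have hR0 : (R : ℂ) ≠ 0 := by exact_mod_cast (show R ≠ 0 by linarith)
  set τ : ℂ := z / R with hτ
  have hz : (R : ℂ) * τ = z := mul_div_cancel₀ _ hR0
  have hτ1 : ‖τ‖ ≤ 1 := by
    rw [hτ, norm_div, Complex.norm_real, Real.norm_of_nonneg (by linarith), div_le_one (by linarith)]
    simp [R]
  set B := ‖p‖ + 1
  set K := R ^ d + d * B * R ^ (d - 1) with hK
  have hK1 : 1 ≤ K := one_le_pot_bound d hR (by positivity)
  set S := ‖v p‖ * Real.exp (K * R) with hS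
  have hs : ∀ r ∈ Set.Icc 0 R, ‖sol d p (v p) (r * τ)‖ ≤ S := fun r hr => by
    have := (isSol_sol d p (v p)).norm_pair_le hd hτ1 hR (show ‖p‖ ≤ B by simp [B]) hr
    rw [sol_zero, deriv_sol_zero] at this
    exact (norm_fst_le (sol d p (v p) (r * τ), deriv (sol d p (v p)) (r * τ))).trans this
  have hle : ∀ᶠ q in 𝓝 p, ‖sol d q (v q) z - sol d p (v p) z‖ ≤
      gronwallBound ‖v q - v p‖ K (d * ‖q - p‖ * R ^ (d - 1) * S) R := by
    filter_upwards [Metric.ball_mem_nhds p one_pos] with q hq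
    have hqB : ‖q‖ ≤ B := by
      have : ‖q - p‖ < 1 := by rwa [← dist_eq_norm]
      have h2 := norm_add_le p (q - p)
      rw [add_sub_cancel] at h2
      simp only [B]; linarith
    have hdiff := ((isSol_sol d q (v q)).1).sub (isSol_sol d p (v p)).1
    have hdd : ∀ x, deriv (sol d q (v q) - sol d p (v p)) x =
        deriv (sol d q (v q)) x - deriv (sol d p (v p)) x := fun x =>
      deriv_sub ((isSol_sol d q (v q)).1 x) ((isSol_sol d p (v p)).1 x)
    have hddd : ∀ x, deriv (deriv (sol d q (v q) - sol d p (v p))) x =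
        (Pol d q.1 x - q.2) * (sol d q (v q) - sol d p (v p)) x +
          lowerPart d (q - p) x * sol d p (v p) x := fun x => by
      have e : deriv (sol d q (v q) - sol d p (v p)) =
        deriv (sol d q (v q)) - deriv (sol d p (v p)) := funext hdd
      rw [e, deriv_sub (differentiable_deriv_of_entire (isSol_sol d q (v q)).1 x)
        (differentiable_deriv_of_entire (isSol_sol d p (v p)).1 x), (isSol_sol d q (v q)).2,
        (isSol_sol d p (v p)).2, Pol_sub_eq, Pol_sub_eq, lowerPart_sub, Pi.sub_apply]
      ring
    have h := norm_pair_le_gronwallBound hdiff hτ1 (R := R) (K := K)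
      (η := d * ‖q - p‖ * R ^ (d - 1) * S) hK1 (by positivity) (fun r hr => ?_) R
      ⟨by linarith, le_rfl⟩
    · rw [hz, hdd 0, Pi.sub_apply, Pi.sub_apply, sol_zero, sol_zero, deriv_sol_zero,
        deriv_sol_zero] at h
      have h2 := norm_fst_le ((sol d q (v q) z - sol d p (v p) z),
        deriv (sol d q (v q) - sol d p (v p)) z)
      exact h2.trans h
    · have hrz : ‖(r : ℂ) * τ‖ ≤ R := by
        rw [norm_mul, Complex.norm_real, Real.norm_of_nonneg hr.1]
        nlinarith [hr.1, hr.2, norm_nonneg τ]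
      rw [hddd]
      refine (norm_add_le _ _).trans (add_le_add ?_ ?_)
      · rw [norm_mul]
        exact mul_le_mul_of_nonneg_right (norm_pot_le hd hR hqB hrz) (norm_nonneg _)
      · rw [norm_mul]
        exact mul_le_mul (norm_lowerPart_le (by omega) _ hR hrz) (hs r ⟨hr.1, hr.2.le⟩)
          (norm_nonneg _) (by positivity)
  rw [tendsto_iff_norm_sub_tendsto_zero]
  refine squeeze_zero' (Eventually.of_forall fun _ => norm_nonneg _) hle ?_
  simp only [gronwallBound_of_K_ne_0 (show K ≠ 0 by linarith)]
  have h1 : Tendsto (fun q => ‖v q - v p‖) (𝓝 p) (𝓝 0) :=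
    tendsto_iff_norm_sub_tendsto_zero.1 hv
  have h2 : Tendsto (fun q => ‖q - p‖) (𝓝 p) (𝓝 0) :=
    tendsto_iff_norm_sub_tendsto_zero.1 tendsto_id
  have := (h1.mul_const (Real.exp (K * R))).add
    ((((h2.const_mul (d : ℝ)).mul_const (R ^ (d - 1)) |>.mul_const S).div_const K).mul_const
      (Real.exp (K * R) - 1))
  simpa using this

/-- The pairing of a convergent family of uniformly decaying functions converges. -/
lemma tendsto_pairing {ι : Type*} {l : Filter ι} [l.IsCountablyGenerated] (hτ : ‖τ‖ = 1)
    {Y Z : ι → ℂ → ℂ} {y z : ℂ → ℂ} (hcY : ∀ i, Continuous (Y i)) (hcZ : ∀ i, Continuous (Z i))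
    (hY : ∀ᶠ i in l, DecaysOn d τ A (Y i)) (hZ : ∀ᶠ i in l, DecaysOn d τ B (Z i))
    (hYy : ∀ w, Tendsto (fun i => Y i w) l (𝓝 (y w)))
    (hZz : ∀ w, Tendsto (fun i => Z i w) l (𝓝 (z w))) :
    Tendsto (fun i => pairing d τ (Y i) (Z i)) l (𝓝 (pairing d τ y z)) := by
  have hm : ∀ k, Tendsto (fun i => moment τ (Y i) (Z i) k) l (𝓝 (moment τ y z k)) := fun k => by
    refine tendsto_integral_filter_of_dominated_convergence
      (fun r => A * B * (r ^ k * Real.exp (-phase d r))) ?_ ?_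
      ((integrableOn_pow_mul_exp_neg_phase d k).const_mul _) ?_
    · refine Eventually.of_forall fun i => Continuous.aestronglyMeasurable ?_
      have := hcY i
      have := hcZ i
      fun_prop
    · filter_upwards [hY, hZ] with i h1 h2
      filter_upwards [ae_restrict_mem measurableSet_Ioi] with r hr
      exact h1.norm_pow_mul_le hτ h2 k (le_of_lt hr)
    · exact Eventually.of_forall fun r => ((hYy _).mul (hZz _)).const_mul _
  exact ((tendsto_finsetSum _ fun i _ => (hm _).smul_const _).sub ((hm 0).smul_const _)).const_smul _

/-- Carathéodory's criterion for differentiability. -/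
lemma hasFDerivAt_of_eq_apply_sub {E F : Type*} [NormedAddCommGroup E] [NormedSpace ℂ E]
    [NormedAddCommGroup F] [NormedSpace ℂ F] {f : E → F} {x : E} {L : E → E →L[ℂ] F}
    {L₀ : E →L[ℂ] F} (hL : Tendsto L (𝓝 x) (𝓝 L₀)) (h : ∀ᶠ y in 𝓝 x, f y - f x = L y (y - x)) :
    HasFDerivAt f L₀ x := by
  rw [hasFDerivAt_iff_isLittleO]
  have h1 : (fun y => ‖L y - L₀‖) =o[𝓝 x] fun _ => (1 : ℝ) :=
    (Asymptotics.isLittleO_one_iff ℝ).2 (tendsto_iff_norm_sub_tendsto_zero.1 hL)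
  have h2 := h1.mul_isBigO (Asymptotics.isBigO_refl (fun y => ‖y - x‖) (𝓝 x))
  simp only [one_mul] at h2
  refine (Asymptotics.IsBigO.of_bound 1 ?_).trans_isLittleO h2.of_norm_right
  filter_upwards [h] with y hy
  rw [hy, ← sub_apply, one_mul]
  refine ((L y - L₀).le_opNorm _).trans (le_of_eq ?_)
  rw [Real.norm_of_nonneg (by positivity)]

/-- The subdominant solutions near a given parameter, normalised by their Cauchy data. -/
theorem exists_local_family (hd : 2 ≤ d) (hτ : τ ^ (d + 2) = 1) {v w : ℂ × ℂ}
    (hvw : v.1 * w.2 - v.2 * w.1 = 1) (hdec : DecaysOn d τ A (sol d p₀ v)) :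
    ∃ (δ A' : ℝ) (s : (Fin (d - 1) → ℂ) × ℂ → ℂ), 0 < δ ∧ s p₀ = 0 ∧
      (∀ p ∈ Metric.ball p₀ δ, DecaysOn d τ A' (sol d p (v + s p • w))) ∧
      (∀ p ∈ Metric.ball p₀ δ, HasFDerivAt s
        (pairing d τ (sol d p (v + s p • w)) (sol d p (v + s p • w))) p) ∧
      ContinuousAt (fun p => pairing d τ (sol d p (v + s p • w)) (sol d p (v + s p • w))) p₀ := by
  have hn := norm_eq_one_of_pow hτ
  set B := ‖p₀‖ + 1
  set C := decayConst d B
  have hC : 0 < C := decayConst_pos d B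
  have hA := hdec.nonneg
  -- a bound for the pairing
  obtain ⟨N, hN0, hN⟩ : ∃ N : ℝ, 0 ≤ N ∧ ∀ (A₁ A₂ : ℝ) (y₁ y₂ : ℂ → ℂ), Continuous y₁ → Continuous y₂ →
      DecaysOn d τ A₁ y₁ → DecaysOn d τ A₂ y₂ → ‖pairing d τ y₁ y₂‖ ≤ N * (A₁ * A₂) := by
    set J : ℕ → ℝ := fun k => ∫ r in Set.Ioi (0 : ℝ), r ^ k * Real.exp (-phase d r)
    have hJ : ∀ k, 0 ≤ J k := fun k =>
      setIntegral_nonneg measurableSet_Ioi fun r hr => by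
        have : 0 < r := hr
        positivity
    have hm : ∀ (A₁ A₂ : ℝ) (y₁ y₂ : ℂ → ℂ), DecaysOn d τ A₁ y₁ → DecaysOn d τ A₂ y₂ → ∀ k,
        ‖moment τ y₁ y₂ k‖ ≤ J k * (A₁ * A₂) := fun A₁ A₂ y₁ y₂ h₁ h₂ k => by
      have := norm_integral_le_of_norm_le ((integrableOn_pow_mul_exp_neg_phase d k).const_mul (A₁ * A₂))
        (f := fun r : ℝ => ((r : ℂ) * τ) ^ k * (y₁ (r * τ) * y₂ (r * τ))) (by
          filter_upwards [ae_restrict_mem measurableSet_Ioi] with r hr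
          exact h₁.norm_pow_mul_le hn h₂ k (le_of_lt hr))
      rw [integral_const_mul] at this
      rw [mul_comm]
      exact this
    refine ⟨(∑ i : Fin (d - 1), J (i + 1)) + J 0, add_nonneg (Finset.sum_nonneg fun i _ => hJ _) (hJ 0),
      fun A₁ A₂ y₁ y₂ c₁ c₂ h₁ h₂ => ?_⟩
    have h12 := mul_nonneg h₁.nonneg h₂.nonneg
    refine ContinuousLinearMap.opNorm_le_bound _
      (mul_nonneg (add_nonneg (Finset.sum_nonneg fun i _ => hJ _) (hJ 0)) h12) fun x => ?_
    rw [pairing_apply, norm_mul, norm_neg, hn, one_mul, add_mul, add_mul]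
    refine (norm_sub_le _ _).trans (add_le_add ?_ ?_)
    · refine (norm_sum_le _ _).trans ?_
      rw [Finset.sum_mul, Finset.sum_mul]
      refine Finset.sum_le_sum fun i _ => ?_
      rw [norm_mul]
      exact mul_le_mul (hm _ _ _ _ h₁ h₂ _) ((norm_le_pi_norm _ i).trans (norm_fst_le x))
        (norm_nonneg _) (mul_nonneg (hJ _) h12)
    · rw [norm_mul]
      exact mul_le_mul (hm _ _ _ _ h₁ h₂ _) (norm_snd_le x) (norm_nonneg _) (mul_nonneg (hJ _) h12)
  have hv0 : v ≠ 0 := fun h => by simp [h] at hvw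
  have hvn : 0 < ‖v‖ := norm_pos_iff.2 hv0
  set δ : ℝ := min 1 (1 / (2 * (N * (A * C) * ‖w‖ + 1))) with hδ
  have hδ0 : 0 < δ := by positivity
  have hex : ∀ p ∈ Metric.ball p₀ δ, ∃ s : ℂ, DecaysOn d τ (2 * ‖v‖ * C) (sol d p (v + s • w)) := by
    intro p hp
    have hpn : ‖p - p₀‖ < δ := by rwa [← dist_eq_norm]
    have hpB : ‖p‖ ≤ B := by
      have h2 := norm_add_le p₀ (p - p₀)
      rw [add_sub_cancel] at h2
      simp only [B]; linarith [min_le_left 1 (1 / (2 * (N * (A * C) * ‖w‖ + 1)))]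
    obtain ⟨y, hy, hy1, hyd⟩ := exists_decaying hd hpB hτ
    have hW := (isSol_sol d p₀ v).wronskian_eq hd hn hy hdec hyd
    rw [sol_zero, deriv_sol_zero] at hW
    set b := v.1 * deriv y 0 - v.2 * y 0 with hb
    set a := y 0 * w.2 - deriv y 0 * w.1 with ha
    have e0 : y 0 = a * v.1 + b * w.1 := by
      rw [ha, hb]; linear_combination (-(y 0)) * hvw
    have e1 : deriv y 0 = a * v.2 + b * w.2 := by
      rw [ha, hb]; linear_combination (-(deriv y 0)) * hvw
    have e : (y 0, deriv y 0) = a • v + b • w := Prod.ext e0 e1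
    have hb1 : ‖b‖ ≤ N * (A * C) * ‖p - p₀‖ := by
      rw [hW]
      refine (ContinuousLinearMap.le_opNorm _ _).trans ?_
      exact mul_le_mul_of_nonneg_right
        (hN _ _ _ _ (continuous_sol d p₀ v) hy.1.continuous hdec hyd) (norm_nonneg _)
    have hb2 : ‖b‖ * ‖w‖ ≤ 1 / 2 := by
      have h1 : 0 ≤ N * (A * C) * ‖w‖ := by positivity
      have h2 : ‖p - p₀‖ ≤ 1 / (2 * (N * (A * C) * ‖w‖ + 1)) := hpn.le.trans (min_le_right _ _)
      rw [le_div_iff₀ (by positivity)] at h2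
      have h3 := mul_le_mul_of_nonneg_right hb1 (norm_nonneg w)
      nlinarith [norm_nonneg (p - p₀)]
    have ha1 : 1 ≤ 2 * ‖v‖ * ‖a‖ := by
      have := norm_add_le (a • v) (b • w)
      rw [← e, hy1, norm_smul, norm_smul] at this
      linarith
    have ha0 : a ≠ 0 := fun h => by rw [h, norm_zero, mul_zero] at ha1; linarith
    refine ⟨b / a, fun r hr => ?_⟩
    have e2 : v + (b / a) • w = a⁻¹ • (y 0, deriv y 0) := by
      rw [e, smul_add, smul_smul, smul_smul, inv_mul_cancel₀ ha0, one_smul, div_eq_inv_mul]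
    rw [e2, sol_smul hd, ← hy.eq_sol hd, norm_mul, norm_inv, mul_assoc]
    refine mul_le_mul ?_ (hyd r hr) (norm_nonneg _) (by positivity)
    rw [inv_le_iff_one_le_mul₀ (norm_pos_iff.2 ha0)]
    exact ha1
  classical
  choose! s hs using hex
  have hp₀ : p₀ ∈ Metric.ball p₀ δ := Metric.mem_ball_self hδ0
  set A' := 2 * ‖v‖ * C
  set Y : (Fin (d - 1) → ℂ) × ℂ → ℂ → ℂ := fun p => sol d p (v + s p • w) with hY
  have hYc : ∀ p, Continuous (Y p) := fun p => continuous_sol _ _ _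
  have hdet : ∀ a b : ℂ, (v + a • w).1 * (v + b • w).2 - (v + a • w).2 * (v + b • w).1 = b - a :=
    fun a b => by
      simp only [Prod.fst_add, Prod.snd_add, Prod.smul_fst, Prod.smul_snd, smul_eq_mul]
      linear_combination (b - a) * hvw
  have hsub : ∀ p ∈ Metric.ball p₀ δ, ∀ q ∈ Metric.ball p₀ δ,
      s q - s p = pairing d τ (Y p) (Y q) (q - p) := fun p hp q hq => by
    have := (isSol_sol d p (v + s p • w)).wronskian_eq hd hn (isSol_sol d q (v + s q • w))
      (hs p hp) (hs q hq)
    rw [sol_zero, deriv_sol_zero, sol_zero, deriv_sol_zero, hdet] at this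
    exact this
  have hs0 : s p₀ = 0 := by
    have := (isSol_sol d p₀ v).wronskian_eq hd hn (isSol_sol d p₀ (v + s p₀ • w)) hdec (hs p₀ hp₀)
    have h2 := hdet 0 (s p₀)
    rw [sol_zero, deriv_sol_zero, sol_zero, deriv_sol_zero, sub_self, map_zero] at this
    simp only [zero_smul, add_zero] at h2
    rw [h2, sub_zero] at this
    exact this
  have hball : ∀ p ∈ Metric.ball p₀ δ, Metric.ball p₀ δ ∈ 𝓝 p := fun p hp =>
    Metric.isOpen_ball.mem_nhds hp
  have hscont : ∀ p ∈ Metric.ball p₀ δ, ContinuousAt s p := fun p hp => by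
    rw [ContinuousAt, tendsto_iff_norm_sub_tendsto_zero]
    have h2 : Tendsto (fun q => N * (A' * A') * ‖q - p‖) (𝓝 p) (𝓝 0) := by
      have h2 : Tendsto (fun q => ‖q - p‖) (𝓝 p) (𝓝 0) :=
        tendsto_iff_norm_sub_tendsto_zero.1 tendsto_id
      simpa using h2.const_mul (N * (A' * A'))
    refine squeeze_zero' (Eventually.of_forall fun _ => norm_nonneg _) ?_ h2
    filter_upwards [hball p hp] with q hq
    rw [hsub p hp q hq]
    exact (ContinuousLinearMap.le_opNorm _ _).trans (mul_le_mul_of_nonneg_right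
      (hN _ _ _ _ (hYc p) (hYc q) (hs p hp) (hs q hq)) (norm_nonneg _))
  have hYt : ∀ p ∈ Metric.ball p₀ δ, ∀ z, Tendsto (fun q => Y q z) (𝓝 p) (𝓝 (Y p z)) :=
    fun p hp z => tendsto_sol hd
      (continuousAt_const.add ((hscont p hp).smul continuousAt_const)) z
  have hYdec : ∀ p ∈ Metric.ball p₀ δ, ∀ᶠ q in 𝓝 p, DecaysOn d τ A' (Y q) := fun p hp => by
    filter_upwards [hball p hp] with q hq using hs q hq
  refine ⟨δ, A', s, hδ0, hs0, hs, fun p hp => ?_, ?_⟩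
  · refine hasFDerivAt_of_eq_apply_sub (L := fun q => pairing d τ (Y p) (Y q)) ?_ ?_
    · exact tendsto_pairing hn (fun _ => hYc p) hYc (Eventually.of_forall fun _ => hs p hp)
        (hYdec p hp) (fun _ => tendsto_const_nhds) (hYt p hp)
    · filter_upwards [hball p hp] with q hq using hsub p hp q hq
  · exact tendsto_pairing hn hYc hYc (hYdec p₀ hp₀) (hYdec p₀ hp₀) (hYt p₀ hp₀) (hYt p₀ hp₀)

end Family

section Moments

open MeasureTheory Polynomial

variable {d : ℕ} {p : (Fin (d - 1) → ℂ) × ℂ} {y : ℂ → ℂ} {τ : ℂ} {A : ℝ}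

/-- The linear functional on polynomials determined by the moments of `y ^ 2` along a ray. -/
noncomputable def momentMap (τ : ℂ) (y : ℂ → ℂ) : ℂ[X] →ₗ[ℂ] ℂ :=
  Polynomial.lsum fun m => LinearMap.toSpanSingleton ℂ ℂ (moment τ y y m)

lemma momentMap_monomial (τ : ℂ) (y : ℂ → ℂ) (m : ℕ) (a : ℂ) :
    momentMap τ y (monomial m a) = a * moment τ y y m := by
  simp [momentMap, Polynomial.lsum_apply, Polynomial.sum_monomial_index]

lemma integrableOn_eval_mul (hτ : ‖τ‖ = 1) (hc : Continuous y) (h : DecaysOn d τ A y)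
    (f : ℂ[X]) :
    IntegrableOn (fun r : ℝ => f.eval (r * τ) * (y (r * τ) * y (r * τ))) (Set.Ioi 0) := by
  induction f using Polynomial.induction_on' with
  | add f g hf hg =>
    simp only [eval_add, add_mul]
    exact hf.add hg
  | monomial m a =>
    refine ((DecaysOn.integrableOn_pow_mul hτ hc hc h h m).const_mul a).congr
      (Eventually.of_forall fun r => ?_)
    simp only [eval_monomial]
    ring

lemma momentMap_eq_integral (hτ : ‖τ‖ = 1) (hc : Continuous y) (h : DecaysOn d τ A y)
    (f : ℂ[X]) :
    momentMap τ y f =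
      ∫ r in Set.Ioi (0 : ℝ), f.eval (r * τ) * (y (r * τ) * y (r * τ)) := by
  induction f using Polynomial.induction_on' with
  | add f g hf hg =>
    rw [map_add, hf, hg, ← integral_add (integrableOn_eval_mul hτ hc h f)
      (integrableOn_eval_mul hτ hc h g)]
    simp only [eval_add, add_mul]
  | monomial m a =>
    rw [momentMap_monomial, moment, ← integral_const_mul]
    simp only [eval_monomial, mul_assoc]

lemma tendsto_eval_mul_zero (hτ : ‖τ‖ = 1) {g : ℝ → ℂ} {K : ℝ} {m : ℕ}
    (hg : ∀ r, 0 ≤ r → ‖g r‖ ≤ K * ((r + 1) ^ m * Real.exp (-phase d r))) (f : ℂ[X]) :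
    Tendsto (fun r : ℝ => f.eval (r * τ) * g r) atTop (𝓝 0) := by
  induction f using Polynomial.induction_on' with
  | add f₁ f₂ h₁ h₂ =>
    simp only [eval_add, add_mul]
    simpa using h₁.add h₂
  | monomial l a =>
    have h := (tendsto_pow_mul_exp_neg_phase d (l + m)).const_mul (‖a‖ * K)
    rw [mul_zero] at h
    refine squeeze_zero_norm' ?_ h
    filter_upwards [eventually_ge_atTop 0] with r hr
    rw [eval_monomial, norm_mul, norm_mul, norm_pow, norm_ray hτ hr]
    have h1 : r ^ l ≤ (r + 1) ^ l := by gcongr; linarith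
    calc ‖a‖ * r ^ l * ‖g r‖ ≤ ‖a‖ * (r + 1) ^ l *
          (K * ((r + 1) ^ m * Real.exp (-phase d r))) :=
          mul_le_mul (mul_le_mul_of_nonneg_left h1 (norm_nonneg a)) (hg r hr) (norm_nonneg _)
            (by positivity)
      _ = _ := by rw [pow_add]; ring

/-- The third-order operator annihilated, up to exact derivatives, by squares of solutions. -/
noncomputable def symSquareOp (d : ℕ) (p : (Fin (d - 1) → ℂ) × ℂ) (V : ℂ[X]) : ℂ[X] :=
  derivative (derivative (derivative V)) - 4 * (potPoly d p * derivative V) -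
    2 * (derivative (potPoly d p) * V)

/-- The boundary form of `symSquareOp`. -/
noncomputable def symSquareForm (d : ℕ) (p : (Fin (d - 1) → ℂ) × ℂ) (V : ℂ[X]) (y : ℂ → ℂ)
    (z : ℂ) : ℂ :=
  (derivative (derivative V) - 2 * (potPoly d p * V)).eval z * (y z * y z) +
    (-2 * derivative V).eval z * (y z * deriv y z) +
    (2 * V).eval z * (deriv y z * deriv y z)

lemma hasDerivAt_symSquareForm (hy : IsSol d p.1 p.2 y) (V : ℂ[X]) (z : ℂ) :
    HasDerivAt (symSquareForm d p V y) ((symSquareOp d p V).eval z * (y z * y z)) z := by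
  have h0 := (hy.1 z).hasDerivAt
  have h1 := ((differentiable_deriv_of_entire hy.1) z).hasDerivAt
  rw [hy.2, ← eval_potPoly] at h1
  have e := (((derivative (derivative V) - 2 * (potPoly d p * V)).hasDerivAt z).mul
    (h0.mul h0)).add (((-2 * derivative V).hasDerivAt z).mul (h0.mul h1)) |>.add
    (((2 * V).hasDerivAt z).mul (h1.mul h1))
  refine e.congr_deriv ?_
  simp only [symSquareOp, derivative_sub, derivative_mul, derivative_neg, derivative_ofNat,
    eval_add, eval_sub, eval_mul, eval_neg, eval_ofNat, zero_mul, zero_add,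
    Pi.mul_apply, neg_mul]
  ring

lemma IsSol.mul_momentMap_symSquareOp (hd : 2 ≤ d) (hτ : ‖τ‖ = 1) (hy : IsSol d p.1 p.2 y)
    (h : DecaysOn d τ A y) (V : ℂ[X]) :
    τ * momentMap τ y (symSquareOp d p V) = -symSquareForm d p V y 0 := by
  have hA := h.nonneg
  have hc := hy.1.continuous
  have hD : ∀ r : ℝ, HasDerivAt (fun r : ℝ => symSquareForm d p V y (r * τ))
      (τ * ((symSquareOp d p V).eval (r * τ) * (y (r * τ) * y (r * τ)))) r := fun r => by
    have := hasDerivAt_ray τ (f := symSquareForm d p V y)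
      (fun z => (hasDerivAt_symSquareForm hy V z).differentiableAt) r
    rwa [(hasDerivAt_symSquareForm hy V _).deriv] at this
  have hlim : Tendsto (fun r : ℝ => symSquareForm d p V y (r * τ)) atTop (𝓝 0) := by
    have hE : ∀ r : ℝ, 0 ≤ r → Real.exp (-phase d r) ≤ 1 := fun r hr =>
      Real.exp_le_one_iff.2 (by linarith [phase_nonneg d hr])
    have b1 : ∀ r : ℝ, 0 ≤ r → ‖y (r * τ) * y (r * τ)‖ ≤
        (A * A) * ((r + 1) ^ 0 * Real.exp (-phase d r)) := fun r hr => by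
      simpa using h.norm_mul_le h hr
    have b2 : ∀ r : ℝ, 0 ≤ r → ‖y (r * τ) * deriv y (r * τ)‖ ≤
        (A * ((3 + d * ‖p‖) * A)) * ((r + 1) ^ d * Real.exp (-phase d r)) := fun r hr => by
      rw [norm_mul, mul_assoc A]
      exact mul_le_mul ((h r hr).trans (mul_le_of_le_one_right hA (hE r hr)))
        (hy.norm_deriv_le hd hτ h hr) (norm_nonneg _) hA
    have b3 : ∀ r : ℝ, 0 ≤ r → ‖deriv y (r * τ) * deriv y (r * τ)‖ ≤
        (((3 + d * ‖p‖) * A) * ((3 + d * ‖p‖) * A)) *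
          ((r + 1) ^ (2 * d) * Real.exp (-phase d r)) := fun r hr => by
      have hb := hy.norm_deriv_le hd hτ h hr
      have hb' : ‖deriv y (r * τ)‖ ≤ (3 + d * ‖p‖) * A * ((r + 1) ^ d * 1) :=
        hb.trans (by have := hE r hr; gcongr)
      rw [norm_mul]
      refine (mul_le_mul hb' hb (norm_nonneg _) (by positivity)).trans (le_of_eq ?_)
      rw [two_mul d, pow_add]
      ring
    simpa [symSquareForm] using ((tendsto_eval_mul_zero hτ b1
      (derivative (derivative V) - 2 * (potPoly d p * V))).add
      (tendsto_eval_mul_zero hτ b2 (-2 * derivative V))).add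
      (tendsto_eval_mul_zero hτ b3 (2 * V))
  have hI := integral_Ioi_of_hasDerivAt_of_tendsto' (fun r _ => hD r)
    ((integrableOn_eval_mul hτ hc h _).const_mul τ) hlim
  rw [integral_const_mul, ← momentMap_eq_integral hτ hc h] at hI
  simpa using hI

lemma natDegree_potPoly_le (hd : 2 ≤ d) (p : (Fin (d - 1) → ℂ) × ℂ) :
    (potPoly d p).natDegree ≤ d := by
  rw [potPoly]
  refine natDegree_add_le_of_degree_le (natDegree_X_pow_le d) ?_
  refine (natDegree_sub_le _ _).trans (max_le ?_ ?_)
  · refine natDegree_sum_le_of_forall_le _ _ fun i _ => ?_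
    exact (natDegree_C_mul_X_pow_le _ _).trans (by omega)
  · exact (natDegree_C _).trans_le (Nat.zero_le d)

lemma coeff_potPoly (hd : 2 ≤ d) (p : (Fin (d - 1) → ℂ) × ℂ) : (potPoly d p).coeff d = 1 := by
  have h : ∀ i : Fin (d - 1), d ≠ (i : ℕ) + 1 := fun i => by omega
  simp [potPoly, coeff_X_pow, coeff_C, h, show d ≠ 0 by omega, finsetSum_coeff]

lemma natDegree_symSquareOp_le (hd : 2 ≤ d) (p : (Fin (d - 1) → ℂ) × ℂ) (k : ℕ) :
    (symSquareOp d p (X ^ (k + 1))).natDegree ≤ k + d := by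
  have hQ := natDegree_potPoly_le hd p
  have h1 : (derivative (X ^ (k + 1) : ℂ[X])).natDegree ≤ k :=
    (natDegree_derivative_le _).trans (by simp)
  have h2 := natDegree_derivative_le (derivative (X ^ (k + 1) : ℂ[X]))
  have h3 := natDegree_derivative_le (derivative (derivative (X ^ (k + 1) : ℂ[X])))
  have h4 := natDegree_derivative_le (potPoly d p)
  have h5 : (X ^ (k + 1) : ℂ[X]).natDegree ≤ k + 1 := natDegree_X_pow_le _
  have hl : ∀ (a : ℕ) [a.AtLeastTwo] (f : ℂ[X]), f.natDegree ≤ k + d →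
      ((OfNat.ofNat a : ℂ[X]) * f).natDegree ≤ k + d := fun a _ f hf =>
    natDegree_mul_le.trans (by rw [natDegree_ofNat]; omega)
  have h6 := hl 4 _ (natDegree_mul_le.trans (show _ ≤ k + d by omega) :
    (potPoly d p * derivative (X ^ (k + 1) : ℂ[X])).natDegree ≤ k + d)
  have h7 := hl 2 _ (natDegree_mul_le.trans (show _ ≤ k + d by omega) :
    (derivative (potPoly d p) * (X ^ (k + 1) : ℂ[X])).natDegree ≤ k + d)
  exact (natDegree_sub_le _ _).trans (max_le ((natDegree_sub_le _ _).trans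
    (max_le (by omega) h6)) h7)

lemma coeff_symSquareOp (hd : 2 ≤ d) (p : (Fin (d - 1) → ℂ) × ℂ) (k : ℕ) :
    (symSquareOp d p (X ^ (k + 1))).coeff (k + d) = -(4 * (k + 1) + 2 * d) := by
  have h1 : (derivative (X ^ (k + 1) : ℂ[X])).natDegree ≤ k :=
    (natDegree_derivative_le _).trans (by simp)
  have h2 := natDegree_derivative_le (derivative (X ^ (k + 1) : ℂ[X]))
  have h3 := natDegree_derivative_le (derivative (derivative (X ^ (k + 1) : ℂ[X])))
  have e1 : (derivative (derivative (derivative (X ^ (k + 1) : ℂ[X])))).coeff (k + d) = 0 :=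
    coeff_eq_zero_of_natDegree_lt (by omega)
  have e2 : (potPoly d p * derivative (X ^ (k + 1) : ℂ[X])).coeff (k + d) = (k : ℂ) + 1 := by
    rw [derivative_X_pow, ← mul_assoc, mul_comm (potPoly d p), mul_assoc, coeff_C_mul,
      Nat.add_sub_cancel, add_comm k d, coeff_mul_X_pow, coeff_potPoly hd]
    simp
  have e3 : (derivative (potPoly d p) * (X ^ (k + 1) : ℂ[X])).coeff (k + d) = (d : ℂ) := by
    rw [show k + d = (d - 1) + (k + 1) by omega, coeff_mul_X_pow, coeff_derivative,
      Nat.sub_add_cancel (by omega), coeff_potPoly hd, Nat.cast_sub (by omega)]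
    simp
  rw [symSquareOp, coeff_sub, coeff_sub, e1, coeff_ofNat_mul, e2, coeff_ofNat_mul, e3]
  ring

/-- If finitely many moments of a combination of `y ^ 2` over rays vanish then all do. -/
theorem sum_moment_eq_zero {ι : Type*} [Fintype ι] (hd : 2 ≤ d) {c τ : ι → ℂ} {A : ι → ℝ}
    (hτ : ∀ i, ‖τ i‖ = 1) (hy : IsSol d p.1 p.2 y) (h : ∀ i, DecaysOn d (τ i) (A i) y)
    (hc : ∑ i, c i = 0) (hm : ∀ m < d, ∑ i, c i * (τ i * moment (τ i) y y m) = 0) (m : ℕ) :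
    ∑ i, c i * (τ i * moment (τ i) y y m) = 0 := by
  let T : ℂ[X] →ₗ[ℂ] ℂ := ∑ i, (c i * τ i) • momentMap (τ i) y
  have hT : ∀ f, T f = ∑ i, c i * (τ i * momentMap (τ i) y f) := fun f => by
    simp [T, mul_assoc]
  have hTX : ∀ m, T (X ^ m) = ∑ i, c i * (τ i * moment (τ i) y y m) := fun m => by
    rw [hT, X_pow_eq_monomial]
    simp only [momentMap_monomial, one_mul]
  have hTop : ∀ V, T (symSquareOp d p V) = 0 := fun V => by
    rw [hT]
    simp only [fun i => hy.mul_momentMap_symSquareOp hd (hτ i) (h i) V]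
    rw [← Finset.sum_mul, hc, zero_mul]
  rw [← hTX]
  induction m using Nat.strong_induction_on with
  | _ m ih =>
    rcases lt_or_ge m d with hmd | hmd
    · rw [hTX, hm m hmd]
    · obtain ⟨k, rfl⟩ := Nat.exists_eq_add_of_le' hmd
      have h1 := hTop (X ^ (k + 1))
      rw [as_sum_range' _ (k + d + 1) (Nat.lt_succ_of_le (natDegree_symSquareOp_le hd p k)),
        Finset.sum_range_succ, map_add, map_sum, Finset.sum_eq_zero, zero_add,
        coeff_symSquareOp hd] at h1
      · rw [← mul_one (-_ : ℂ), ← smul_eq_mul, ← smul_monomial, map_smul, smul_eq_mul,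
          ← X_pow_eq_monomial] at h1
        refine (mul_eq_zero.1 h1).resolve_left (neg_ne_zero.2 ?_)
        exact_mod_cast (show 4 * (k + 1) + 2 * d ≠ 0 by omega)
      · intro l hl
        rw [← mul_one (coeff _ l), ← smul_eq_mul, ← smul_monomial, map_smul,
          ← X_pow_eq_monomial, ih l (Finset.mem_range.1 hl), smul_zero]

end Moments

section CauchyTransform

open MeasureTheory

variable {u : ℝ → ℂ} {z : ℂ}

/-- The Cauchy transform of a function on the positive half-line. -/
noncomputable def cauchyTransform (u : ℝ → ℂ) (z : ℂ) : ℂ :=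
  ∫ r in Set.Ioi (0 : ℝ), u r / (r - z)

lemma exists_norm_ofReal_sub_ge (hz : -z ∈ slitPlane) :
    ∃ ε > 0, ∀ r : ℝ, 0 ≤ r → ε ≤ ‖(r : ℂ) - z‖ := by
  rcases hz with h | h
  · refine ⟨-z.re, by simpa using h, fun r hr => ?_⟩
    refine le_trans ?_ (Complex.re_le_norm _)
    simpa using hr
  · refine ⟨|z.im|, abs_pos.2 (by simpa using h), fun r hr => ?_⟩
    simpa using Complex.abs_im_le_norm ((r : ℂ) - z)

lemma differentiableAt_cauchyTransform (hu : IntegrableOn u (Set.Ioi 0)) (hz : -z ∈ slitPlane) :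
    DifferentiableAt ℂ (cauchyTransform u) z := by
  obtain ⟨ε, hε, h⟩ := exists_norm_ofReal_sub_ge hz
  have hw : ∀ r : ℝ, 0 ≤ r → ∀ w ∈ Metric.ball z (ε / 2), ε / 2 ≤ ‖(r : ℂ) - w‖ := by
    intro r hr w hw
    have h1 := h r hr
    have h2 : ‖(r : ℂ) - z‖ ≤ ‖(r : ℂ) - w‖ + ‖w - z‖ := by
      simpa using norm_add_le ((r : ℂ) - w) (w - z)
    rw [mem_ball_iff_norm] at hw
    linarith
  have hmeas : ∀ w : ℂ, AEStronglyMeasurable (fun r : ℝ => u r / (r - w))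
      (volume.restrict (Set.Ioi 0)) := fun w =>
    hu.aestronglyMeasurable.div₀ (by fun_prop)
  refine (hasDerivAt_integral_of_dominated_loc_of_deriv_le (F := fun w r => u r / (r - w))
    (F' := fun w r => u r / (r - w) ^ 2) (bound := fun r => ‖u r‖ / (ε / 2) ^ 2)
    (Metric.ball_mem_nhds z (half_pos hε)) (Eventually.of_forall hmeas) ?_ ?_ ?_ ?_ ?_).2
    |>.differentiableAt
  · refine (hu.norm.div_const (ε / 2)).mono' (hmeas z) ?_
    filter_upwards [ae_restrict_mem measurableSet_Ioi] with r hr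
    rw [norm_div]
    have := hw r (le_of_lt hr) z (Metric.mem_ball_self (half_pos hε))
    gcongr
  · exact hu.aestronglyMeasurable.div₀ (by fun_prop)
  · filter_upwards [ae_restrict_mem measurableSet_Ioi] with r hr w hwb
    rw [norm_div, norm_pow]
    have := hw r (le_of_lt hr) w hwb
    gcongr
  · exact hu.norm.div_const _
  · filter_upwards [ae_restrict_mem measurableSet_Ioi] with r hr w hwb
    have h0 : (r : ℂ) - w ≠ 0 := fun h0 => by
      have := hw r (le_of_lt hr) w hwb
      rw [h0, norm_zero] at this
      linarith
    have := (((hasDerivAt_id w).const_sub (r : ℂ)).fun_inv h0).const_mul (u r)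
    refine (this.congr_deriv ?_)
    simp only [id]
    ring

lemma integrableOn_div_ofReal_sub (hu : IntegrableOn u (Set.Ioi 0)) (hz : -z ∈ slitPlane) :
    IntegrableOn (fun r : ℝ => u r / (r - z)) (Set.Ioi 0) := by
  obtain ⟨ε, hε, h⟩ := exists_norm_ofReal_sub_ge hz
  refine (hu.norm.div_const ε).mono' (hu.aestronglyMeasurable.div₀ (by fun_prop)) ?_
  filter_upwards [ae_restrict_mem measurableSet_Ioi] with r hr
  rw [norm_div]
  have := h r (le_of_lt hr)
  gcongr

lemma pow_mul_cauchyTransform (hu : ∀ m : ℕ, IntegrableOn (fun r : ℝ => (r : ℂ) ^ m * u r)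
    (Set.Ioi 0)) (hz : -z ∈ slitPlane) (N : ℕ) :
    z ^ N * cauchyTransform u z = cauchyTransform (fun r => (r : ℂ) ^ N * u r) z -
      ∑ m ∈ Finset.range N, z ^ (N - 1 - m) * ∫ r in Set.Ioi (0 : ℝ), (r : ℂ) ^ m * u r := by
  obtain ⟨ε, hε, h⟩ := exists_norm_ofReal_sub_ge hz
  have hu0 : IntegrableOn u (Set.Ioi 0) := by simpa using hu 0
  simp only [cauchyTransform, ← integral_const_mul]
  rw [← integral_finsetSum _ fun m _ => (hu m).const_mul _,
    ← integral_sub (integrableOn_div_ofReal_sub (hu N) hz)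
      (integrable_finsetSum _ fun m _ => (hu m).const_mul _)]
  refine setIntegral_congr_fun measurableSet_Ioi fun r hr => ?_
  have h0 : (r : ℂ) - z ≠ 0 := fun h0 => by
    have := h r (le_of_lt hr)
    rw [h0, norm_zero] at this
    linarith
  have e := (Commute.all (r : ℂ) z).geom_sum₂_mul N
  have e2 : ∑ m ∈ Finset.range N, z ^ (N - 1 - m) * ((r : ℂ) ^ m * u r) =
      (∑ m ∈ Finset.range N, (r : ℂ) ^ m * z ^ (N - 1 - m)) * u r := by
    rw [Finset.sum_mul]
    exact Finset.sum_congr rfl fun m _ => by ring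
  simp only [e2]
  field_simp
  linear_combination u r * e

lemma norm_ofReal_sub_ge {c : ℝ} (hc : 0 ≤ c) (hc1 : c < 1) (hz : z.re ≤ c * ‖z‖) {r : ℝ}
    (hr : 0 ≤ r) : √(1 - c ^ 2) * ‖z‖ ≤ ‖(r : ℂ) - z‖ := by
  refine (pow_le_pow_iff_left₀ (by positivity) (norm_nonneg _) two_ne_zero).1 ?_
  rw [mul_pow, Real.sq_sqrt (by nlinarith), Complex.sq_norm, Complex.sq_norm,
    Complex.normSq_apply, Complex.normSq_apply]
  have h1 : ‖z‖ ^ 2 = z.re * z.re + z.im * z.im := by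
    rw [Complex.sq_norm, Complex.normSq_apply]
  simp only [Complex.sub_re, Complex.ofReal_re, Complex.sub_im, Complex.ofReal_im]
  nlinarith [mul_le_mul_of_nonneg_left hz hr, sq_nonneg (r - c * ‖z‖)]

lemma norm_cauchyTransform_le {c : ℝ} (hc : 0 ≤ c) (hc1 : c < 1) (hz0 : z ≠ 0)
    (hz : z.re ≤ c * ‖z‖) {v : ℝ → ℝ} (hv : IntegrableOn v (Set.Ioi 0))
    (huv : ∀ r, 0 < r → ‖u r‖ ≤ v r) :
    ‖z‖ * ‖cauchyTransform u z‖ ≤ (√(1 - c ^ 2))⁻¹ * ∫ r in Set.Ioi (0 : ℝ), v r := by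
  have hs : 0 < √(1 - c ^ 2) := Real.sqrt_pos.2 (by nlinarith)
  have hzn : 0 < ‖z‖ := norm_pos_iff.2 hz0
  have h1 : ‖cauchyTransform u z‖ ≤ ∫ r in Set.Ioi (0 : ℝ), v r / (√(1 - c ^ 2) * ‖z‖) := by
    refine norm_integral_le_of_norm_le (hv.div_const _) ?_
    filter_upwards [ae_restrict_mem measurableSet_Ioi] with r hr
    rw [norm_div]
    exact div_le_div₀ ((norm_nonneg _).trans (huv r hr)) (huv r hr) (by positivity)
      (norm_ofReal_sub_ge hc hc1 hz (le_of_lt hr))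
  rw [integral_div] at h1
  calc _ ≤ ‖z‖ * ((∫ r in Set.Ioi (0 : ℝ), v r) / (√(1 - c ^ 2) * ‖z‖)) :=
        mul_le_mul_of_nonneg_left h1 hzn.le
    _ = _ := by field_simp

end CauchyTransform

section Vanishing

open MeasureTheory

/-- A holomorphic function on a horizontal strip that decays faster than `exp (-M exp (γ x))` for
all `M`, where `γ` is the critical exponent of the strip, vanishes. -/
theorem eq_zero_of_decay_horizontal_strip {f : ℂ → ℂ} {h : ℝ} (hh : 0 < h)
    (hf : DiffContOnCl ℂ f (im ⁻¹' Set.Ioo (-h) h))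
    (hB : ∀ M : ℝ, 0 ≤ M → ∃ B, ∀ w : ℂ, |w.im| ≤ h →
      Real.exp (M * Real.exp (Real.pi / (2 * h) * w.re)) * ‖f w‖ ≤ B)
    {w : ℂ} (hw : |w.im| < h) : f w = 0 := by
  have hπ := Real.pi_pos
  set γ : ℝ := Real.pi / (2 * h) with hγ
  have hγ0 : 0 < γ := by positivity
  have hγh : γ * h = Real.pi / 2 := by rw [hγ]; field_simp
  obtain ⟨B₀, hB₀⟩ := hB 0 le_rfl
  simp only [zero_mul, Real.exp_zero, one_mul] at hB₀
  have hre : ∀ (M : ℝ) (w : ℂ), ‖cexp (M * cexp (γ * w))‖ =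
      Real.exp (M * (Real.exp (γ * w.re) * Real.cos (γ * w.im))) := fun M w => by
    rw [Complex.norm_exp, Complex.re_ofReal_mul, Complex.exp_re, Complex.re_ofReal_mul,
      Complex.im_ofReal_mul]
  have hcos : 0 < Real.cos (γ * w.im) := by
    apply Real.cos_pos_of_mem_Ioo
    have := abs_lt.1 hw
    constructor <;> nlinarith
  have key : ∀ M : ℝ, 0 ≤ M →
      ‖f w‖ * Real.exp (M * (Real.exp (γ * w.re) * Real.cos (γ * w.im))) ≤ B₀ := fun M hM => by
    rw [← hre, ← norm_mul]
    obtain ⟨B, hB⟩ := hB M hM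
    have hedge : ∀ z : ℂ, Real.cos (γ * z.im) = 0 → |z.im| ≤ h →
        ‖f z * cexp (M * cexp (γ * z))‖ ≤ B₀ := fun z hz hz' => by
      rw [norm_mul, hre, hz, mul_zero, mul_zero, Real.exp_zero, mul_one]
      exact hB₀ z hz'
    refine PhragmenLindelof.horizontal_strip (f := fun w => f w * cexp (M * cexp (γ * w)))
      (a := -h) (b := h) ?_ ?_ ?_ ?_ (abs_lt.1 hw).1.le (abs_lt.1 hw).2.le
    · have : Differentiable ℂ fun w : ℂ => cexp (M * cexp (γ * w)) := by fun_prop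
      exact hf.smul this.diffContOnCl
    · refine ⟨0, by have : 0 < h - -h := by linarith
                    positivity, 0, ?_⟩
      refine Asymptotics.IsBigO.of_bound B ?_
      filter_upwards [mem_inf_of_right (mem_principal_self _)] with z hz
      have hz' : |z.im| ≤ h := (abs_lt.2 hz).le
      refine le_trans ?_ (le_trans (hB z hz') (by simp))
      rw [norm_mul, hre, mul_comm]
      have h1 : Real.exp (γ * z.re) * Real.cos (γ * z.im) ≤ Real.exp (γ * z.re) :=
        mul_le_of_le_one_right (Real.exp_pos _).le (Real.cos_le_one _)
      gcongr
    · intro z hz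
      refine hedge z ?_ (by rw [hz, abs_neg, abs_of_pos hh])
      rw [hz, mul_neg, hγh, Real.cos_neg, Real.cos_pi_div_two]
    · intro z hz
      refine hedge z ?_ (by rw [hz, abs_of_pos hh])
      rw [hz, hγh, Real.cos_pi_div_two]
  have hpos : 0 < Real.exp (γ * w.re) * Real.cos (γ * w.im) := by positivity
  by_contra hne
  have hn : 0 < ‖f w‖ := norm_pos_iff.2 hne
  have ht : Tendsto (fun M : ℝ => ‖f w‖ *
      Real.exp (M * (Real.exp (γ * w.re) * Real.cos (γ * w.im)))) atTop atTop :=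
    (Real.tendsto_exp_atTop.comp (tendsto_id.atTop_mul_const hpos)).const_mul_atTop hn
  obtain ⟨M, hM0, hM⟩ := ((eventually_ge_atTop 0).and (ht.eventually_gt_atTop B₀)).exists
  exact absurd (key M hM0) (not_le.2 hM)

lemma exists_mul_rpow_le {γ ρ : ℝ} (hγ : 0 ≤ γ) (hγρ : γ < ρ) {M ε : ℝ} (hM : 0 ≤ M)
    (hε : 0 < ε) : ∃ C, ∀ r : ℝ, 0 ≤ r → M * r ^ γ ≤ ε * r ^ ρ + C := by
  obtain ⟨R, hR⟩ := ((tendsto_rpow_atTop (sub_pos.2 hγρ)).eventually_ge_atTop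
    (M / ε)).exists_forall_of_atTop
  refine ⟨M * (max R 1) ^ γ, fun r hr => ?_⟩
  rcases le_total (max R 1) r with h | h
  · have h1 := hR r ((le_max_left _ _).trans h)
    have hr0 : 0 < r := lt_of_lt_of_le one_pos ((le_max_right _ _).trans h)
    rw [div_le_iff₀ hε] at h1
    have h2 : r ^ ρ = r ^ (ρ - γ) * r ^ γ := by rw [← Real.rpow_add hr0]; ring_nf
    have h3 : 0 ≤ M * max R 1 ^ γ := by positivity
    rw [h2]
    nlinarith [Real.rpow_nonneg hr γ]
  · have : M * r ^ γ ≤ M * (max R 1) ^ γ := by gcongr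
    have : 0 ≤ ε * r ^ ρ := by positivity
    linarith

lemma integrableOn_exp_rpow_mul_exp_neg_phase (d : ℕ) {γ : ℝ} (hγ : 0 ≤ γ)
    (hγd : γ < ((d : ℝ) + 2) / 2) {M : ℝ} (hM : 0 ≤ M) :
    IntegrableOn (fun r : ℝ => (1 + r) * (Real.exp (M * r ^ γ) * Real.exp (-phase d r)))
      (Set.Ioi 0) := by
  have hd : (0 : ℝ) < d + 2 := by positivity
  obtain ⟨C, hC⟩ := exists_mul_rpow_le hγ hγd hM (ε := 1 / (2 * (d + 2))) (by positivity)
  have hI : ∀ m : ℕ, IntegrableOn (fun r : ℝ => r ^ (m : ℝ) *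
      Real.exp (-(1 / (2 * (d + 2))) * r ^ (((d : ℝ) + 2) / 2))) (Set.Ioi 0) := fun m =>
    integrableOn_rpow_mul_exp_neg_mul_rpow (by linarith [(Nat.cast_nonneg m : (0 : ℝ) ≤ m)])
      (by positivity) (by positivity)
  refine Integrable.mono' (((hI 0).add (hI 1)).const_mul (Real.exp C)) ?_ ?_
  · refine Measurable.aestronglyMeasurable ?_
    unfold phase
    fun_prop
  · filter_upwards [ae_restrict_mem measurableSet_Ioi] with r hr
    have hr0 : 0 < r := hr
    rw [Real.norm_of_nonneg (by positivity)]
    simp only [Pi.add_apply, Nat.cast_zero, Nat.cast_one, Real.rpow_zero, Real.rpow_one,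
      ← add_mul, ← Real.exp_add]
    rw [mul_left_comm, ← Real.exp_add]
    have h1 := hC r hr0.le
    have h2 : phase d r = 2 * (1 / (2 * (d + 2)) * r ^ (((d : ℝ) + 2) / 2)) := by
      rw [phase]; field_simp
    have h3 : M * r ^ γ + -phase d r ≤ C + -(1 / (2 * (d + 2))) * r ^ (((d : ℝ) + 2) / 2) := by
      rw [h2]; linarith
    gcongr

/-- Bounds on all power moments give an exponential bound. -/
lemma exists_exp_rpow_mul_le (d : ℕ) {γ : ℝ} (hγ : 0 ≤ γ) (hγd : γ < ((d : ℝ) + 2) / 2) {M : ℝ}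
    (hM : 0 ≤ M) (K : ℝ) : ∃ B, ∀ R g : ℝ, 0 ≤ R → 0 ≤ g → (∀ N : ℕ, R ^ N * g ≤
      K * ∫ r in Set.Ioi (0 : ℝ), r ^ N * Real.exp (-phase d r)) →
      Real.exp (M * R ^ γ) * g ≤ B := by
  set D : ℝ → ℝ := fun r => 2 * ((1 + r) * (Real.exp (0 * r ^ γ) * Real.exp (-phase d r))) *
    Real.exp M + 2 * ((1 + r) * (Real.exp (M * r ^ γ) * Real.exp (-phase d r))) with hDdef
  have hD : IntegrableOn D (Set.Ioi 0) :=
    (((integrableOn_exp_rpow_mul_exp_neg_phase d hγ hγd le_rfl).const_mul 2).mul_const _).add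
      ((integrableOn_exp_rpow_mul_exp_neg_phase d hγ hγd hM).const_mul 2)
  refine ⟨|K| * ∫ r in Set.Ioi (0 : ℝ), D r, fun R g hR hg h => ?_⟩
  set N : ℕ → ℕ := fun k => ⌈γ * k⌉₊ with hN
  have hI := integrableOn_pow_mul_exp_neg_phase d
  have hterm : ∀ k : ℕ, (M * R ^ γ) ^ k / k.factorial * g ≤ K * ∫ r in Set.Ioi (0 : ℝ),
      M ^ k / k.factorial * (r ^ 0 * Real.exp (-phase d r) +
        r ^ N k * Real.exp (-phase d r)) := fun k => by
    rw [integral_const_mul, integral_add (hI 0) (hI (N k))]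
    have h0 := h 0
    have h1 := h (N k)
    have h2 : (R ^ γ) ^ k ≤ R ^ 0 + R ^ N k := by
      rw [← Real.rpow_mul_natCast hR, pow_zero]
      rcases le_total R 1 with hR1 | hR1
      · have := Real.rpow_le_one hR hR1 (show 0 ≤ γ * k by positivity)
        have : 0 ≤ R ^ N k := by positivity
        linarith
      · have := Real.rpow_le_rpow_of_exponent_le hR1 (Nat.le_ceil (γ * k))
        rw [Real.rpow_natCast] at this
        linarith
    have h3 : (0 : ℝ) ≤ M ^ k / k.factorial := by positivity
    calc (M * R ^ γ) ^ k / k.factorial * g = M ^ k / k.factorial * ((R ^ γ) ^ k * g) := by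
          rw [mul_pow]; ring
      _ ≤ M ^ k / k.factorial * (R ^ 0 * g + R ^ N k * g) := by
          rw [← add_mul]; gcongr
      _ ≤ M ^ k / k.factorial * ((K * ∫ r in Set.Ioi (0 : ℝ), r ^ 0 * Real.exp (-phase d r)) +
          K * ∫ r in Set.Ioi (0 : ℝ), r ^ N k * Real.exp (-phase d r)) := by gcongr
      _ = _ := by ring
  have hkI : ∀ k : ℕ, IntegrableOn (fun r : ℝ => M ^ k / k.factorial *
      (r ^ 0 * Real.exp (-phase d r) + r ^ N k * Real.exp (-phase d r))) (Set.Ioi 0) :=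
    fun k => ((hI 0).add (hI (N k))).const_mul _
  have hsumI : ∀ n : ℕ, IntegrableOn (fun r : ℝ => ∑ k ∈ Finset.range n, M ^ k / k.factorial *
      (r ^ 0 * Real.exp (-phase d r) + r ^ N k * Real.exp (-phase d r))) (Set.Ioi 0) :=
    fun n => integrable_finsetSum _ fun k _ => hkI k
  have hpt : ∀ n : ℕ, ∀ r : ℝ, 0 < r → ∑ k ∈ Finset.range n, M ^ k / k.factorial *
      (r ^ 0 * Real.exp (-phase d r) + r ^ N k * Real.exp (-phase d r)) ≤ D r := fun n r hr => by
    have hk : ∀ k : ℕ, r ^ 0 + r ^ N k ≤ 2 * (1 + r) * (1 + (r ^ γ) ^ k) := fun k => by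
      rw [← Real.rpow_mul_natCast hr.le, pow_zero]
      have h0 : 0 ≤ r ^ (γ * k) := by positivity
      rcases le_total r 1 with hr1 | hr1
      · have : r ^ N k ≤ 1 := pow_le_one₀ hr.le hr1
        nlinarith
      · have := Real.rpow_le_rpow_of_exponent_le hr1
          (Nat.ceil_lt_add_one (show 0 ≤ γ * k by positivity)).le
        rw [Real.rpow_natCast, Real.rpow_add hr, Real.rpow_one] at this
        have h4 : r ^ N k ≤ r ^ (γ * k) * r := this
        nlinarith
    calc _ ≤ ∑ k ∈ Finset.range n, 2 * (1 + r) * Real.exp (-phase d r) *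
          (M ^ k / k.factorial + (M * r ^ γ) ^ k / k.factorial) := by
          refine Finset.sum_le_sum fun k _ => ?_
          have h3 : (0 : ℝ) ≤ M ^ k / k.factorial * Real.exp (-phase d r) := by positivity
          have := mul_le_mul_of_nonneg_left (hk k) h3
          rw [mul_pow]
          refine le_trans (le_of_eq ?_) (this.trans (le_of_eq ?_)) <;> ring
      _ = 2 * (1 + r) * Real.exp (-phase d r) * (∑ k ∈ Finset.range n, M ^ k / k.factorial +
          ∑ k ∈ Finset.range n, (M * r ^ γ) ^ k / k.factorial) := by
          rw [← Finset.sum_add_distrib, Finset.mul_sum]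
      _ ≤ 2 * (1 + r) * Real.exp (-phase d r) * (Real.exp M + Real.exp (M * r ^ γ)) := by
          have e1 := Real.sum_le_exp_of_nonneg hM n
          have e2 := Real.sum_le_exp_of_nonneg (show 0 ≤ M * r ^ γ by positivity) n
          gcongr
      _ = D r := by
          simp only [hDdef, zero_mul, Real.exp_zero]; ring
  have hpart : ∀ n : ℕ, (∑ k ∈ Finset.range n, (M * R ^ γ) ^ k / k.factorial) * g ≤
      |K| * ∫ r in Set.Ioi (0 : ℝ), D r := fun n => by
    rw [Finset.sum_mul]
    refine (Finset.sum_le_sum fun k _ => hterm k).trans ?_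
    rw [← Finset.mul_sum, ← integral_finsetSum _ fun k _ => hkI k]
    have hnn : 0 ≤ ∫ r in Set.Ioi (0 : ℝ), ∑ k ∈ Finset.range n, M ^ k / k.factorial *
        (r ^ 0 * Real.exp (-phase d r) + r ^ N k * Real.exp (-phase d r)) := by
      refine setIntegral_nonneg measurableSet_Ioi fun r hr => ?_
      have hr0 : (0 : ℝ) < r := hr
      exact Finset.sum_nonneg fun k _ => by positivity
    refine mul_le_mul (le_abs_self K) ?_ hnn (abs_nonneg K)
    exact setIntegral_mono_on (hsumI n) hD measurableSet_Ioi fun r hr => hpt n r hr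
  have hlim : Tendsto (fun n : ℕ => (∑ k ∈ Finset.range n, (M * R ^ γ) ^ k / k.factorial) * g)
      atTop (𝓝 (Real.exp (M * R ^ γ) * g)) := by
    rw [Real.exp_eq_exp_ℝ]
    exact ((NormedSpace.expSeries_div_hasSum_exp (M * R ^ γ)).tendsto_sum_nat).mul_const g
  exact le_of_tendsto' hlim hpart

end Vanishing

section RayTransform

open MeasureTheory

lemma neg_mem_slitPlane_of_re_le {z : ℂ} {c : ℝ} (hc1 : c < 1) (hz0 : z ≠ 0)
    (hz : z.re ≤ c * ‖z‖) : -z ∈ slitPlane := by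
  by_contra h
  rw [mem_slitPlane_iff, not_or] at h
  simp only [neg_re, neg_im, not_lt, not_not, neg_eq_zero, Left.neg_nonpos_iff] at h
  have hn : ‖z‖ = z.re := by
    rw [← Complex.abs_re_eq_norm.2 h.2, abs_of_nonneg h.1]
  have := norm_pos_iff.2 hz0
  rw [← hn] at hz
  nlinarith

lemma tendsto_cauchyTransform_jump {u : ℝ → ℂ} (hu : IntegrableOn u (Set.Ioi 0)) {x : ℝ}
    (hx : 0 < x) (hc : ContinuousAt u x) :
    Tendsto (fun c : ℝ => cauchyTransform u (x + (c⁻¹ : ℝ) * I) -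
      cauchyTransform u (x - (c⁻¹ : ℝ) * I)) atTop (𝓝 (2 * Real.pi * I * u x)) := by
  have hg : Integrable ((Set.Ioi (0 : ℝ)).indicator u) :=
    (integrable_indicator_iff measurableSet_Ioi).2 hu
  have hgx : (Set.Ioi (0 : ℝ)).indicator u x = u x := Set.indicator_of_mem hx u
  have hgc : ContinuousAt ((Set.Ioi (0 : ℝ)).indicator u) x := by
    refine hc.congr ?_
    filter_upwards [lt_mem_nhds hx] with r hr
    rw [Set.indicator_of_mem (show r ∈ Set.Ioi (0 : ℝ) from hr)]
  have hπ := Real.pi_pos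
  have hφint : ∫ t : ℝ, Real.pi⁻¹ * (1 + t ^ 2)⁻¹ = 1 := by
    rw [integral_const_mul, integral_univ_inv_one_add_sq]
    field_simp
  have hφlim : Tendsto (fun t : ℝ => ‖t‖ ^ Module.finrank ℝ ℝ * (Real.pi⁻¹ * (1 + t ^ 2)⁻¹))
      (Bornology.cobounded ℝ) (𝓝 0) := by
    have h1 : Tendsto (fun t : ℝ => Real.pi⁻¹ * ‖t‖⁻¹) (Bornology.cobounded ℝ) (𝓝 0) := by
      simpa using (tendsto_inv_atTop_zero.comp (tendsto_norm_cobounded_atTop (E := ℝ))).const_mul Real.pi⁻¹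
    refine squeeze_zero (fun t => by positivity) (fun t => ?_) h1
    rw [Module.finrank_self, pow_one, mul_left_comm]
    refine mul_le_mul_of_nonneg_left ?_ (by positivity)
    rcases eq_or_ne t 0 with rfl | ht
    · simp
    · have : 0 < ‖t‖ := norm_pos_iff.2 ht
      rw [← Real.norm_of_nonneg (sq_nonneg t), norm_pow, ← div_eq_mul_inv, inv_eq_one_div,
        div_le_div_iff₀ (by positivity) this]
      nlinarith
  have key := (tendsto_integral_comp_smul_smul_of_integrable' (μ := volume)
    (fun t : ℝ => by positivity) hφint hφlim hg hgc).const_mul (2 * Real.pi * I)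
  rw [hgx] at key
  refine key.congr' ?_
  filter_upwards [eventually_gt_atTop 0] with c hcpos
  have hci : 0 < c⁻¹ := inv_pos.2 hcpos
  have m1 : -((x : ℂ) + (c⁻¹ : ℝ) * I) ∈ slitPlane := Or.inr (by simp [hcpos.ne'])
  have m2 : -((x : ℂ) - (c⁻¹ : ℝ) * I) ∈ slitPlane := Or.inr (by simp [hcpos.ne'])
  rw [cauchyTransform, cauchyTransform, ← integral_sub (integrableOn_div_ofReal_sub hu m1)
    (integrableOn_div_ofReal_sub hu m2), ← integral_const_mul,
    ← integral_indicator measurableSet_Ioi]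
  refine integral_congr_ae (Eventually.of_forall fun r => ?_)
  by_cases hr : r ∈ Set.Ioi (0 : ℝ)
  · simp only [Set.indicator_of_mem hr, Module.finrank_self, pow_one, smul_eq_mul,
      Complex.real_smul]
    have hc0 : (c : ℂ) ≠ 0 := by exact_mod_cast hcpos.ne'
    have hπ0 : (Real.pi : ℂ) ≠ 0 := by exact_mod_cast hπ.ne'
    have h1 : (r : ℂ) - (x + (c⁻¹ : ℝ) * I) ≠ 0 := fun h => by
      have := congrArg Complex.im h
      simp [hcpos.ne'] at this
    have h2 : (r : ℂ) - (x - (c⁻¹ : ℝ) * I) ≠ 0 := fun h => by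
      have := congrArg Complex.im h
      simp [hcpos.ne'] at this
    have h3 : (1 : ℂ) + (c * (x - r)) ^ 2 ≠ 0 := by
      have : (1 : ℝ) + (c * (x - r)) ^ 2 ≠ 0 := by positivity
      exact_mod_cast this
    have h4 : ((r : ℂ) - (x + (c⁻¹ : ℝ) * I)) * (r - (x - (c⁻¹ : ℝ) * I)) =
        (c ^ 2)⁻¹ * (1 + (c * (x - r)) ^ 2) := by
      push_cast
      field_simp
      linear_combination (-1 : ℂ) * I_sq
    rw [div_sub_div _ _ h1 h2, h4]
    push_cast
    field_simp
    ring
  · simp [Set.indicator_of_notMem hr]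

variable {ι : Type*} [Fintype ι] {u : ι → ℝ → ℂ} {τ : ι → ℂ} {A : ι → ℝ} {d : ℕ}

/-- The Cauchy transform of densities on finitely many rays from the origin. -/
noncomputable def rayTransform (u : ι → ℝ → ℂ) (τ : ι → ℂ) (ζ : ℂ) : ℂ :=
  ∑ i, (τ i)⁻¹ * cauchyTransform (u i) (ζ * (τ i)⁻¹)

lemma integrableOn_pow_mul_of_decay {u : ℝ → ℂ} {A : ℝ} (hc : Continuous u)
    (hu : ∀ r, 0 < r → ‖u r‖ ≤ A * Real.exp (-phase d r)) (m : ℕ) :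
    IntegrableOn (fun r : ℝ => (r : ℂ) ^ m * u r) (Set.Ioi 0) := by
  refine ((integrableOn_pow_mul_exp_neg_phase d m).const_mul A).mono'
    (by fun_prop : Continuous fun r : ℝ => (r : ℂ) ^ m * u r).aestronglyMeasurable ?_
  filter_upwards [ae_restrict_mem measurableSet_Ioi] with r hr
  have hr0 : 0 < r := hr
  rw [norm_mul, norm_pow, Complex.norm_real, Real.norm_of_nonneg hr0.le, mul_left_comm]
  exact mul_le_mul_of_nonneg_left (hu r hr) (by positivity)

lemma differentiableAt_rayTransform (hc : ∀ i, Continuous (u i))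
    (hu : ∀ i r, 0 < r → ‖u i r‖ ≤ A i * Real.exp (-phase d r)) {ζ : ℂ}
    (hζ : ∀ i, -(ζ * (τ i)⁻¹) ∈ slitPlane) : DifferentiableAt ℂ (rayTransform u τ) ζ := by
  unfold rayTransform
  refine DifferentiableAt.fun_sum fun i _ => DifferentiableAt.const_mul ?_ _
  have hI : IntegrableOn (u i) (Set.Ioi 0) := by
    simpa using integrableOn_pow_mul_of_decay (hc i) (hu i) 0
  exact (differentiableAt_cauchyTransform hI (hζ i)).comp ζ
    (f := fun ζ => ζ * (τ i)⁻¹) (by fun_prop)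

lemma pow_mul_norm_rayTransform_le (hc : ∀ i, Continuous (u i)) (hτ : ∀ i, ‖τ i‖ = 1)
    (hu : ∀ i r, 0 < r → ‖u i r‖ ≤ A i * Real.exp (-phase d r))
    (hm : ∀ m : ℕ, ∑ i, τ i ^ m * ∫ r in Set.Ioi (0 : ℝ), (r : ℂ) ^ m * u i r = 0)
    {c : ℝ} (hc0 : 0 ≤ c) (hc1 : c < 1) {ζ : ℂ} (hζ0 : ζ ≠ 0)
    (hζ : ∀ i, (ζ * (τ i)⁻¹).re ≤ c * ‖ζ‖) (N : ℕ) :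
    ‖ζ‖ ^ N * ‖ζ * rayTransform u τ ζ‖ ≤ ((√(1 - c ^ 2))⁻¹ * ∑ i, A i) *
      ∫ r in Set.Ioi (0 : ℝ), r ^ N * Real.exp (-phase d r) := by
  have hτ0 : ∀ i, τ i ≠ 0 := fun i h => by
    have := hτ i
    simp [h] at this
  have hn : ∀ i, ‖ζ * (τ i)⁻¹‖ = ‖ζ‖ := fun i => by rw [norm_mul, norm_inv, hτ i]; simp
  have h0 : ∀ i, ζ * (τ i)⁻¹ ≠ 0 := fun i => mul_ne_zero hζ0 (inv_ne_zero (hτ0 i))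
  have hs : ∀ i, -(ζ * (τ i)⁻¹) ∈ slitPlane := fun i =>
    neg_mem_slitPlane_of_re_le hc1 (h0 i) (by rw [hn]; exact hζ i)
  have hI : ∀ i (m : ℕ), IntegrableOn (fun r : ℝ => (r : ℂ) ^ m * u i r) (Set.Ioi 0) :=
    fun i => integrableOn_pow_mul_of_decay (hc i) (hu i)
  have e : ζ ^ N * rayTransform u τ ζ = ∑ i, τ i ^ N * ((τ i)⁻¹ *
      cauchyTransform (fun r => (r : ℂ) ^ N * u i r) (ζ * (τ i)⁻¹)) := by
    have h1 : ∀ i, ζ ^ N * ((τ i)⁻¹ * cauchyTransform (u i) (ζ * (τ i)⁻¹)) =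
        τ i ^ N * ((τ i)⁻¹ * cauchyTransform (fun r => (r : ℂ) ^ N * u i r) (ζ * (τ i)⁻¹)) -
        ∑ m ∈ Finset.range N, ζ ^ (N - 1 - m) *
          (τ i ^ m * ∫ r in Set.Ioi (0 : ℝ), (r : ℂ) ^ m * u i r) := fun i => by
      have h2 := pow_mul_cauchyTransform (hI i) (hs i) N
      have h3 : ∑ m ∈ Finset.range N, ζ ^ (N - 1 - m) *
          (τ i ^ m * ∫ r in Set.Ioi (0 : ℝ), (r : ℂ) ^ m * u i r) = τ i ^ N * (τ i)⁻¹ *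
          ∑ m ∈ Finset.range N, (ζ * (τ i)⁻¹) ^ (N - 1 - m) *
            ∫ r in Set.Ioi (0 : ℝ), (r : ℂ) ^ m * u i r := by
        rw [Finset.mul_sum]
        refine Finset.sum_congr rfl fun m hm => ?_
        have hmN := Finset.mem_range.1 hm
        have h4 : τ i ^ N = τ i ^ (N - 1 - m) * τ i ^ m * τ i := by
          rw [← pow_add, ← pow_succ]; congr 1; omega
        have := hτ0 i
        rw [h4, mul_pow, inv_pow]
        field_simp
      rw [h3]
      have h5 : ζ ^ N = τ i ^ N * (ζ * (τ i)⁻¹) ^ N := by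
        rw [← mul_pow, mul_comm ζ, mul_inv_cancel_left₀ (hτ0 i)]
      rw [h5]
      linear_combination τ i ^ N * (τ i)⁻¹ * h2
    rw [rayTransform, Finset.mul_sum]
    simp only [h1]
    rw [Finset.sum_sub_distrib, Finset.sum_comm]
    simp only [← Finset.mul_sum, hm, mul_zero, Finset.sum_const_zero, sub_zero]
  have e2 : ‖ζ‖ ^ N * ‖ζ * rayTransform u τ ζ‖ = ‖ζ‖ * ‖ζ ^ N * rayTransform u τ ζ‖ := by
    simp only [norm_mul, norm_pow]; ring
  rw [e2, e]
  have hterm : ∀ i, ‖ζ‖ * ‖τ i ^ N * ((τ i)⁻¹ *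
      cauchyTransform (fun r => (r : ℂ) ^ N * u i r) (ζ * (τ i)⁻¹))‖ ≤
      (√(1 - c ^ 2))⁻¹ * (A i * ∫ r in Set.Ioi (0 : ℝ), r ^ N * Real.exp (-phase d r)) :=
    fun i => by
    have h1 := norm_cauchyTransform_le (u := fun r => (r : ℂ) ^ N * u i r) hc0 hc1 (h0 i)
      (by rw [hn]; exact hζ i) ((integrableOn_pow_mul_exp_neg_phase d N).const_mul (A i))
      (fun r hr => by
        rw [norm_mul, norm_pow, Complex.norm_real, Real.norm_of_nonneg hr.le, mul_left_comm]
        exact mul_le_mul_of_nonneg_left (hu i r hr) (by positivity))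
    rw [hn, integral_const_mul] at h1
    simpa [norm_mul, norm_pow, hτ i] using h1
  calc _ ≤ ‖ζ‖ * ∑ i, ‖τ i ^ N * ((τ i)⁻¹ *
        cauchyTransform (fun r => (r : ℂ) ^ N * u i r) (ζ * (τ i)⁻¹))‖ :=
        mul_le_mul_of_nonneg_left (norm_sum_le _ _) (norm_nonneg _)
    _ ≤ _ := by
        rw [Finset.mul_sum, mul_assoc, Finset.sum_mul, Finset.mul_sum]
        exact Finset.sum_le_sum fun i _ => hterm i

end RayTransform

section Uniqueness

open MeasureTheory

lemma cos_le_cos_of_mem_Icc {β ψ : ℝ} (hβ : 0 ≤ β) (h1 : β ≤ ψ) (h2 : ψ ≤ 2 * Real.pi - β) :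
    Real.cos ψ ≤ Real.cos β := by
  rcases le_total ψ Real.pi with h | h
  · exact Real.cos_le_cos_of_nonneg_of_le_pi hβ h h1
  · rw [← Real.cos_two_pi_sub ψ]
    exact Real.cos_le_cos_of_nonneg_of_le_pi hβ (by linarith) (by linarith)

/-- The angular distance between distinct Stokes rays is at least `2π/n`. -/
lemma cos_add_le_of_not_dvd {n : ℕ} (hn : 0 < n) {l : ℤ} (hl : ¬ (n : ℤ) ∣ l) {φ h : ℝ}
    (hφ : |φ| ≤ h) (hh : h ≤ 2 * Real.pi / n) :
    Real.cos (φ + 2 * Real.pi * l / n) ≤ Real.cos (2 * Real.pi / n - h) := by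
  have hπ := Real.pi_pos
  have hn0 : (0 : ℝ) < n := by exact_mod_cast hn
  have hnz : (0 : ℤ) < n := by exact_mod_cast hn
  have hne : l % n ≠ 0 := fun h => hl (Int.dvd_of_emod_eq_zero h)
  have h1 : 1 ≤ l % n := by have := Int.emod_nonneg l hnz.ne'; omega
  have h2 : l % n ≤ n - 1 := by have := Int.emod_lt_of_pos l hnz; omega
  have e : φ + 2 * Real.pi * l / n = (φ + 2 * Real.pi / n * (l % n : ℤ)) +
      (l / n : ℤ) * (2 * Real.pi) := by
    have : (l : ℝ) = (l % n : ℤ) + n * (l / n : ℤ) := by exact_mod_cast (Int.emod_add_mul_ediv l n).symm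
    rw [this]
    field_simp
    ring
  rw [e, Real.cos_add_int_mul_two_pi]
  have h1' : (1 : ℝ) ≤ (l % n : ℤ) := by exact_mod_cast h1
  have h2' : ((l % n : ℤ) : ℝ) ≤ n - 1 := by exact_mod_cast h2
  have hp : 0 < 2 * Real.pi / n := by positivity
  have hpn : 2 * Real.pi / n * n = 2 * Real.pi := by field_simp
  have := abs_le.1 hφ
  apply cos_le_cos_of_mem_Icc
  · linarith
  · nlinarith
  · nlinarith

variable {ι : Type*} [Fintype ι] {u : ι → ℝ → ℂ} {θ : ι → ℝ} {A : ι → ℝ} {d : ℕ}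

/-- The Cauchy transform of densities all of whose moments cancel vanishes in a sector free of
the supporting rays. -/
lemma rayTransform_eq_zero (hd : 2 ≤ d) (hc : ∀ i, Continuous (u i))
    (hu : ∀ i r, 0 < r → ‖u i r‖ ≤ A i * Real.exp (-phase d r))
    (hm : ∀ m : ℕ, ∑ i, cexp (θ i * I) ^ m * ∫ r in Set.Ioi (0 : ℝ), (r : ℂ) ^ m * u i r = 0)
    {θc : ℝ} (hfree : ∀ (i : ι) (h φ : ℝ), |φ| ≤ h → h ≤ 2 * Real.pi / (d + 2) →
      Real.cos (φ + (θc - θ i)) ≤ Real.cos (2 * Real.pi / (d + 2) - h))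
    {w : ℂ} (hw : |w.im| < 2 * Real.pi / (d + 2)) :
    rayTransform u (fun i => cexp (θ i * I)) (cexp (w + θc * I)) = 0 := by
  have hπ := Real.pi_pos
  obtain ⟨a, ha⟩ : ∃ a : ℝ, a = 2 * Real.pi / (d + 2) := ⟨_, rfl⟩
  rw [← ha] at hw hfree
  have hd' : (2 : ℝ) ≤ d := by exact_mod_cast hd
  have ha0 : 0 < a := by rw [ha]; positivity
  have haπ : a ≤ Real.pi / 2 := by
    rw [ha, div_le_div_iff₀ (by positivity) (by positivity)]
    nlinarith
  obtain ⟨h, hwh, hah, hha⟩ : ∃ h, |w.im| < h ∧ a / 2 < h ∧ h < a := by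
    obtain ⟨h, h1, h2⟩ := exists_between (max_lt hw (half_lt_self ha0))
    exact ⟨h, (le_max_left _ _).trans_lt h1, (le_max_right _ _).trans_lt h1, h2⟩
  have hh : 0 < h := by linarith
  have hcos0 : 0 ≤ Real.cos (a - h) := (Real.cos_pos_of_mem_Ioo ⟨by linarith, by linarith⟩).le
  have hcos1 : Real.cos (a - h) < 1 := by
    have := Real.cos_lt_cos_of_nonneg_of_le_pi le_rfl (by linarith) (sub_pos.2 hha)
    rwa [Real.cos_zero] at this
  have hτ : ∀ i, ‖cexp (θ i * I)‖ = 1 := fun i => Complex.norm_exp_ofReal_mul_I _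
  have hquot : ∀ (z : ℂ) i, cexp (z + θc * I) * (cexp (θ i * I))⁻¹ =
      cexp (z + ((θc - θ i : ℝ) : ℂ) * I) := fun z i => by
    rw [← Complex.exp_neg, ← Complex.exp_add]
    push_cast
    ring_nf
  have hnorm : ∀ z : ℂ, ‖cexp (z + θc * I)‖ = Real.exp z.re := fun z => by
    simp [Complex.norm_exp]
  have hre : ∀ z : ℂ, |z.im| ≤ h → ∀ i, (cexp (z + θc * I) * (cexp (θ i * I))⁻¹).re ≤
      Real.cos (a - h) * ‖cexp (z + θc * I)‖ := fun z hz i => by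
    rw [hquot, hnorm, Complex.exp_re, mul_comm]
    have := mul_le_mul_of_nonneg_right (hfree i h z.im hz hha.le) (Real.exp_pos z.re).le
    simpa using this
  have hslit : ∀ z : ℂ, |z.im| ≤ h → ∀ i, -(cexp (z + θc * I) * (cexp (θ i * I))⁻¹) ∈ slitPlane :=
    fun z hz i => neg_mem_slitPlane_of_re_le hcos1
      (mul_ne_zero (Complex.exp_ne_zero _) (inv_ne_zero (Complex.exp_ne_zero _)))
      (by rw [norm_mul, norm_inv, hτ, inv_one, mul_one]; exact hre z hz i)
  have hdiff : ∀ z : ℂ, |z.im| ≤ h → DifferentiableAt ℂ (fun w => cexp (w + θc * I) *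
      rayTransform u (fun i => cexp (θ i * I)) (cexp (w + θc * I))) z := fun z hz => by
    have h1 : DifferentiableAt ℂ (fun w => cexp (w + θc * I)) z := by fun_prop
    have h2 := differentiableAt_rayTransform hc hu (hslit z hz)
    exact h1.mul (DifferentiableAt.comp z (g := rayTransform u fun i => cexp (θ i * I)) h2 h1)
  have hcl : closure (im ⁻¹' Set.Ioo (-h) h) ⊆ {z : ℂ | |z.im| ≤ h} :=
    closure_minimal (fun z hz => (abs_lt.2 hz).le)
      (isClosed_le (by fun_prop) continuous_const)
  have hγ : Real.pi / (2 * h) < ((d : ℝ) + 2) / 2 := by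
    rw [div_lt_div_iff₀ (by positivity) two_pos]
    have : a * (d + 2) = 2 * Real.pi := by rw [ha]; field_simp
    nlinarith
  have key := eq_zero_of_decay_horizontal_strip (f := fun w => cexp (w + θc * I) *
      rayTransform u (fun i => cexp (θ i * I)) (cexp (w + θc * I))) hh
    (DifferentiableOn.diffContOnCl fun z hz => (hdiff z (hcl hz)).differentiableWithinAt)
    (fun M hM => by
      obtain ⟨B, hB⟩ := exists_exp_rpow_mul_le d (γ := Real.pi / (2 * h)) (by positivity) hγ hM
        ((√(1 - Real.cos (a - h) ^ 2))⁻¹ * ∑ i, A i)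
      refine ⟨B, fun z hz => ?_⟩
      have := hB ‖cexp (z + θc * I)‖ ‖cexp (z + θc * I) *
        rayTransform u (fun i => cexp (θ i * I)) (cexp (z + θc * I))‖ (norm_nonneg _)
        (norm_nonneg _) fun N => pow_mul_norm_rayTransform_le hc hτ hu hm hcos0 hcos1
          (Complex.exp_ne_zero _) (hre z hz) N
      rw [hnorm, ← Real.exp_mul, mul_comm z.re] at this
      exact this) hwh
  exact (mul_eq_zero.1 key).resolve_left (Complex.exp_ne_zero _)

/-- Densities on distinct rays all of whose combined moments vanish are zero on each ray that
is separated from the others. -/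
theorem density_eq_zero (hd : 2 ≤ d) (hc : ∀ i, Continuous (u i))
    (hu : ∀ i r, 0 < r → ‖u i r‖ ≤ A i * Real.exp (-phase d r))
    (hm : ∀ m : ℕ, ∑ i, cexp (θ i * I) ^ m * ∫ r in Set.Ioi (0 : ℝ), (r : ℂ) ^ m * u i r = 0)
    {i₀ : ι} (hne : ∀ i, i ≠ i₀ → cexp (θ i * I) ≠ cexp (θ i₀ * I))
    (hfree₁ : ∀ (i : ι) (h φ : ℝ), |φ| ≤ h → h ≤ 2 * Real.pi / (d + 2) →
      Real.cos (φ + (θ i₀ + 2 * Real.pi / (d + 2) - θ i)) ≤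
        Real.cos (2 * Real.pi / (d + 2) - h))
    (hfree₂ : ∀ (i : ι) (h φ : ℝ), |φ| ≤ h → h ≤ 2 * Real.pi / (d + 2) →
      Real.cos (φ + (θ i₀ - 2 * Real.pi / (d + 2) - θ i)) ≤
        Real.cos (2 * Real.pi / (d + 2) - h))
    {x : ℝ} (hx : 0 < x) : u i₀ x = 0 := by
  classical
  have hπ := Real.pi_pos
  obtain ⟨a, ha⟩ : ∃ a : ℝ, a = 2 * Real.pi / (d + 2) := ⟨_, rfl⟩
  have ha0 : 0 < a := by rw [ha]; positivity
  have hI : ∀ i, IntegrableOn (u i) (Set.Ioi 0) := fun i => by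
    simpa using integrableOn_pow_mul_of_decay (hc i) (hu i) 0
  have hinv : Tendsto (fun c : ℝ => c⁻¹) atTop (𝓝 0) := tendsto_inv_atTop_zero
  have hp : Tendsto (fun c : ℝ => (x : ℂ) + (c⁻¹ : ℝ) * I) atTop (𝓝 (x : ℂ)) := by
    have : Continuous fun t : ℝ => (x : ℂ) + (t : ℂ) * I := by fun_prop
    have h := (this.tendsto 0).comp hinv
    rwa [ofReal_zero, zero_mul, add_zero] at h
  have hq : Tendsto (fun c : ℝ => (x : ℂ) - (c⁻¹ : ℝ) * I) atTop (𝓝 (x : ℂ)) := by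
    have : Continuous fun t : ℝ => (x : ℂ) - (t : ℂ) * I := by fun_prop
    have h := (this.tendsto 0).comp hinv
    rwa [ofReal_zero, zero_mul, sub_zero] at h
  have hxs : (x : ℂ) ∈ slitPlane := by simp [hx]
  have harg : ∀ {g : ℝ → ℂ}, Tendsto g atTop (𝓝 (x : ℂ)) →
      ∀ᶠ c in atTop, |(g c).arg| < a := fun {g} hg => by
    have h1 := ((continuousAt_arg hxs).tendsto.comp hg)
    rw [Complex.arg_ofReal_of_nonneg hx.le] at h1
    have := h1.abs
    rw [abs_zero] at this
    exact this.eventually (gt_mem_nhds ha0)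
  have hzero₁ : ∀ᶠ c : ℝ in atTop, rayTransform u (fun i => cexp (θ i * I))
      (cexp (θ i₀ * I) * (x + (c⁻¹ : ℝ) * I)) = 0 := by
    filter_upwards [harg hp, eventually_gt_atTop 0] with c h1 h2
    have h0 : (x : ℂ) + (c⁻¹ : ℝ) * I ≠ 0 := fun h => by
      have := congrArg Complex.im h
      simp [h2.ne'] at this
    have harg0 : 0 < ((x : ℂ) + (c⁻¹ : ℝ) * I).arg := by
      refine lt_of_le_of_ne (Complex.arg_nonneg_iff.2 (by simp [h2.le])) fun h => ?_
      have := (Complex.arg_eq_zero_iff.1 h.symm).2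
      simp [h2.ne'] at this
    have := rayTransform_eq_zero hd hc hu hm hfree₁
      (w := Complex.log (x + (c⁻¹ : ℝ) * I) - a * I) (by
        rw [← ha]
        simp only [sub_im, log_im, mul_im, ofReal_re, I_im, mul_one, ofReal_im, I_re, mul_zero,
          add_zero]
        rw [abs_lt] at h1 ⊢
        constructor <;> linarith)
    rw [← ha] at this
    convert this using 2
    rw [show Complex.log (x + (c⁻¹ : ℝ) * I) - a * I + ((θ i₀ + a : ℝ) : ℂ) * I =
      θ i₀ * I + Complex.log (x + (c⁻¹ : ℝ) * I) by push_cast; ring, Complex.exp_add,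
      Complex.exp_log h0]
  have hzero₂ : ∀ᶠ c : ℝ in atTop, rayTransform u (fun i => cexp (θ i * I))
      (cexp (θ i₀ * I) * (x - (c⁻¹ : ℝ) * I)) = 0 := by
    filter_upwards [harg hq, eventually_gt_atTop 0] with c h1 h2
    have h0 : (x : ℂ) - (c⁻¹ : ℝ) * I ≠ 0 := fun h => by
      have := congrArg Complex.im h
      simp [h2.ne'] at this
    have harg0 : ((x : ℂ) - (c⁻¹ : ℝ) * I).arg < 0 := by
      refine Complex.arg_neg_iff.2 ?_
      simp [h2]
    have := rayTransform_eq_zero hd hc hu hm hfree₂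
      (w := Complex.log (x - (c⁻¹ : ℝ) * I) + a * I) (by
        rw [← ha]
        simp only [add_im, log_im, mul_im, ofReal_re, I_im, mul_one, ofReal_im, I_re, mul_zero,
          add_zero]
        rw [abs_lt] at h1 ⊢
        constructor <;> linarith)
    rw [← ha] at this
    convert this using 2
    rw [show Complex.log (x - (c⁻¹ : ℝ) * I) + a * I + ((θ i₀ - a : ℝ) : ℂ) * I =
      θ i₀ * I + Complex.log (x - (c⁻¹ : ℝ) * I) by push_cast; ring, Complex.exp_add,
      Complex.exp_log h0]
  -- the jump across the ray
  have hother : ∀ i, i ≠ i₀ → Tendsto (fun c : ℝ => (cexp (θ i * I))⁻¹ *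
      cauchyTransform (u i) (cexp (θ i₀ * I) * (x + (c⁻¹ : ℝ) * I) * (cexp (θ i * I))⁻¹) -
      (cexp (θ i * I))⁻¹ *
      cauchyTransform (u i) (cexp (θ i₀ * I) * (x - (c⁻¹ : ℝ) * I) * (cexp (θ i * I))⁻¹))
      atTop (𝓝 0) := fun i hi => by
    have hs : -(cexp (θ i₀ * I) * x * (cexp (θ i * I))⁻¹) ∈ slitPlane := by
      by_contra h
      rw [mem_slitPlane_iff, not_or] at h
      simp only [neg_re, neg_im, not_lt, not_not, neg_eq_zero, Left.neg_nonpos_iff] at h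
      have h1 : ‖cexp (θ i₀ * I) * x * (cexp (θ i * I))⁻¹‖ = x := by
        simp [Complex.norm_exp_ofReal_mul_I, hx.le]
      have h2 : (cexp (θ i₀ * I) * x * (cexp (θ i * I))⁻¹) = (x : ℂ) := by
        have h3 := Complex.abs_re_eq_norm.2 h.2
        rw [abs_of_nonneg h.1, h1] at h3
        exact Complex.ext (by simpa using h3) (by simpa using h.2)
      have hx0 : (x : ℂ) ≠ 0 := by exact_mod_cast hx.ne'
      rw [mul_inv_eq_iff_eq_mul₀ (Complex.exp_ne_zero _), mul_comm (x : ℂ)] at h2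
      exact hne i hi (mul_right_cancel₀ hx0 h2).symm
    have hcont := (differentiableAt_cauchyTransform (hI i) hs).continuousAt.tendsto
    have l1 := (hcont.comp ((hp.const_mul (cexp (θ i₀ * I))).mul_const
      (cexp (θ i * I))⁻¹)).const_mul (cexp (θ i * I))⁻¹
    have l2 := (hcont.comp ((hq.const_mul (cexp (θ i₀ * I))).mul_const
      (cexp (θ i * I))⁻¹)).const_mul (cexp (θ i * I))⁻¹
    simpa using l1.sub l2
  have hmain : Tendsto (fun c : ℝ => (cexp (θ i₀ * I))⁻¹ *
      cauchyTransform (u i₀) (cexp (θ i₀ * I) * (x + (c⁻¹ : ℝ) * I) * (cexp (θ i₀ * I))⁻¹) -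
      (cexp (θ i₀ * I))⁻¹ *
      cauchyTransform (u i₀) (cexp (θ i₀ * I) * (x - (c⁻¹ : ℝ) * I) * (cexp (θ i₀ * I))⁻¹))
      atTop (𝓝 ((cexp (θ i₀ * I))⁻¹ * (2 * Real.pi * I * u i₀ x))) := by
    have := (tendsto_cauchyTransform_jump (hI i₀) hx (hc i₀).continuousAt).const_mul
      (cexp (θ i₀ * I))⁻¹
    refine this.congr fun c => ?_
    rw [mul_sub, mul_right_comm, mul_inv_cancel₀ (Complex.exp_ne_zero _), one_mul,
      mul_right_comm, mul_inv_cancel₀ (Complex.exp_ne_zero _), one_mul]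
  have hsum := tendsto_finsetSum (Finset.univ.erase i₀) fun i hi =>
    hother i (Finset.ne_of_mem_erase hi)
  have htot := hmain.add hsum
  rw [Finset.sum_const_zero, add_zero] at htot
  have hz : Tendsto (fun _ : ℝ => (0 : ℂ)) atTop
      (𝓝 ((cexp (θ i₀ * I))⁻¹ * (2 * Real.pi * I * u i₀ x))) := by
    refine htot.congr' ?_
    filter_upwards [hzero₁, hzero₂] with c h1 h2
    rw [Finset.add_sum_erase Finset.univ (fun i => (cexp (θ i * I))⁻¹ *
      cauchyTransform (u i) (cexp (θ i₀ * I) * (x + (c⁻¹ : ℝ) * I) * (cexp (θ i * I))⁻¹) -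
      (cexp (θ i * I))⁻¹ *
      cauchyTransform (u i) (cexp (θ i₀ * I) * (x - (c⁻¹ : ℝ) * I) * (cexp (θ i * I))⁻¹))
      (Finset.mem_univ i₀), Finset.sum_sub_distrib]
    unfold rayTransform at h1 h2
    rw [h1, h2, sub_zero]
  have := tendsto_nhds_unique hz tendsto_const_nhds
  simpa [Complex.exp_ne_zero, hπ.ne'] using this

end Uniqueness

section Independence

open MeasureTheory

variable {d k : ℕ} {p : (Fin (d - 1) → ℂ) × ℂ} {y : ℂ → ℂ} {τ : ℂ} {A : ℝ}

/-- The argument of the central ray of the Stokes sector `S_j`. -/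
noncomputable def centralArg (d j : ℕ) : ℝ := 2 * Real.pi * j / (d + 2 : ℕ)

lemma exp_centralArg_pow (d j : ℕ) : cexp (centralArg d j * I) ^ (d + 2) = 1 := by
  rw [← Complex.exp_nat_mul, Complex.exp_eq_one_iff]
  refine ⟨j, ?_⟩
  have : ((d + 2 : ℕ) : ℂ) ≠ 0 := by exact_mod_cast (show d + 2 ≠ 0 by omega)
  simp only [centralArg]
  push_cast at this ⊢
  field_simp

lemma exp_centralArg_injOn {i j : ℕ} (hi : i < d + 2) (hj : j < d + 2)
    (h : cexp (centralArg d i * I) = cexp (centralArg d j * I)) : i = j := by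
  have e : ∀ j : ℕ, cexp (centralArg d j * I) = cexp (2 * Real.pi * I / (d + 2 : ℕ)) ^ j :=
    fun j => by
      rw [← Complex.exp_nat_mul]
      congr 1
      simp only [centralArg]
      push_cast
      ring
  rw [e, e] at h
  exact (Complex.isPrimitiveRoot_exp (d + 2) (by omega)).pow_inj hi hj h

lemma IsSol.eq_zero_of_ray_eq_zero (hd : 2 ≤ d) (hy : IsSol d p.1 p.2 y) (hτ : τ ≠ 0)
    (h : ∀ x : ℝ, 0 < x → y (x * τ) = 0) : y = 0 := by
  have h' : ∀ x : ℝ, 0 < x → deriv y (x * τ) = 0 := fun x hx => by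
    have h1 := hasDerivAt_ray τ hy.1 x
    have h2 : HasDerivAt (fun r : ℝ => y (r * τ)) 0 x :=
      (hasDerivAt_const x (0 : ℂ)).congr_of_eventuallyEq (by
        filter_upwards [lt_mem_nhds hx] with r hr using h r hr)
    exact (mul_eq_zero.1 (h1.unique h2)).resolve_left hτ
  have key : ∀ f : ℂ → ℂ, Continuous f → (∀ x : ℝ, 0 < x → f (x * τ) = 0) → f 0 = 0 := by
    intro f hf hx
    have h1 : Tendsto (fun x : ℝ => f (x * τ)) (𝓝[>] 0) (𝓝 (f 0)) := by
      have : Continuous fun x : ℝ => f (x * τ) := by fun_prop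
      simpa using (this.tendsto 0).mono_left nhdsWithin_le_nhds
    refine tendsto_nhds_unique h1 (tendsto_const_nhds.congr' ?_)
    filter_upwards [self_mem_nhdsWithin] with x hx0 using (hx x hx0).symm
  exact hy.eq_zero hd (key y hy.1.continuous h)
    (key _ (differentiable_deriv_of_entire hy.1).continuous h')

/-- The functionals attached to pairwise non-adjacent sectors satisfy no nontrivial linear
relation with coefficients of zero sum. -/
theorem pairing_independent (hd : 2 ≤ d) {js : Fin k → ℕ} (hjs : ∀ i, js i < d + 2)
    (hinj : Function.Injective js)
    (hnonadj : ∀ a b : Fin k, a ≠ b →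
      (js a + 1) % (d + 2) ≠ js b ∧ (js b + 1) % (d + 2) ≠ js a)
    (hy : IsSol d p.1 p.2 y) (hy0 : y ≠ 0) {A : Fin k → ℝ}
    (hdec : ∀ i, DecaysOn d (cexp (centralArg d (js i) * I)) (A i) y) {c : Fin k → ℂ}
    (hc : ∑ i, c i = 0)
    (hL : ∀ q, ∑ i, c i * pairing d (cexp (centralArg d (js i) * I)) y y q = 0) : c = 0 := by
  set τ : Fin k → ℂ := fun i => cexp (centralArg d (js i) * I) with hτ
  have hτ1 : ∀ i, ‖τ i‖ = 1 := fun i => norm_eq_one_of_pow (exp_centralArg_pow d (js i))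
  have hτ0 : ∀ i, τ i ≠ 0 := fun i => Complex.exp_ne_zero _
  have hcy := hy.1.continuous
  have hmom : ∀ m < d, ∑ i, c i * (τ i * moment (τ i) y y m) = 0 := by
    intro m hm
    rcases m with _ | m
    · have := hL (0, 1)
      simp only [pairing_apply] at this
      rw [← this]
      refine Finset.sum_congr rfl fun i _ => ?_
      simp [hτ]
    · have := hL (Pi.single ⟨m, by omega⟩ 1, 0)
      simp only [pairing_apply, Pi.single_apply, mul_ite, mul_one, mul_zero, Finset.sum_ite_eq',
        Finset.mem_univ, if_true, sub_zero] at this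
      rw [← neg_eq_zero, ← this, ← Finset.sum_neg_distrib]
      refine Finset.sum_congr rfl fun i _ => ?_
      simp only [hτ]
      ring
  have hall := sum_moment_eq_zero hd hτ1 hy hdec hc hmom
  have hn0 : (d + 2 : ℕ) ≠ 0 := by omega
  have hnR : ((d + 2 : ℕ) : ℝ) ≠ 0 := by exact_mod_cast hn0
  have hnd : ((d + 2 : ℕ) : ℝ) = d + 2 := by push_cast; ring
  have hdvd : ∀ i i₀ : Fin k, ¬ ((d + 2 : ℕ) : ℤ) ∣ ((js i₀ : ℤ) + 1 - js i) := by
    rintro i i₀ hdv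
    have h1 := hjs i
    have h2 := hjs i₀
    by_cases hii : i = i₀
    · subst hii
      have h3 := Int.le_of_dvd (by omega) hdv
      omega
    · refine (hnonadj i₀ i (Ne.symm hii)).1 ?_
      have h3 : (js i) ≡ (js i₀ + 1) [MOD d + 2] := by
        rw [Nat.modEq_iff_dvd]
        exact_mod_cast hdv
      rw [← h3, Nat.mod_eq_of_lt h1]
  have hdvd' : ∀ i i₀ : Fin k, ¬ ((d + 2 : ℕ) : ℤ) ∣ ((js i₀ : ℤ) - 1 - js i) := by
    rintro i i₀ hdv
    obtain ⟨t, ht⟩ := hdv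
    exact hdvd i₀ i ⟨-t, by linear_combination -ht⟩
  funext i₀
  by_contra hci
  change c i₀ ≠ 0 at hci
  refine hy0 (hy.eq_zero_of_ray_eq_zero hd (hτ0 i₀) fun x hx => ?_)
  have := density_eq_zero hd (u := fun i r => c i * τ i * (y (r * τ i) * y (r * τ i)))
    (A := fun i => ‖c i‖ * (A i * A i)) (θ := fun i => centralArg d (js i)) (i₀ := i₀)
    (fun i => by fun_prop)
    (fun i r hr => by
      rw [norm_mul, norm_mul, hτ1, mul_one, mul_assoc]
      exact mul_le_mul_of_nonneg_left ((hdec i).norm_mul_le (hdec i) hr.le) (norm_nonneg _))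
    (fun m => by
      rw [← hall m]
      refine Finset.sum_congr rfl fun i _ => ?_
      rw [moment, ← integral_const_mul, ← integral_const_mul, ← integral_const_mul]
      refine integral_congr_ae (Eventually.of_forall fun r => ?_)
      simp only [hτ, mul_pow]
      ring)
    (fun i hi h => hi (hinj (exp_centralArg_injOn (hjs i) (hjs i₀) h)))
    (fun i h φ hφ hh => by
      have := cos_add_le_of_not_dvd (by omega) (hdvd i i₀) hφ (by rw [hnd]; exact hh)
      rw [hnd] at this
      convert this using 3
      simp only [centralArg, hnd]
      push_cast
      ring)
    (fun i h φ hφ hh => by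
      have := cos_add_le_of_not_dvd (by omega) (hdvd' i i₀) hφ (by rw [hnd]; exact hh)
      rw [hnd] at this
      convert this using 3
      simp only [centralArg, hnd]
      push_cast
      ring) hx
  simpa [hci, hτ0 i₀] using this

/-- Surjectivity is preserved under small perturbations. -/
lemma eventually_surjective {X E F : Type*} [TopologicalSpace X] [NormedAddCommGroup E]
    [NormedSpace ℂ E] [NormedAddCommGroup F] [NormedSpace ℂ F] [FiniteDimensional ℂ F]
    {L : X → E →L[ℂ] F} {x : X} (hL : ContinuousAt L x) (hx : Function.Surjective (L x)) :
    ∀ᶠ x' in 𝓝 x, Function.Surjective (L x') := by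
  have : CompleteSpace F := FiniteDimensional.complete ℂ F
  obtain ⟨R, hR⟩ := (L x).exists_rightInverse_of_surjective (LinearMap.range_eq_top.2 hx)
  have h1 : ContinuousAt (fun x' => (L x').comp R) x := hL.clm_comp continuousAt_const
  have h2 : {f : F →L[ℂ] F | IsUnit f} ∈ 𝓝 ((L x).comp R) :=
    Units.isOpen.mem_nhds (by rw [hR]; exact isUnit_one)
  filter_upwards [h1 h2] with x' hx'
  obtain ⟨e, he⟩ := hx'
  intro b
  refine ⟨R ((e⁻¹ : (F →L[ℂ] F)ˣ).1 b), ?_⟩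
  change ((L x').comp R) _ = b
  have he' : (e : F →L[ℂ] F) = (L x').comp R := he
  rw [← he']
  exact congrArg (fun f : F →L[ℂ] F => f b) e.mul_inv

end Independence

section Level

variable {d : ℕ} {p : (Fin (d - 1) → ℂ) × ℂ} {y : ℂ → ℂ}

lemma Subdominant.tendsto {j : ℕ} (h : Subdominant (d + 2) j y) :
    Tendsto (fun r : ℝ => y (r * cexp (centralArg d j * I))) atTop (𝓝 0) := by
  refine h _ ?_
  rw [DirIn, centralArg, sub_self, abs_zero]
  have : (0 : ℝ) < (d + 2 : ℕ) := by exact_mod_cast (show 0 < d + 2 by omega)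
  have := Real.pi_pos
  positivity

lemma exists_det_eq_one {v : ℂ × ℂ} (hv : v ≠ 0) : ∃ w : ℂ × ℂ, v.1 * w.2 - v.2 * w.1 = 1 := by
  by_cases h : v.1 = 0
  · have h2 : v.2 ≠ 0 := fun h2 => hv (Prod.ext h h2)
    exact ⟨(-1 / v.2, 0), by field_simp; ring⟩
  · exact ⟨(0, 1 / v.1), by field_simp; ring⟩

/-- Near a parameter that has a solution subdominant in `m + 1` non-adjacent sectors, the set of
all such parameters is a regular level set. -/
theorem exists_regular_level_set (hd : 2 ≤ d) {m : ℕ} {js : Fin (m + 1) → ℕ}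
    (hjs : ∀ i, js i < d + 2) (hinj : Function.Injective js)
    (hnonadj : ∀ a b, a ≠ b → (js a + 1) % (d + 2) ≠ js b ∧ (js b + 1) % (d + 2) ≠ js a)
    (hy0 : y ≠ 0) (hy : IsSol d p.1 p.2 y) (hsub : ∀ i, Subdominant (d + 2) (js i) y) :
    ∃ (U : Set ((Fin (d - 1) → ℂ) × ℂ)) (F : (Fin (d - 1) → ℂ) × ℂ → (Fin m → ℂ)),
      IsOpen U ∧ p ∈ U ∧ DifferentiableOn ℂ F U ∧
      (∀ x ∈ U, Function.Surjective (fderiv ℂ F x)) ∧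
      ∀ x ∈ U, (∃ y : ℂ → ℂ, y ≠ 0 ∧ IsSol d x.1 x.2 y ∧
        ∀ i, Subdominant (d + 2) (js i) y) ↔ F x = 0 := by
  obtain ⟨v, hv⟩ : ∃ v : ℂ × ℂ, v = (y 0, deriv y 0) := ⟨_, rfl⟩
  have hyv : y = sol d p v := hv ▸ hy.eq_sol hd
  have hv0 : v ≠ 0 := by
    rintro rfl
    obtain ⟨h1, h2⟩ := Prod.mk_eq_zero.1 hv.symm
    exact hy0 (hy.eq_zero hd h1 h2)
  obtain ⟨w, hvw⟩ := exists_det_eq_one hv0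
  set τ : Fin (m + 1) → ℂ := fun i => cexp (centralArg d (js i) * I)
  have hτ : ∀ i, τ i ^ (d + 2) = 1 := fun i => exp_centralArg_pow d (js i)
  choose A hA using fun i => hy.decay_of_tendsto hd (hτ i) (hsub i).tendsto
  choose δ A' s hδ hs0 hdec hder hcont using fun i =>
    exists_local_family hd (hτ i) hvw (A := A i) (hyv ▸ hA i)
  set L : Fin (m + 1) → (Fin (d - 1) → ℂ) × ℂ → ((Fin (d - 1) → ℂ) × ℂ →L[ℂ] ℂ) := fun i x =>
    pairing d (τ i) (sol d x (v + s i x • w)) (sol d x (v + s i x • w))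
  set F : (Fin (d - 1) → ℂ) × ℂ → (Fin m → ℂ) := fun x j => s j.succ x - s 0 x
  set dF : (Fin (d - 1) → ℂ) × ℂ → ((Fin (d - 1) → ℂ) × ℂ →L[ℂ] (Fin m → ℂ)) := fun x =>
    ContinuousLinearMap.pi fun j => L j.succ x - L 0 x
  have hL0 : ∀ i, L i p = pairing d (τ i) y y := fun i => by
    simp only [L, hs0, zero_smul, add_zero, ← hyv]
  have hsurj : Function.Surjective (dF p) := by
    rw [← ContinuousLinearMap.coe_coe, ← LinearMap.range_eq_top]
    by_contra hne
    obtain ⟨f, hf0, hf⟩ := Submodule.exists_le_ker_of_lt_top _ (lt_top_iff_ne_top.2 hne)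
    set c : Fin m → ℂ := fun j => f (Pi.single j 1)
    have hfc : ∀ g : Fin m → ℂ, f g = ∑ j, c j * g j := fun g => by
      conv_lhs => rw [pi_eq_sum_univ' g]
      simp [c, map_sum, mul_comm]
    have hc' : (Fin.cons (-∑ j, c j) c : Fin (m + 1) → ℂ) = 0 := by
      refine pairing_independent hd hjs hinj hnonadj hy hy0 (A := A) hA ?_ fun q => ?_
      · rw [Fin.sum_univ_succ]
        simp
      · have h1 : f (dF p q) = 0 := hf ⟨q, rfl⟩
        rw [hfc] at h1
        rw [← h1, Fin.sum_univ_succ]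
        simp only [dF, ContinuousLinearMap.coe_pi', sub_apply, hL0, mul_sub,
          Finset.sum_sub_distrib, Fin.cons_zero, Fin.cons_succ, ← Finset.sum_mul]
        ring
    refine hf0 (LinearMap.ext fun g => ?_)
    rw [hfc]
    refine Finset.sum_eq_zero fun j _ => ?_
    have := congrFun hc' j.succ
    simp only [Fin.cons_succ, Pi.zero_apply] at this
    rw [this, zero_mul]
  have hdFc : ContinuousAt dF p := by
    have h1 : ContinuousAt (fun x => fun j : Fin m => L j.succ x - L 0 x) p :=
      continuousAt_pi.2 fun j => (hcont j.succ).sub (hcont 0)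
    exact (ContinuousLinearMap.piEquivL ℂ ((Fin (d - 1) → ℂ) × ℂ)
      (fun _ : Fin m => ℂ)).continuous.continuousAt.comp h1
  have hball : ∀ᶠ x in 𝓝 p, ∀ i, x ∈ Metric.ball p (δ i) :=
    eventually_all.2 fun i => Metric.ball_mem_nhds p (hδ i)
  obtain ⟨U, hU, hUo, hpU⟩ := mem_nhds_iff.1 (hball.and (eventually_surjective hdFc hsurj))
  have hF : ∀ x ∈ U, HasFDerivAt F (dF x) x := fun x hx =>
    hasFDerivAt_pi.2 fun j => (hder j.succ x ((hU hx).1 _)).sub (hder 0 x ((hU hx).1 _))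
  refine ⟨U, F, hUo, hpU, fun x hx => (hF x hx).differentiableAt.differentiableWithinAt,
    fun x hx => by rw [(hF x hx).fderiv]; exact (hU hx).2, fun x hx => ⟨?_, fun h => ?_⟩⟩
  · rintro ⟨u, hu0, hu, hus⟩
    have hdet : ∀ i, u 0 * (v.2 + s i x * w.2) - deriv u 0 * (v.1 + s i x * w.1) = 0 := fun i => by
      have := hu.det_eq_zero_of_tendsto hd (hτ i) (isSol_sol d x (v + s i x • w)) (hus i).tendsto
        (tendsto_zero_of_decay (hdec i x ((hU hx).1 i)))
      simpa [sol_zero, deriv_sol_zero] using this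
    funext j
    have h1 : (s j.succ x - s 0 x) * (u 0 * w.2 - deriv u 0 * w.1) = 0 := by
      linear_combination hdet j.succ - hdet 0
    refine (mul_eq_zero.1 h1).resolve_right fun h2 => hu0 ?_
    have h3 : u 0 * v.2 - deriv u 0 * v.1 = 0 := by
      linear_combination hdet 0 - s 0 x * h2
    refine hu.eq_zero hd ?_ ?_
    · linear_combination v.1 * h2 - w.1 * h3 - u 0 * hvw
    · linear_combination v.2 * h2 - w.2 * h3 - deriv u 0 * hvw
  · have hs : ∀ i, s i x = s 0 x := fun i => by
      refine Fin.cases rfl (fun j => ?_) i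
      exact sub_eq_zero.1 (congrFun h j)
    refine ⟨sol d x (v + s 0 x • w), fun h0 => ?_, isSol_sol _ _ _, fun i => ?_⟩
    · have e0 := sol_zero d x (v + s 0 x • w)
      have e1 := deriv_sol_zero d x (v + s 0 x • w)
      rw [h0] at e0 e1
      have h00 : deriv (0 : ℂ → ℂ) 0 = 0 := by simp
      rw [h00] at e1
      simp only [Pi.zero_apply, Prod.fst_add, Prod.smul_fst, Prod.snd_add, Prod.smul_snd,
        smul_eq_mul] at e0 e1
      exact one_ne_zero (α := ℂ) (by linear_combination -hvw - w.2 * e0 + w.1 * e1)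
    · have := hdec i x ((hU hx).1 i)
      rw [hs i] at this
      exact (isSol_sol d x _).subdominant_of_decay hd (js i) this

end Level

theorem stmt7 (d : ℕ) (hd : 2 ≤ d) (n : ℕ) (hn : n = d + 2)
    (k : ℕ) (hk : 2 * k ≤ n) (js : Fin k → ℕ) (hjs : ∀ i, js i < n)
    (hinj : Function.Injective js)
    (hnonadj : ∀ a b : Fin k, a ≠ b → (js a + 1) % n ≠ js b ∧ (js b + 1) % n ≠ js a)
    (Sig : Set ((Fin (d - 1) → ℂ) × ℂ))
    (hSig : Sig = {p : (Fin (d - 1) → ℂ) × ℂ |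
      ∃ y : ℂ → ℂ, y ≠ 0 ∧ IsSol d p.1 p.2 y ∧
        ∀ i : Fin k, Subdominant n (js i) y}) :
    ∀ p ∈ Sig, ∃ (U : Set ((Fin (d - 1) → ℂ) × ℂ))
      (F : ((Fin (d - 1) → ℂ) × ℂ) → (Fin (k - 1) → ℂ)),
      IsOpen U ∧ p ∈ U ∧ DifferentiableOn ℂ F U ∧
      (∀ x ∈ U, Function.Surjective ⇑(fderiv ℂ F x)) ∧
      Sig ∩ U = {x ∈ U | F x = 0} := by
  subst hn hSig
  rintro p ⟨y, hy0, hy, hsub⟩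
  rcases k with _ | m
  · refine ⟨Set.univ, 0, isOpen_univ, Set.mem_univ _, differentiableOn_const 0,
      fun x _ z => ⟨0, funext fun i => i.elim0⟩, ?_⟩
    ext x
    refine ⟨fun _ => ⟨Set.mem_univ _, rfl⟩, fun _ => ⟨?_, Set.mem_univ _⟩⟩
    refine ⟨sol d x (1, 0), fun h => ?_, isSol_sol _ _ _, fun i => i.elim0⟩
    have := sol_zero d x (1, 0)
    rw [h] at this
    simp at this
  · obtain ⟨U, F, hUo, hpU, hF, hs, h⟩ :=
      exists_regular_level_set hd hjs hinj hnonadj hy0 hy hsub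
    refine ⟨U, F, hUo, hpU, hF, hs, ?_⟩
    ext x
    exact ⟨fun hx => ⟨hx.2, (h x hx.2).1 hx.1⟩, fun hx => ⟨(h x hx.1).2 hx.2, hx.1⟩⟩
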